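/- arXiv:1711.00998 — 5 statements merged into one kernel-verified Lean document; each statement's English description precedes it below -/
import Mathlib

section
/- Fix a k-dimensional subspace E of ℝ^n (1 ≤ k ≤ n), a unit vector θ ∈ E ∩ S^{n-1}, and γ ∈ (0,∞). Let f : ℝ^n → [0,∞) be a γ-concave function with 0 < ∫_{ℝ^n} f(x) dx < ∞ and centroid at the origin. Then ∫_{E ∩ θ^+} f(x) dx ≥ ((kγ+1)/((n+1)γ+1))^{(kγ+1)/γ} · ∫_E f(x) dx, where the integrals over E and E ∩ θ^+ are with respect to k-dimensional Lebesgue measure on E. -/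
open MeasureTheory Set
open scoped RealInnerProductSpace
open scoped ENNReal

/-- Extended-valued `γ`-concavity. -/
def GC {X : Type*} [AddCommGroup X] [Module ℝ X] (γ : ℝ) (f : X → ℝ≥0∞) : Prop :=
  ∀ x y, f x ≠ 0 → f y ≠ 0 → ∀ a b : ℝ, 0 < a → 0 < b → a + b = 1 →
    ENNReal.ofReal a * f x ^ γ + ENNReal.ofReal b * f y ^ γ ≤ f (a • x + b • y) ^ γ

theorem GC.convex_lt {X : Type*} [AddCommGroup X] [Module ℝ X] {γ : ℝ} (hγ : 0 < γ)
    {f : X → ℝ≥0∞} (hf : GC γ f) (c : ℝ≥0∞) : Convex ℝ {x | c < f x} := by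
  rw [convex_iff_forall_pos]
  intro x hx y hy a b ha hb hab
  simp only [mem_ofPred_eq] at *
  have h := hf x y (ne_bot_of_gt hx) (ne_bot_of_gt hy) a b ha hb hab
  have h1 : c ^ γ < f x ^ γ := ENNReal.rpow_lt_rpow hx hγ
  have h2 : c ^ γ < f y ^ γ := ENNReal.rpow_lt_rpow hy hγ
  have h3 : c ^ γ < f (a • x + b • y) ^ γ := by
    refine lt_of_lt_of_le ?_ h
    have : c ^ γ = ENNReal.ofReal a * c ^ γ + ENNReal.ofReal b * c ^ γ := by
      rw [← add_mul, ← ENNReal.ofReal_add ha.le hb.le, hab]; simp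
    rw [this]
    refine ENNReal.add_lt_add ?_ ?_
    · exact ENNReal.mul_lt_mul_right (by simpa using ha) (by simp) h1
    · exact ENNReal.mul_lt_mul_right (by simpa using hb) (by simp) h2
  exact (ENNReal.rpow_lt_rpow_iff hγ).1 h3

theorem GC.aemeasurable {X : Type*} [NormedAddCommGroup X] [NormedSpace ℝ X]
    [FiniteDimensional ℝ X] [MeasurableSpace X] [BorelSpace X] (μ : Measure X)
    [μ.IsAddHaarMeasure] {γ : ℝ} (hγ : 0 < γ) {f : X → ℝ≥0∞} (hf : GC γ f) :
    AEMeasurable f μ := by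
  have : NullMeasurable f μ := by
    have h : @Measurable (NullMeasurableSpace X μ) _ _ _ f := by
      apply measurable_of_Ioi
      intro c
      exact Convex.nullMeasurableSet μ (hf.convex_lt hγ c)
    intro s hs
    exact h hs
  exact NullMeasurable.aemeasurable this

theorem GC.comp {X Y : Type*} [AddCommGroup X] [Module ℝ X] [AddCommGroup Y] [Module ℝ Y]
    {γ : ℝ} {f : X → ℝ≥0∞} (hf : GC γ f) (L : Y →ₗ[ℝ] X) (x : X): GC γ (fun y => f (x + L y)) := by
  intro y z hy hz a b ha hb hab
  have := hf _ _ hy hz a b ha hb hab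
  convert this using 3
  have : x = a • x + b • x := by rw [← add_smul, hab, one_smul]
  simp only [map_add, map_smul, smul_add]
  nth_rw 1 [this]
  abel

theorem GC.indicator {X : Type*} [AddCommGroup X] [Module ℝ X] {γ : ℝ} {f : X → ℝ≥0∞}
    (hf : GC γ f) {C : Set X} (hC : Convex ℝ C) : GC γ (C.indicator f) := by
  intro x y hx hy a b ha hb hab
  have hx' : x ∈ C := by by_contra h; simp [h] at hx
  have hy' : y ∈ C := by by_contra h; simp [h] at hy
  have := hC hx' hy' ha.le hb.le hab
  simp only [indicator_of_mem, *] at *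
  exact hf x y hx hy a b ha hb hab

theorem bm_one {A B C : Set ℝ} (hA : A.Nonempty) (hB : B.Nonempty) (hC : C.OrdConnected)
    {a b : ℝ} (ha : 0 < a) (hb : 0 < b)
    (h : ∀ x ∈ A, ∀ y ∈ B, a * x + b * y ∈ C) :
    ENNReal.ofReal a * volume A + ENNReal.ofReal b * volume B ≤ volume C := by
  have key : ∀ x ∈ A, ∀ y ∈ A, ∀ z ∈ B, ∀ w ∈ B,
      ENNReal.ofReal a * edist x y + ENNReal.ofReal b * edist z w ≤ volume C := by
    have key0 : ∀ x ∈ A, ∀ y ∈ A, ∀ z ∈ B, ∀ w ∈ B, x ≤ y → z ≤ w →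
      ENNReal.ofReal a * edist x y + ENNReal.ofReal b * edist z w ≤ volume C := by
      intro x hx y hy z hz w hw hxy hzw
      have := measure_mono (μ := volume) (hC.out (h x hx z hz) (h y hy w hw))
      rw [Real.volume_Icc] at this
      refine le_trans (le_of_eq ?_) this
      rw [edist_dist, edist_dist, ← ENNReal.ofReal_mul ha.le, ← ENNReal.ofReal_mul hb.le,
        ← ENNReal.ofReal_add (by positivity) (by positivity), Real.dist_eq, Real.dist_eq,
        abs_sub_comm, abs_of_nonneg (by linarith), abs_sub_comm, abs_of_nonneg (by linarith)]
      congr 1; ring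
    intro x hx y hy z hz w hw
    rcases le_total x y with h1 | h1 <;> rcases le_total z w with h2 | h2
    · exact key0 x hx y hy z hz w hw h1 h2
    · rw [edist_comm z]; exact key0 x hx y hy w hw z hz h1 h2
    · rw [edist_comm x]; exact key0 y hy x hx z hz w hw h1 h2
    · rw [edist_comm z, edist_comm x]; exact key0 y hy x hx w hw z hz h1 h2
  have ha0 : ENNReal.ofReal a ≠ 0 := by simpa using ha
  have hb0 : ENNReal.ofReal b ≠ 0 := by simpa using hb
  obtain ⟨x0, hx0⟩ := hA
  obtain ⟨z0, hz0⟩ := hB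
  by_cases hCt : volume C = ∞
  · simp [hCt]
  have k1 : ∀ z ∈ B, ∀ w ∈ B,
      ENNReal.ofReal a * Metric.ediam A + ENNReal.ofReal b * edist z w ≤ volume C := by
    intro z hz w hw
    have hfin : ENNReal.ofReal b * edist z w ≠ ∞ := ENNReal.mul_ne_top (by simp) (edist_ne_top _ _)
    have : Metric.ediam A ≤ (volume C - ENNReal.ofReal b * edist z w) / ENNReal.ofReal a := by
      refine Metric.ediam_le fun x hx y hy => ?_
      rw [ENNReal.le_div_iff_mul_le (Or.inl ha0) (Or.inl (by simp)), mul_comm]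
      exact ENNReal.le_sub_of_add_le_right hfin (key x hx y hy z hz w hw)
    rw [ENNReal.le_div_iff_mul_le (Or.inl ha0) (Or.inl (by simp)), mul_comm] at this
    have h0 : ENNReal.ofReal b * edist z w ≤ volume C := by
      simpa using key x0 hx0 x0 hx0 z hz w hw
    calc _ ≤ volume C - ENNReal.ofReal b * edist z w + ENNReal.ofReal b * edist z w := by gcongr
      _ = _ := tsub_add_cancel_of_le h0
  have h0 : ENNReal.ofReal a * Metric.ediam A ≤ volume C := by
    simpa using k1 z0 hz0 z0 hz0
  have hfin : ENNReal.ofReal a * Metric.ediam A ≠ ∞ := ne_top_of_le_ne_top hCt h0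
  have : Metric.ediam B ≤ (volume C - ENNReal.ofReal a * Metric.ediam A) / ENNReal.ofReal b := by
    refine Metric.ediam_le fun x hx y hy => ?_
    rw [ENNReal.le_div_iff_mul_le (Or.inl hb0) (Or.inl (by simp)), mul_comm]
    exact ENNReal.le_sub_of_add_le_left hfin (k1 x hx y hy)
  rw [ENNReal.le_div_iff_mul_le (Or.inl hb0) (Or.inl (by simp)), mul_comm] at this
  calc _ ≤ ENNReal.ofReal a * Metric.ediam A + ENNReal.ofReal b * Metric.ediam B := by
        gcongr <;> exact Real.volume_le_diam _
    _ ≤ ENNReal.ofReal a * Metric.ediam A + (volume C - ENNReal.ofReal a * Metric.ediam A) := by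
        gcongr
    _ = _ := add_tsub_cancel_of_le h0

theorem layer {φ : ℝ → ℝ≥0∞} (hφ : Measurable φ) {M : ℝ≥0∞} (h0 : M ≠ 0) (ht : M ≠ ∞) :
    ∫⁻ x, min (φ x) M = M * ∫⁻ τ in Ioo (0:ℝ) 1, volume {x | ENNReal.ofReal τ * M < φ x} := by
  have e1 : ∀ x, min (φ x) M = M * ENNReal.ofReal ((min (φ x / M) 1).toReal) := by
    intro x
    rw [ENNReal.ofReal_toReal (by simp)]
    rcases le_total (φ x) M with h | h
    · rw [min_eq_left h, min_eq_left, ENNReal.mul_div_cancel h0 ht]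
      exact ENNReal.div_le_of_le_mul (by simpa using h)
    · rw [min_eq_right h, min_eq_right, mul_one]
      rw [ENNReal.le_div_iff_mul_le (Or.inl h0) (Or.inl ht)]; simpa using h
  simp_rw [e1]
  rw [lintegral_const_mul' _ _ ht]
  congr 1
  rw [lintegral_eq_lintegral_meas_lt volume (Filter.Eventually.of_forall fun x => by positivity)
    (by fun_prop)]
  have : Ioi (0:ℝ) = Ioo 0 1 ∪ Ici 1 := by ext x; simp only [mem_Ioi, mem_union, mem_Ioo, mem_Ici]; constructor
                                           · intro h; rcases lt_or_ge x 1 with h1 | h1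
                                             · exact Or.inl ⟨h, h1⟩
                                             · exact Or.inr h1
                                           · rintro (h | h) <;> linarith
  rw [this, lintegral_union measurableSet_Ici (by
    rw [Set.disjoint_left]; intro x hx hx'; simp at hx hx'; linarith)]
  have z : ∫⁻ t in Ici (1:ℝ), volume {x | t < (min (φ x / M) 1).toReal} = 0 := by
    rw [setLIntegral_congr_fun (g := fun _ => 0) measurableSet_Ici]
    · simp
    · intro t ht
      simp only [mem_Ici] at ht
      have : {x | t < (min (φ x / M) 1).toReal} = ∅ := by
        ext x
        simp only [mem_ofPred_eq, mem_empty_iff_false, iff_false, not_lt]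
        refine le_trans ?_ ht
        exact ENNReal.toReal_le_of_le_ofReal (by norm_num) (by simp)
      simp [this]
  rw [z, add_zero]
  refine setLIntegral_congr_fun measurableSet_Ioo ?_
  intro t ht'
  simp only [mem_Ioo] at ht'
  simp only
  congr 1
  ext x
  simp only [mem_ofPred_eq]
  rw [← ENNReal.ofReal_lt_iff_lt_toReal ht'.1.le (by simp), lt_min_iff,
    ENNReal.lt_div_iff_mul_lt (Or.inl h0) (Or.inl ht)]
  simp [ht'.2]

theorem holder2 {γ : ℝ} (hγ : 0 < γ) (A B M0 M1 u0 u1 : ℝ≥0∞) :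
    A * (M0 * u0) ^ (γ / (1 + γ)) + B * (M1 * u1) ^ (γ / (1 + γ)) ≤
    ((A * M0 ^ γ + B * M1 ^ γ) ^ (1 / γ) * (A * u0 + B * u1)) ^ (γ / (1 + γ)) := by
  have hq : 0 < γ / (1 + γ) := by positivity
  have hp : 0 < 1 / (1 + γ) := by positivity
  have hpq : 1 / (1 + γ) + γ / (1 + γ) = 1 := by field_simp
  have H := ENNReal.inner_le_Lp_mul_Lq (Finset.univ : Finset (Fin 2))
    ![A ^ (1 / (1 + γ)) * M0 ^ (γ / (1 + γ)), B ^ (1 / (1 + γ)) * M1 ^ (γ / (1 + γ))]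
    ![A ^ (γ / (1 + γ)) * u0 ^ (γ / (1 + γ)), B ^ (γ / (1 + γ)) * u1 ^ (γ / (1 + γ))]
    (p := 1 + γ) (q := (1 + γ) / γ) (by
      rw [Real.holderConjugate_iff]; constructor
      · linarith
      · field_simp)
  simp only [Fin.sum_univ_two, Matrix.cons_val_zero, Matrix.cons_val_one] at H
  have c1 : ∀ A M u : ℝ≥0∞, A ^ (1 / (1 + γ)) * M ^ (γ / (1 + γ)) * (A ^ (γ / (1 + γ)) * u ^ (γ / (1 + γ)))
      = A * (M * u) ^ (γ / (1 + γ)) := by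
    intro A M u
    rw [ENNReal.mul_rpow_of_nonneg _ _ hq.le]
    have : A = A ^ (1 / (1 + γ)) * A ^ (γ / (1 + γ)) := by
      rw [← ENNReal.rpow_add_of_nonneg _ _ hp.le hq.le, hpq, ENNReal.rpow_one]
    conv_rhs => rw [this]
    ring
  have c2 : ∀ A M : ℝ≥0∞, (A ^ (1 / (1 + γ)) * M ^ (γ / (1 + γ))) ^ (1 + γ) = A * M ^ γ := by
    intro A M
    rw [ENNReal.mul_rpow_of_nonneg _ _ (by positivity), ← ENNReal.rpow_mul, ← ENNReal.rpow_mul,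
      div_mul_cancel₀ _ (by positivity), div_mul_cancel₀ _ (by positivity), ENNReal.rpow_one]
  have c3 : ∀ A M : ℝ≥0∞, (A ^ (γ / (1 + γ)) * M ^ (γ / (1 + γ))) ^ ((1 + γ) / γ) = A * M := by
    intro A M
    have : γ / (1 + γ) * ((1 + γ) / γ) = 1 := by field_simp
    rw [ENNReal.mul_rpow_of_nonneg _ _ (by positivity), ← ENNReal.rpow_mul, ← ENNReal.rpow_mul,
      this, ENNReal.rpow_one, ENNReal.rpow_one]
  rw [c1, c1, c2, c2, c3, c3] at H
  refine H.trans (le_of_eq ?_)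
  rw [ENNReal.mul_rpow_of_nonneg _ _ hq.le, ← ENNReal.rpow_mul]
  congr 2
  · field_simp
  · field_simp

theorem bbl_one_aux {γ : ℝ} (hγ : 0 < γ) {φ0 φ1 φ : ℝ → ℝ≥0∞} (hm0 : Measurable φ0)
    (hm1 : Measurable φ1) (hm : Measurable φ) (hC : ∀ c, OrdConnected {x | c < φ x})
    {a b : ℝ} (ha : 0 < a) (hb : 0 < b)
    (h : ∀ s t, φ0 s ≠ 0 → φ1 t ≠ 0 →
      ENNReal.ofReal a * φ0 s ^ γ + ENNReal.ofReal b * φ1 t ^ γ ≤ φ (a * s + b * t) ^ γ)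
    {M0 M1 : ℝ≥0∞} (h00 : M0 ≠ 0) (h0t : M0 ≠ ∞) (h10 : M1 ≠ 0) (h1t : M1 ≠ ∞)
    (hM0 : M0 ≤ ⨆ x, φ0 x) (hM1 : M1 ≤ ⨆ x, φ1 x) :
    ENNReal.ofReal a * (∫⁻ x, min (φ0 x) M0) ^ (γ / (1 + γ)) +
      ENNReal.ofReal b * (∫⁻ x, min (φ1 x) M1) ^ (γ / (1 + γ)) ≤
      (∫⁻ x, φ x) ^ (γ / (1 + γ)) := by
  have ha0 : ENNReal.ofReal a ≠ 0 := by simpa using ha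
  have hb0 : ENNReal.ofReal b ≠ 0 := by simpa using hb
  rw [layer hm0 h00 h0t, layer hm1 h10 h1t]
  refine (holder2 hγ _ _ _ _ _ _).trans ?_
  refine ENNReal.rpow_le_rpow ?_ (by positivity)
  set M := (ENNReal.ofReal a * M0 ^ γ + ENNReal.ofReal b * M1 ^ γ) ^ (1 / γ) with hMdef
  have hM0' : M ≠ 0 := by
    have : M0 ^ γ ≠ 0 := by simp [h00, h0t]
    have : ENNReal.ofReal a * M0 ^ γ ≠ 0 := mul_ne_zero ha0 this
    have h3 : ENNReal.ofReal a * M0 ^ γ + ENNReal.ofReal b * M1 ^ γ ≠ 0 := by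
      simp only [ne_eq, add_eq_zero, not_and_or]; exact Or.inl this
    rw [hMdef, Ne, ENNReal.rpow_eq_zero_iff]
    push Not
    exact ⟨fun h => absurd h h3, fun _ => by positivity⟩
  have hMt : M ≠ ∞ := by
    refine ENNReal.rpow_ne_top_of_nonneg (by positivity) ?_
    refine ENNReal.add_ne_top.2 ⟨ENNReal.mul_ne_top (by simp) ?_, ENNReal.mul_ne_top (by simp) ?_⟩
    · exact ENNReal.rpow_ne_top_of_nonneg hγ.le h0t
    · exact ENNReal.rpow_ne_top_of_nonneg hγ.le h1t
  have hMγ : M ^ γ = ENNReal.ofReal a * M0 ^ γ + ENNReal.ofReal b * M1 ^ γ := by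
    rw [hMdef, ← ENNReal.rpow_mul, one_div_mul_cancel hγ.ne', ENNReal.rpow_one]
  calc M * ((ENNReal.ofReal a * ∫⁻ τ in Ioo (0:ℝ) 1, volume {x | ENNReal.ofReal τ * M0 < φ0 x})
          + ENNReal.ofReal b * ∫⁻ τ in Ioo (0:ℝ) 1, volume {x | ENNReal.ofReal τ * M1 < φ1 x})
      ≤ M * ∫⁻ τ in Ioo (0:ℝ) 1, (ENNReal.ofReal a * volume {x | ENNReal.ofReal τ * M0 < φ0 x}
          + ENNReal.ofReal b * volume {x | ENNReal.ofReal τ * M1 < φ1 x}) := by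
        gcongr
        refine le_trans ?_ (le_lintegral_add _ _)
        gcongr <;> exact lintegral_const_mul_le _ _
    _ ≤ M * ∫⁻ τ in Ioo (0:ℝ) 1, volume {x | ENNReal.ofReal τ * M < φ x} := by
        gcongr 1
        refine setLIntegral_mono' measurableSet_Ioo ?_
        intro τ hτ
        have lt : ∀ N : ℝ≥0∞, N ≠ 0 → N ≠ ∞ → ENNReal.ofReal τ * N < N := by
          intro N hN hNt
          calc ENNReal.ofReal τ * N < 1 * N := by
                rw [mul_comm, mul_comm 1]
                exact ENNReal.mul_lt_mul_right hN hNt (by simpa using hτ.2)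
            _ = N := one_mul _
        refine bm_one ?_ ?_ (hC _) ha hb ?_
        · exact lt_iSup_iff.1 ((lt M0 h00 h0t).trans_le hM0)
        · exact lt_iSup_iff.1 ((lt M1 h10 h1t).trans_le hM1)
        · intro x hx y hy
          simp only [mem_ofPred_eq] at hx hy ⊢
          rw [← ENNReal.rpow_lt_rpow_iff hγ]
          refine lt_of_lt_of_le ?_ (h x y (ne_bot_of_gt hx) (ne_bot_of_gt hy))
          rw [ENNReal.mul_rpow_of_nonneg _ _ hγ.le, hMγ]
          calc _ = ENNReal.ofReal a * (ENNReal.ofReal τ * M0) ^ γ + ENNReal.ofReal b * (ENNReal.ofReal τ * M1) ^ γ := by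
                rw [ENNReal.mul_rpow_of_nonneg _ _ hγ.le, ENNReal.mul_rpow_of_nonneg _ _ hγ.le]
                ring
            _ < _ := by
                refine ENNReal.add_lt_add ?_ ?_
                · exact ENNReal.mul_lt_mul_right ha0 (by simp) (ENNReal.rpow_lt_rpow hx hγ)
                · exact ENNReal.mul_lt_mul_right hb0 (by simp) (ENNReal.rpow_lt_rpow hy hγ)
    _ = ∫⁻ x, min (φ x) M := (layer hm hM0' hMt).symm
    _ ≤ _ := lintegral_mono fun x => min_le_left _ _

theorem bbl_one {γ : ℝ} (hγ : 0 < γ) {φ0 φ1 φ : ℝ → ℝ≥0∞} (hm0 : Measurable φ0)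
    (hm1 : Measurable φ1) (hm : Measurable φ) (hC : ∀ c, OrdConnected {x | c < φ x})
    {a b : ℝ} (ha : 0 < a) (hb : 0 < b)
    (h : ∀ s t, φ0 s ≠ 0 → φ1 t ≠ 0 →
      ENNReal.ofReal a * φ0 s ^ γ + ENNReal.ofReal b * φ1 t ^ γ ≤ φ (a * s + b * t) ^ γ)
    (i0 : ∫⁻ x, φ0 x ≠ 0) (i1 : ∫⁻ x, φ1 x ≠ 0) :
    ENNReal.ofReal a * (∫⁻ x, φ0 x) ^ (γ / (1 + γ)) +
      ENNReal.ofReal b * (∫⁻ x, φ1 x) ^ (γ / (1 + γ)) ≤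
      (∫⁻ x, φ x) ^ (γ / (1 + γ)) := by
  have hs : ∀ ψ : ℝ → ℝ≥0∞, ∫⁻ x, ψ x ≠ 0 → (⨆ x, ψ x) ≠ 0 := by
    intro ψ h1 h2
    rw [← bot_eq_zero, iSup_eq_bot] at h2
    simp [h2] at h1
  have hmin : ∀ (ψ : ℝ → ℝ≥0∞) (j : ℕ), (fun x => min (ψ x) (min (⨆ x, ψ x) ((j : ℝ≥0∞) + 1)))
      = fun x => min (ψ x) ((j : ℝ≥0∞) + 1) := by
    intro ψ j
    ext x
    rw [← min_assoc, min_eq_left (le_iSup ψ x)]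
  have lim : ∀ ψ : ℝ → ℝ≥0∞, Measurable ψ → Filter.Tendsto
      (fun j : ℕ => ∫⁻ x, min (ψ x) ((j : ℝ≥0∞) + 1)) Filter.atTop (nhds (∫⁻ x, ψ x)) := by
    intro ψ hψ
    refine lintegral_tendsto_of_tendsto_of_monotone (fun j => by fun_prop) ?_ ?_
    · refine Filter.Eventually.of_forall fun x i j hij => ?_
      simp only
      gcongr
    · refine Filter.Eventually.of_forall fun x => ?_
      have h1 : Filter.Tendsto (fun j : ℕ => (j : ℝ≥0∞) + 1) Filter.atTop (nhds ∞) := by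
        have := (Filter.tendsto_add_atTop_iff_nat 1).2 ENNReal.tendsto_nat_nhds_top
        simpa using this
      have := (tendsto_const_nhds (x := ψ x)).min h1
      simpa using this
  refine le_of_tendsto' (f := fun j : ℕ => ENNReal.ofReal a * (∫⁻ x, min (φ0 x) ((j : ℝ≥0∞) + 1)) ^ (γ / (1 + γ)) +
      ENNReal.ofReal b * (∫⁻ x, min (φ1 x) ((j : ℝ≥0∞) + 1)) ^ (γ / (1 + γ))) (x := Filter.atTop) ?_ ?_
  · refine Filter.Tendsto.add ?_ ?_
    · exact ENNReal.Tendsto.const_mul ((lim φ0 hm0).ennrpow_const _) (Or.inr (by simp))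
    · exact ENNReal.Tendsto.const_mul ((lim φ1 hm1).ennrpow_const _) (Or.inr (by simp))
  · intro j
    have := bbl_one_aux hγ hm0 hm1 hm hC ha hb h (M0 := min (⨆ x, φ0 x) ((j : ℝ≥0∞) + 1))
      (M1 := min (⨆ x, φ1 x) ((j : ℝ≥0∞) + 1)) ?_ ?_ ?_ ?_ (min_le_left _ _) (min_le_left _ _)
    · rwa [hmin, hmin] at this
    · have := hs φ0 i0
      simp only [ne_eq, min_eq_iff]; 
      rintro (h | h)
      · exact this h.1
      · simp at h
    · exact ne_top_of_le_ne_top (by simp) (min_le_right _ ((j : ℝ≥0∞) + 1))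
    · have := hs φ1 i1
      simp only [ne_eq, min_eq_iff]; 
      rintro (h | h)
      · exact this h.1
      · simp at h
    · exact ne_top_of_le_ne_top (by simp) (min_le_right _ ((j : ℝ≥0∞) + 1))

theorem GC.bbl_real {X : Type*} [AddCommGroup X] [Module ℝ X] {γ : ℝ} (hγ : 0 < γ)
    {F : X × ℝ → ℝ≥0∞} (hF : GC γ F) : GC (γ / (1 + γ)) (fun x => ∫⁻ t, F (x, t)) := by
  intro x y hx hy a b ha hb hab
  have hord : ∀ z c, OrdConnected {t | c < F (z, t)} := by
    intro z c
    have h1 : GC γ (fun t : ℝ => F ((z, 0) + LinearMap.inr ℝ X ℝ t)) := hF.comp _ _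
    have := h1.convex_lt hγ c
    simpa using this.ordConnected
  have hmeas : ∀ z, Measurable fun t => F (z, t) := by
    intro z
    exact measurable_of_Ioi fun c => (hord z c).measurableSet
  refine bbl_one hγ (hmeas x) (hmeas y) (hmeas _) (hord _) ha hb ?_ hx hy
  intro s t hs ht
  exact hF (x, s) (y, t) hs ht a b ha hb hab

theorem GC.bbl_pi (k : ℕ) : ∀ {X : Type*} [AddCommGroup X] [Module ℝ X] {γ : ℝ} (_ : 0 < γ)
    {F : X × (Fin k → ℝ) → ℝ≥0∞} (_ : GC γ F),
    GC (γ / (1 + k * γ)) (fun x => ∫⁻ v, F (x, v)) := by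
  induction k with
  | zero =>
    intro X _ _ γ hγ F hF
    have : ∀ x, ∫⁻ v : Fin 0 → ℝ, F (x, v) = F (x, 0) := by
      intro x
      rw [volume_pi, Measure.pi_of_empty, lintegral_dirac]
      congr
      exact Subsingleton.elim _ _
    simp_rw [this]
    have := hF.comp (LinearMap.inl ℝ X (Fin 0 → ℝ)) 0
    simpa using this
  | succ k ih =>
    intro X _ _ γ hγ F hF
    have hγ' : 0 < γ / (1 + k * γ) := by positivity
    let L : ((X × ℝ) × (Fin k → ℝ)) →ₗ[ℝ] (X × (Fin (k+1) → ℝ)) :=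
      { toFun := fun p => (p.1.1, Fin.cons p.1.2 p.2)
        map_add' := by
          intro p q
          ext i
          · simp
          · refine Fin.cases ?_ (fun j => ?_) i <;> simp
        map_smul' := by
          intro c p
          ext i
          · simp
          · refine Fin.cases ?_ (fun j => ?_) i <;> simp }
    have hG := hF.comp L 0
    simp only [zero_add] at hG
    have h1 := (ih hγ hG).bbl_real hγ'
    have he : γ / (1 + k * γ) / (1 + γ / (1 + k * γ)) = γ / (1 + ((k + 1 : ℕ) : ℝ) * γ) := by
      push_cast; field_simp; ring
    rw [he] at h1
    convert h1 using 2 with x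
    have hp := (volume_preserving_piFinSuccAbove (fun _ : Fin (k+1) => ℝ) 0).symm
    rw [← hp.lintegral_comp_emb (MeasurableEquiv.measurableEmbedding _)]
    have hGx : GC γ (fun p : ℝ × (Fin k → ℝ) => F (L ((x, p.1), p.2))) := by
      have := hG.comp ((LinearMap.inr ℝ X ℝ).prodMap (LinearMap.id : (Fin k → ℝ) →ₗ[ℝ] _)) ((x,0),0)
      convert this using 4
      simp
    rw [← lintegral_prod _ (hGx.aemeasurable _ hγ)]
    rw [← Measure.volume_eq_prod]
    refine lintegral_congr fun a => ?_
    have : (MeasurableEquiv.piFinSuccAbove (fun _ : Fin (k+1) => ℝ) 0).symm a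
        = Fin.cons a.1 a.2 := by
      rw [← Fin.insertNth_zero']; rfl
    rw [this]
    rfl

theorem GC.const_mul {X : Type*} [AddCommGroup X] [Module ℝ X] {γ : ℝ} (hγ : 0 < γ)
    {F : X → ℝ≥0∞} (hF : GC γ F) (c : ℝ≥0∞) : GC γ (fun x => c * F x) := by
  intro x y hx hy a b ha hb hab
  have := hF x y (right_ne_zero_of_mul hx) (right_ne_zero_of_mul hy) a b ha hb hab
  simp only [ENNReal.mul_rpow_of_nonneg _ _ hγ.le]
  calc _ = c ^ γ * (ENNReal.ofReal a * F x ^ γ + ENNReal.ofReal b * F y ^ γ) := by ring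
    _ ≤ _ := by gcongr

theorem GC.bbl {X V : Type*} [AddCommGroup X] [Module ℝ X] [NormedAddCommGroup V]
    [NormedSpace ℝ V] [FiniteDimensional ℝ V] [MeasurableSpace V] [BorelSpace V] (ν : Measure V)
    [ν.IsAddHaarMeasure] {k : ℕ} (hk : Module.finrank ℝ V = k) {γ : ℝ} (hγ : 0 < γ)
    {F : X × V → ℝ≥0∞} (hF : GC γ F) :
    GC (γ / (1 + k * γ)) (fun x => ∫⁻ v, F (x, v) ∂ν) := by
  let e : (Fin k → ℝ) ≃L[ℝ] V := ContinuousLinearEquiv.ofFinrankEq (by simp [hk])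
  have hH : (Measure.map e (volume : Measure (Fin k → ℝ))).IsAddHaarMeasure :=
    e.isAddHaarMeasure_map _
  have hν := Measure.isAddLeftInvariant_eq_smul ν (Measure.map e volume)
  set c := Measure.addHaarScalarFactor ν (Measure.map e volume)
  have h1 := hF.comp ((LinearMap.id : X →ₗ[ℝ] X).prodMap (e : (Fin k → ℝ) →ₗ[ℝ] V)) 0
  simp only [zero_add] at h1
  have h2 := (GC.bbl_pi k hγ h1).const_mul (by positivity) (c : ℝ≥0∞)
  convert h2 using 2 with x
  rw [hν, lintegral_smul_measure]
  have : MeasurableEmbedding e := e.toHomeomorph.measurableEmbedding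
  rw [this.lintegral_map]
  rfl

theorem tail_meas_le (μ : Measure ℝ) [IsFiniteMeasure μ] (t : ℝ≥0∞) :
    μ {s | μ (Ici s) ≤ t} ≤ t := by
  have hU : OrdConnected {s | μ (Ici s) ≤ t} := by
    refine IsUpperSet.ordConnected ?_
    intro a b hab ha
    exact (measure_mono (Ici_subset_Ici.2 hab)).trans ha
  by_contra hlt
  push Not at hlt
  obtain ⟨K, hK, hKc, hlt⟩ := hU.measurableSet.exists_lt_isCompact hlt
  rcases K.eq_empty_or_nonempty with rfl | hne
  · simp at hlt
  obtain ⟨m, hm, hmin⟩ := hKc.exists_isLeast hne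
  have : μ K ≤ μ (Ici m) := measure_mono fun x hx => hmin hx
  exact absurd (hlt.trans_le (this.trans (hK hm))) (lt_irrefl _)

theorem tail_lemma (μ : Measure ℝ) [IsFiniteMeasure μ] {q : ℝ} (hq : 0 < q) :
    (μ univ) ^ (1 + q) ≤ ENNReal.ofReal (1 + q) * ∫⁻ s, μ (Ici s) ^ q ∂μ := by
  set M := (μ univ).toReal with hM
  have hM0 : 0 ≤ M := ENNReal.toReal_nonneg
  have hμ : μ univ = ENNReal.ofReal M := (ENNReal.ofReal_toReal (by simp)).symm
  set G : ℝ → ℝ := fun s => (μ (Ici s)).toReal with hG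
  have hGa : Antitone G := by
    intro a b hab
    exact ENNReal.toReal_mono (by simp) (measure_mono (Ici_subset_Ici.2 hab))
  have e1 : ∀ s, μ (Ici s) ^ q = ENNReal.ofReal (G s ^ q) := by
    intro s
    rw [← ENNReal.ofReal_rpow_of_nonneg ENNReal.toReal_nonneg hq.le,
      ENNReal.ofReal_toReal (by simp)]
  simp_rw [e1]
  rw [lintegral_rpow_eq_lintegral_meas_lt_mul μ
    (Filter.Eventually.of_forall fun s => ENNReal.toReal_nonneg) hGa.measurable.aemeasurable hq]
  have e2 : ∀ t : ℝ, 0 < t → ENNReal.ofReal (M - t) ≤ μ {a | t < G a} := by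
    intro t ht
    have h1 := tail_meas_le μ (ENNReal.ofReal t)
    have h2 : {s | μ (Ici s) ≤ ENNReal.ofReal t} = {a | t < G a}ᶜ := by
      ext s
      simp only [mem_ofPred_eq, mem_compl_iff, not_lt, hG]
      exact ENNReal.le_ofReal_iff_toReal_le (by simp) ht.le
    rw [h2] at h1
    rw [ENNReal.ofReal_sub _ ht.le, ← hμ]
    refine tsub_le_iff_right.2 ?_
    calc μ univ = μ ({a | t < G a} ∪ {a | t < G a}ᶜ) := by rw [union_compl_self]
      _ ≤ μ {a | t < G a} + μ {a | t < G a}ᶜ := measure_union_le _ _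
      _ ≤ _ := by gcongr
  have e3 : ∫⁻ t in Ioc 0 M, ENNReal.ofReal (M * t ^ (q - 1) - t ^ q) ≤
      ∫⁻ t in Ioi (0:ℝ), μ {a | t < G a} * ENNReal.ofReal (t ^ (q - 1)) := by
    refine (setLIntegral_mono' measurableSet_Ioc ?_).trans (lintegral_mono_set Ioc_subset_Ioi_self)
    intro t ht
    calc ENNReal.ofReal (M * t ^ (q - 1) - t ^ q) = ENNReal.ofReal (M - t) * ENNReal.ofReal (t ^ (q - 1)) := by
          rw [← ENNReal.ofReal_mul (by linarith [ht.2])]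
          congr 1
          rw [sub_mul]
          congr 1
          rw [← Real.rpow_one_add' ht.1.le (by simpa using hq.ne')]; ring_nf
      _ ≤ _ := by gcongr; exact e2 t ht.1
  have i1 : IntervalIntegrable (fun t : ℝ => t ^ (q-1)) volume 0 M :=
    intervalIntegral.intervalIntegrable_rpow' (by linarith)
  have i2 : IntervalIntegrable (fun t : ℝ => t ^ q) volume 0 M :=
    intervalIntegral.intervalIntegrable_rpow' (by linarith)
  have e4 : ∫⁻ t in Ioc 0 M, ENNReal.ofReal (M * t ^ (q - 1) - t ^ q) =
      ENNReal.ofReal (M ^ (q + 1) / (q * (q + 1))) := by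
    rw [← ofReal_integral_eq_lintegral_ofReal]
    · rw [← intervalIntegral.integral_of_le hM0, intervalIntegral.integral_sub (i1.const_mul M) i2,
        intervalIntegral.integral_const_mul, integral_rpow (Or.inl (by linarith)),
        integral_rpow (Or.inl (by linarith))]
      congr 1
      rw [Real.zero_rpow (by linarith), Real.zero_rpow (by linarith)]
      have : M ^ (q + 1) = M * M ^ q := by
        rw [← Real.rpow_one_add' hM0 (by linarith)]; ring_nf
      rw [this]
      simp only [sub_add_cancel]
      field_simp
      ring
    · exact ((intervalIntegrable_iff_integrableOn_Ioc_of_le hM0).1 ((i1.const_mul M).sub i2))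
    · refine (ae_restrict_iff' measurableSet_Ioc).2 (Filter.Eventually.of_forall fun t ht => ?_)
      have : t ^ q = t * t ^ (q - 1) := by
        rw [← Real.rpow_one_add' ht.1.le (by simpa using hq.ne')]; ring_nf
      simp only [Pi.zero_apply]
      rw [this, ← sub_mul]
      exact mul_nonneg (by linarith [ht.2]) (Real.rpow_nonneg ht.1.le _)
  rw [e4] at e3
  calc μ univ ^ (1 + q) = ENNReal.ofReal (1 + q) * (ENNReal.ofReal q * ENNReal.ofReal (M ^ (q + 1) / (q * (q + 1)))) := by
        rw [hμ, ENNReal.ofReal_rpow_of_nonneg hM0 (by linarith), ← ENNReal.ofReal_mul hq.le,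
          ← ENNReal.ofReal_mul (by linarith), add_comm 1 q]
        congr 1
        field_simp
    _ ≤ _ := by gcongr

theorem bern (u v : ℝ≥0∞) {r : ℝ} (hr : 1 < r) :
    u ^ r + ENNReal.ofReal r * u ^ (r - 1) * v ≤ (u + v) ^ r := by
  have hr0 : 0 < r := by linarith
  by_cases hu : u = ∞
  · subst hu
    simp [ENNReal.top_rpow_of_pos hr0]
  by_cases hv : v = ∞
  · subst hv
    simp [ENNReal.top_rpow_of_pos hr0]
  by_cases hu0 : u = 0
  · subst hu0
    simp [ENNReal.zero_rpow_of_pos hr0, ENNReal.zero_rpow_of_pos (sub_pos.2 hr)]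
  lift u to NNReal using hu
  lift v to NNReal using hv
  have hu0 : u ≠ 0 := by simpa using hu0
  have hu1 : 0 < (u : ℝ) := lt_of_le_of_ne u.2 (by exact_mod_cast hu0.symm)
  have key : (u : ℝ) ^ r + r * (u : ℝ) ^ (r - 1) * v ≤ ((u : ℝ) + v) ^ r := by
    have h := one_add_mul_self_le_rpow_one_add (s := (v / u : ℝ))
      (by have : (0:ℝ) ≤ v / u := by positivity
          linarith) hr.le
    have h2 := mul_le_mul_of_nonneg_left h (Real.rpow_nonneg hu1.le r)
    rw [← Real.mul_rpow hu1.le (by positivity)] at h2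
    have h3 : (u : ℝ) * (1 + v / u) = u + v := by field_simp
    rw [h3] at h2
    refine le_trans (le_of_eq ?_) h2
    rw [Real.rpow_sub_one hu1.ne']
    field_simp
  rw [← ENNReal.coe_add]
  rw [ENNReal.ofReal]
  rw [← ENNReal.coe_rpow_of_nonneg _ hr0.le, ← ENNReal.coe_rpow_of_nonneg _ hr0.le,
    ← ENNReal.coe_rpow_of_nonneg _ (by linarith), ← ENNReal.coe_mul, ← ENNReal.coe_mul,
    ← ENNReal.coe_add, ENNReal.coe_le_coe, ← NNReal.coe_le_coe]
  push_cast
  rw [Real.coe_toNNReal _ hr0.le]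
  exact key

theorem lintegral_comp_smul_haar {W : Type*} [NormedAddCommGroup W] [NormedSpace ℝ W]
    [FiniteDimensional ℝ W] [MeasurableSpace W] [BorelSpace W] (ν : Measure W)
    [ν.IsAddHaarMeasure] (g : W → ℝ≥0∞) {l : ℝ} (hl : 0 < l) :
    ∫⁻ x, g (l • x) ∂ν = ENNReal.ofReal ((l ^ Module.finrank ℝ W)⁻¹) * ∫⁻ x, g x ∂ν := by
  have h := Measure.map_addHaar_smul ν hl.ne'
  have he : MeasurableEmbedding (fun x : W => l • x) :=
    (Homeomorph.smulOfNeZero l hl.ne').measurableEmbedding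
  rw [← he.lintegral_map, h, lintegral_smul_measure, abs_of_pos (by positivity)]
  rfl

theorem scaling {W : Type*} [NormedAddCommGroup W] [NormedSpace ℝ W]
    [FiniteDimensional ℝ W] [MeasurableSpace W] [BorelSpace W] (ν : Measure W)
    [ν.IsAddHaarMeasure] {d : ℕ} (hd : Module.finrank ℝ W = d) {q : ℝ} (hq : 0 < q)
    {S : W → ℝ≥0∞} (hS : GC q S) (h0 : S 0 ≠ 0) (ht : S 0 ≠ ∞) :
    ENNReal.ofReal (1 / q + 1) * S 0 ^ q * ∫⁻ x, S x ∂ν ≤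
      ENNReal.ofReal (d + 1 / q + 1) * ∫⁻ x, S x ^ (1 + q) ∂ν := by
  set P := 1 / q with hP
  have hP0 : 0 < P := by positivity
  have hqP : q * P = 1 := by rw [hP]; field_simp
  have pt : ∀ l : ℝ, 0 < l → l < 1 → ∀ x,
      ENNReal.ofReal (l ^ (P + 1)) * S x ^ (1 + q) +
        ENNReal.ofReal ((P + 1) * l ^ P * (1 - l)) * S 0 ^ q * S x ≤ S (l • x) ^ (1 + q) := by
    intro l hl hl1 x
    by_cases hx : S x = 0
    · rw [hx, ENNReal.zero_rpow_of_pos (by linarith)]; simp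
    have h := hS x 0 hx h0 l (1 - l) hl (by linarith) (by ring)
    rw [smul_zero, add_zero] at h
    have h2 := ENNReal.rpow_le_rpow h (z := P + 1) (by linarith)
    have h3 := (bern _ _ (by linarith)).trans h2
    rw [← ENNReal.rpow_mul, mul_add, hqP, mul_one] at h3
    refine le_trans (le_of_eq ?_) h3
    rw [ENNReal.mul_rpow_of_nonneg _ _ (by linarith), add_sub_cancel_right,
      ENNReal.mul_rpow_of_nonneg _ _ hP0.le, ← ENNReal.rpow_mul, ← ENNReal.rpow_mul, mul_add, hqP,
      mul_one, ENNReal.rpow_one, ENNReal.ofReal_rpow_of_pos hl, ENNReal.ofReal_rpow_of_pos hl,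
      ENNReal.ofReal_mul (by positivity), ENNReal.ofReal_mul (by positivity)]
    ring
  set I := ∫⁻ x, S x ^ (1 + q) ∂ν
  set J := ∫⁻ x, S x ∂ν
  have integ : ∀ l : ℝ, 0 < l → l < 1 → ENNReal.ofReal (l ^ (P + 1)) * I +
        ENNReal.ofReal ((P + 1) * l ^ P * (1 - l)) * S 0 ^ q * J ≤
        ENNReal.ofReal ((l ^ d)⁻¹) * I := by
    intro l hl hl1
    rw [← hd, ← lintegral_comp_smul_haar ν (fun x => S x ^ (1 + q)) hl]
    refine le_trans ?_ (lintegral_mono (pt l hl hl1))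
    refine le_trans ?_ (le_lintegral_add _ _)
    gcongr <;> exact lintegral_const_mul_le _ _
  by_cases hI : I = ∞
  · rw [hI, ENNReal.mul_top]
    · exact le_top
    · simp; positivity
  have hB0 : S 0 ^ q ≠ 0 := by simp [h0, ht]
  have hBt : S 0 ^ q ≠ ∞ := ENNReal.rpow_ne_top_of_nonneg hq.le ht
  have hJ : J ≠ ∞ := by
    intro hJ
    have := integ (1/2) (by norm_num) (by norm_num)
    rw [hJ, ENNReal.mul_top, add_top, top_le_iff] at this
    · exact ENNReal.mul_ne_top (by simp) hI this
    · refine mul_ne_zero ?_ hB0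
      rw [Ne, ENNReal.ofReal_eq_zero, not_le]
      have : (0:ℝ) < 1 - 1/2 := by norm_num
      positivity
  obtain ⟨i, hi, hi'⟩ : ∃ i : ℝ, 0 ≤ i ∧ I = ENNReal.ofReal i :=
    ⟨I.toReal, ENNReal.toReal_nonneg, (ENNReal.ofReal_toReal hI).symm⟩
  obtain ⟨j, hj, hj'⟩ : ∃ i : ℝ, 0 ≤ i ∧ J = ENNReal.ofReal i :=
    ⟨J.toReal, ENNReal.toReal_nonneg, (ENNReal.ofReal_toReal hJ).symm⟩
  obtain ⟨β, hβ, hβ'⟩ : ∃ i : ℝ, 0 ≤ i ∧ S 0 ^ q = ENNReal.ofReal i :=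
    ⟨(S 0 ^ q).toReal, ENNReal.toReal_nonneg, (ENNReal.ofReal_toReal hBt).symm⟩
  rw [hi', hj', hβ'] at integ ⊢
  have real : ∀ l : ℝ, 0 < l → l < 1 →
      0 ≤ (l ^ (-d : ℝ) - l ^ (P + 1)) * i - (P + 1) * l ^ P * (1 - l) * β * j := by
    intro l hl hl1
    have h1 : (0:ℝ) ≤ 1 - l := by linarith
    have := integ l hl hl1
    rw [← ENNReal.ofReal_mul (by positivity), ← ENNReal.ofReal_mul (by positivity),
      ← ENNReal.ofReal_mul (by positivity), ← ENNReal.ofReal_mul (by positivity),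
      ← ENNReal.ofReal_add (by positivity) (by positivity),
      ENNReal.ofReal_le_ofReal_iff (by positivity)] at this
    rw [Real.rpow_neg hl.le, Real.rpow_natCast]
    linarith
  have hder : HasDerivAt (fun l : ℝ => (l ^ (-d : ℝ) - l ^ (P + 1)) * i -
      (P + 1) * l ^ P * (1 - l) * β * j)
      (-(d + P + 1) * i + (P + 1) * β * j) 1 := by
    have d1 := Real.hasDerivAt_rpow_const (x := 1) (p := (-d : ℝ)) (Or.inl one_ne_zero)
    have d2 := Real.hasDerivAt_rpow_const (x := 1) (p := P + 1) (Or.inl one_ne_zero)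
    have d3 := Real.hasDerivAt_rpow_const (x := 1) (p := P) (Or.inl one_ne_zero)
    have d4 := (hasDerivAt_id (1:ℝ)).const_sub 1
    have := ((d1.sub d2).mul_const i).sub ((((d3.const_mul (P + 1)).mul d4).mul_const β).mul_const j)
    refine this.congr_deriv ?_
    simp only [Real.one_rpow, id_eq, sub_self]
    ring
  have hsl := hder.tendsto_slope.mono_left (nhdsWithin_mono 1 (s := Iio 1) (fun x hx => ne_of_lt hx))
  have hle := le_of_tendsto (b := (0:ℝ)) hsl (by
    filter_upwards [self_mem_nhdsWithin, Ioo_mem_nhdsLT (show (0:ℝ) < 1 by norm_num)] with l hl hl'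
    rw [slope_def_field]
    simp only [Real.one_rpow, sub_self, zero_mul, mul_zero, sub_zero]
    exact div_nonpos_of_nonneg_of_nonpos (real l hl'.1 hl'.2) (by linarith [hl'.2]))
  rw [← ENNReal.ofReal_mul (by positivity), ← ENNReal.ofReal_mul (by positivity),
    ← ENNReal.ofReal_mul (by positivity)]
  exact ENNReal.ofReal_le_ofReal (by linarith)

theorem exists_support {V : Type*} [NormedAddCommGroup V] [NormedSpace ℝ V]
    [FiniteDimensional ℝ V] {O : Set V} (hO : IsOpen O) (h0 : (0:V) ∈ O) {Ψ : V → ℝ}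
    (hΨ : ConcaveOn ℝ O Ψ) : ∃ l : V →L[ℝ] ℝ, ∀ x ∈ O, Ψ x ≤ Ψ 0 + l x := by
  have hc := hΨ.continuousOn hO
  have hopen : IsOpen {p : V × ℝ | p.1 ∈ O ∧ p.2 < Ψ p.1} := by
    have h1 : ContinuousOn (fun p : V × ℝ => Ψ p.1 - p.2) (Prod.fst ⁻¹' O) := by
      refine ContinuousOn.sub (hc.comp continuousOn_fst (fun p hp => hp)) continuousOn_snd
    have := h1.isOpen_inter_preimage (hO.preimage continuous_fst) isOpen_Ioi (t := Ioi 0)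
    convert this using 1
    ext p
    simp
  obtain ⟨L, hL⟩ := geometric_hahn_banach_open_point hΨ.convex_strict_hypograph hopen
    (x := ((0:V), Ψ 0)) (by simp)
  have dec : ∀ x t, L (x, t) = L (x, 0) + t * L (0, 1) := by
    intro x t
    have : ((x, t) : V × ℝ) = (x, 0) + t • (0, 1) := by simp
    rw [this, map_add, map_smul, smul_eq_mul]
  set c := L (0, 1) with hcdef
  have hcpos : 0 < c := by
    have := hL (0, Ψ 0 - 1) (by simp [h0])
    rw [dec 0 (Ψ 0 - 1), dec 0 (Ψ 0)] at this
    linarith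
  refine ⟨-(c⁻¹ • (L.comp (ContinuousLinearMap.inl ℝ V ℝ))), fun x hx => ?_⟩
  simp only [neg_apply, smul_apply, ContinuousLinearMap.comp_apply,
    ContinuousLinearMap.inl_apply, smul_eq_mul]
  refine le_of_forall_lt fun t ht => ?_
  have := hL (x, t) ⟨hx, ht⟩
  rw [dec x t, dec 0 (Ψ 0)] at this
  have h00 : L ((0:V), (0:ℝ)) = 0 := by
    have : ((0:V), (0:ℝ)) = 0 := rfl
    rw [this, map_zero]
  rw [h00] at this
  have : t * c < (Ψ 0 + -(c⁻¹ * L (x, 0))) * c := by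
    have : (Ψ 0 + -(c⁻¹ * L (x, 0))) * c = Ψ 0 * c - L (x, 0) := by field_simp; ring
    linarith
  exact lt_of_mul_lt_mul_right this hcpos.le

theorem centroid_interior {V : Type*} [NormedAddCommGroup V] [NormedSpace ℝ V]
    [FiniteDimensional ℝ V] [MeasurableSpace V] [BorelSpace V] (μ : Measure V)
    [μ.IsAddHaarMeasure] {f : V → ℝ} (hf : ∀ x, 0 ≤ f x) (hK : Convex ℝ {x | f x ≠ 0})
    (hi : Integrable f μ) (hp : 0 < ∫ x, f x ∂μ) (hci : Integrable (fun x => f x • x) μ)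
    (hc : ∫ x, f x • x ∂μ = 0) :
    (0:V) ∈ interior {x | f x ≠ 0} ∧ ∀ᵐ x ∂μ, x ∉ interior {x | f x ≠ 0} → f x = 0 := by
  have hae : ∀ᵐ x ∂μ, x ∉ interior {x | f x ≠ 0} → f x = 0 := by
    have := hK.addHaar_frontier μ
    filter_upwards [measure_eq_zero_iff_ae_notMem.1 this] with x hx hxi
    by_contra h
    exact hx ⟨subset_closure h, hxi⟩
  refine ⟨?_, hae⟩
  by_contra h0
  obtain ⟨u, hu⟩ := geometric_hahn_banach_open_point hK.interior isOpen_interior h0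
  simp only [map_zero] at hu
  have h1 : ∫ x, f x * u x ∂μ = 0 := by
    have := u.integral_comp_comm hci
    rw [hc, map_zero] at this
    simpa using this
  have h1i : Integrable (fun x => f x * u x) μ := by
    have := u.integrable_comp hci
    simpa using this
  have h1n : Integrable (fun x => -(f x * u x)) μ := h1i.neg
  have h2 : ∫ x, -(f x * u x) ∂μ = 0 := by rw [integral_neg, h1, neg_zero]
  rw [integral_eq_zero_iff_of_nonneg_ae _ h1n] at h2
  · have : f =ᵐ[μ] 0 := by
      filter_upwards [h2, hae] with x hx hx2
      by_cases hxo : x ∈ interior {x | f x ≠ 0}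
      · have := hu x hxo
        simp at hx
        rcases hx with h | h
        · exact h
        · linarith
      · exact hx2 hxo
    rw [integral_congr_ae this] at hp
    simp at hp
  · filter_upwards [hae] with x hx2
    by_cases hxo : x ∈ interior {x | f x ≠ 0}
    · have := hu x hxo
      simp only [Pi.zero_apply]
      nlinarith [hf x]
    · simp [hx2 hxo]

theorem jensen {V : Type*} [NormedAddCommGroup V] [NormedSpace ℝ V]
    [FiniteDimensional ℝ V] [MeasurableSpace V] [BorelSpace V] (μ : Measure V)
    {f : V → ℝ} (hf : ∀ x, 0 ≤ f x)
    (hi : Integrable f μ) (hci : Integrable (fun x => f x • x) μ)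
    (hc : ∫ x, f x • x ∂μ = 0) {O : Set V} (hO : IsOpen O) (hOc : Convex ℝ O) (h0 : (0:V) ∈ O)
    (hae : ∀ᵐ x ∂μ, x ∉ O → f x = 0) {q : ℝ} (hq : 0 < q) {R : V → ℝ≥0∞} (hR : GC q R)
    (hR0 : ∀ x ∈ O, R x ≠ 0) (hRt : ∀ x ∈ O, R x ≠ ∞) :
    ∫⁻ x, R x ^ q * ENNReal.ofReal (f x) ∂μ ≤ R 0 ^ q * ∫⁻ x, ENNReal.ofReal (f x) ∂μ := by
  have hfin : ∀ x ∈ O, R x ^ q ≠ ∞ := fun x hx => ENNReal.rpow_ne_top_of_nonneg hq.le (hRt x hx)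
  set Ψ : V → ℝ := fun x => (R x ^ q).toReal with hΨ
  have hconc : ConcaveOn ℝ O Ψ := by
    rw [concaveOn_iff_forall_pos]
    refine ⟨hOc, fun x hx y hy a b ha hb hab => ?_⟩
    have := hR x y (hR0 x hx) (hR0 y hy) a b ha hb hab
    have h2 := ENNReal.toReal_mono (hfin _ (hOc hx hy ha.le hb.le hab)) this
    rw [ENNReal.toReal_add (ENNReal.mul_ne_top (by simp) (hfin x hx))
      (ENNReal.mul_ne_top (by simp) (hfin y hy)), ENNReal.toReal_mul, ENNReal.toReal_mul,
      ENNReal.toReal_ofReal ha.le, ENNReal.toReal_ofReal hb.le] at h2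
    exact h2
  obtain ⟨l, hl⟩ := exists_support hO h0 hconc
  have hΨn : ∀ x, 0 ≤ Ψ x := fun x => ENNReal.toReal_nonneg
  have hint : Integrable (fun x => Ψ 0 * f x + l (f x • x)) μ :=
    (hi.const_mul _).add (l.integrable_comp hci)
  calc ∫⁻ x, R x ^ q * ENNReal.ofReal (f x) ∂μ
      ≤ ∫⁻ x, ENNReal.ofReal (Ψ 0 * f x + l (f x • x)) ∂μ := by
        refine lintegral_mono_ae ?_
        filter_upwards [hae] with x hx
        by_cases hxO : x ∈ O
        · rw [← ENNReal.ofReal_toReal (hfin x hxO), ← ENNReal.ofReal_mul (hΨn x)]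
          refine ENNReal.ofReal_le_ofReal ?_
          have := mul_le_mul_of_nonneg_right (hl x hxO) (hf x)
          rw [map_smul, smul_eq_mul]
          simp only [hΨ] at this ⊢
          linarith
        · simp [hx hxO]
    _ = ENNReal.ofReal (∫ x, (Ψ 0 * f x + l (f x • x)) ∂μ) := by
        rw [ofReal_integral_eq_lintegral_ofReal hint]
        filter_upwards [hae] with x hx
        by_cases hxO : x ∈ O
        · have := mul_le_mul_of_nonneg_right ((hΨn x).trans (hl x hxO)) (hf x)
          rw [map_smul, smul_eq_mul]
          simp only [Pi.zero_apply]
          linarith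
        · simp [hx hxO]
    _ = ENNReal.ofReal (Ψ 0 * ∫ x, f x ∂μ) := by
        rw [integral_add (hi.const_mul _) (l.integrable_comp hci), integral_const_mul,
          l.integral_comp_comm hci, hc, map_zero, add_zero]
    _ = _ := by
        rw [ENNReal.ofReal_mul (hΨn 0), ofReal_integral_eq_lintegral_ofReal hi
          (Filter.Eventually.of_forall hf)]
        congr 1
        exact ENNReal.ofReal_toReal (hfin 0 h0)

theorem fibre {V : Type*} [NormedAddCommGroup V] [InnerProductSpace ℝ V]
    [FiniteDimensional ℝ V] [MeasurableSpace V] [BorelSpace V] (μ : Measure V)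
    [μ.IsAddHaarMeasure] (E : Submodule ℝ V) (ν : Measure E) [ν.IsAddHaarMeasure]
    (ω : Measure (Eᗮ : Submodule ℝ V)) [ω.IsAddHaarMeasure] :
    ∃ c : ℝ≥0∞, c ≠ 0 ∧ c ≠ ∞ ∧ ∀ g : V → ℝ≥0∞, AEMeasurable g μ →
      ∫⁻ w, ∫⁻ z, g ((w : V) + (z : V)) ∂ν ∂ω = c * ∫⁻ x, g x ∂μ := by
  let e : ((Eᗮ : Submodule ℝ V) × E) ≃L[ℝ] V :=
    (Submodule.prodEquivOfIsCompl _ _ (Submodule.isCompl_orthogonal E).symm).toContinuousLinearEquiv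
  have he : ∀ p, e p = (p.1 : V) + (p.2 : V) := fun p => rfl
  have hH : (Measure.map e (ω.prod ν)).IsAddHaarMeasure := e.isAddHaarMeasure_map _
  have hν := Measure.isAddLeftInvariant_eq_smul (Measure.map e (ω.prod ν)) μ
  refine ⟨_, ?_, ENNReal.coe_ne_top (r := Measure.addHaarScalarFactor (Measure.map e (ω.prod ν)) μ), ?_⟩
  · exact ENNReal.coe_ne_zero.2 (Measure.addHaarScalarFactor_pos_of_isAddHaarMeasure _ _).ne'
  intro g hg
  have hg' : AEMeasurable g (Measure.map e (ω.prod ν)) := by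
    rw [hν]; exact hg.smul_measure _
  have hg2 : AEMeasurable (fun p : (Eᗮ : Submodule ℝ V) × E => g (p.1 + p.2)) (ω.prod ν) :=
    hg'.comp_measurable e.continuous.measurable
  have h1 := lintegral_prod _ hg2
  simp only at h1
  rw [← h1]
  have hem : MeasurableEmbedding e := e.toHomeomorph.measurableEmbedding
  have h2 := hem.lintegral_map (μ := ω.prod ν) g
  rw [hν, lintegral_smul_measure] at h2
  exact h2.symm

theorem tail_fibre {E : Type*} [NormedAddCommGroup E] [NormedSpace ℝ E]
    [FiniteDimensional ℝ E] [MeasurableSpace E] [BorelSpace E] (ν : Measure E)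
    [ν.IsAddHaarMeasure] {h : E → ℝ≥0∞} (hm : AEMeasurable h ν) (u : E →L[ℝ] ℝ)
    (hfin : ∫⁻ z, h z ∂ν ≠ ∞) {q : ℝ} (hq : 0 < q) :
    (∫⁻ z, h z ∂ν) ^ (1 + q) ≤ ENNReal.ofReal (1 + q) *
      ∫⁻ z, (∫⁻ y in {y | 0 ≤ u y}, h (z + y) ∂ν) ^ q * h z ∂ν := by
  have hu : Measurable u := u.continuous.measurable
  set m := ν.withDensity h with hmdef
  have : IsFiniteMeasure m := isFiniteMeasure_withDensity hfin
  have := tail_lemma (m.map u) hq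
  rw [Measure.map_apply hu MeasurableSet.univ, preimage_univ, withDensity_apply _ MeasurableSet.univ,
    Measure.restrict_univ] at this
  refine this.trans (le_of_eq ?_)
  have anti : Antitone fun s => (m.map u) (Ici s) ^ q := by
    intro a b hab
    exact ENNReal.rpow_le_rpow (measure_mono (Ici_subset_Ici.2 hab)) hq.le
  have hmeas := anti.measurable
  have hw : ∫⁻ z, (m.map u) (Ici (u z)) ^ q ∂m = ∫⁻ z, h z * (m.map u) (Ici (u z)) ^ q ∂ν :=
    lintegral_withDensity_eq_lintegral_mul₀ hm (hmeas.comp hu).aemeasurable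
  rw [lintegral_map hmeas hu, hw]
  congr 1
  refine lintegral_congr fun z => ?_
  rw [mul_comm]
  congr 2
  rw [Measure.map_apply hu measurableSet_Ici, withDensity_apply _ (hu measurableSet_Ici),
    ← lintegral_indicator (hu measurableSet_Ici)]
  have hs : MeasurableSet {y | 0 ≤ u y} := hu measurableSet_Ici
  rw [← lintegral_indicator hs, ← lintegral_add_left_eq_self _ z]
  refine lintegral_congr fun y => ?_
  simp only [indicator, mem_preimage, mem_Ici, mem_ofPred_eq, map_add, le_add_iff_nonneg_right]

theorem core {V : Type*} [NormedAddCommGroup V] [InnerProductSpace ℝ V]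
    [FiniteDimensional ℝ V] [MeasurableSpace V] [BorelSpace V] (μ : Measure V)
    [μ.IsAddHaarMeasure] (E : Submodule ℝ V) (ν : Measure E) [ν.IsAddHaarMeasure]
    {k d : ℕ} (hk : Module.finrank ℝ E = k) (hd : Module.finrank ℝ (Eᗮ : Submodule ℝ V) = d)
    {θ : V} (hθE : θ ∈ E) (hθ : θ ≠ 0) {γ : ℝ} (hγ : 0 < γ) {f : V → ℝ} (hf : ∀ x, 0 ≤ f x)
    (hgc : GC γ (fun x => ENNReal.ofReal (f x)))
    (hi : Integrable f μ) (hp : 0 < ∫ x, f x ∂μ) (hci : Integrable (fun x => f x • x) μ)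
    (hc : ∫ x, f x • x ∂μ = 0) {q : ℝ} (hq : q = γ / (1 + k * γ))
    (hSt : ∫⁻ z : E, ENNReal.ofReal (f z) ∂ν ≠ ∞) :
    ENNReal.ofReal (1 / q + 1) * (∫⁻ z : E, ENNReal.ofReal (f z) ∂ν) ^ q ≤
    ENNReal.ofReal (d + 1 / q + 1) * (ENNReal.ofReal (1 + q) *
      (∫⁻ z : E in {z : E | 0 ≤ ⟪(z : V), θ⟫}, ENNReal.ofReal (f z) ∂ν) ^ q) := by
  have hq0 : 0 < q := by rw [hq]; positivity
  set φ : V → ℝ≥0∞ := fun x => ENNReal.ofReal (f x) with hφ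
  set u : E →L[ℝ] ℝ := (innerSL ℝ θ).comp E.subtypeL with hu
  have hu' : ∀ z : E, u z = ⟪(z : V), θ⟫ := by
    intro z; simp [hu, real_inner_comm]
  simp_rw [← hu']
  have hus : MeasurableSet {z : E | 0 ≤ u z} := u.continuous.measurable measurableSet_Ici
  set S : V → ℝ≥0∞ := fun x => ∫⁻ z : E, φ (x + z) ∂ν with hS
  set R : V → ℝ≥0∞ := fun x => ∫⁻ z : E in {z : E | 0 ≤ u z}, φ (x + z) ∂ν with hR
  -- concavity of sections
  have hadd : GC γ (fun p : V × E => φ (p.1 + p.2)) := by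
    have := hgc.comp (LinearMap.coprod (LinearMap.id : V →ₗ[ℝ] V) E.subtype) 0
    simpa using this
  have hSgc : GC q S := by rw [hq]; exact hadd.bbl ν hk hγ
  have hRgc : GC q R := by
    have hconv : Convex ℝ {p : V × E | 0 ≤ u p.2} := by
      have := (convex_Ici (0:ℝ)).linear_preimage ((u : E →ₗ[ℝ] ℝ).comp (LinearMap.snd ℝ V E))
      exact this
    have := (hadd.indicator hconv).bbl ν hk hγ
    rw [hq]
    convert this using 2 with x
    rw [hR]
    simp only
    rw [← lintegral_indicator hus]
    rfl
  have hRS : ∀ x, R x ≤ S x := fun x => setLIntegral_le_lintegral _ _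
  have hS0 : S 0 = ∫⁻ z : E, φ z ∂ν := by simp [hS]
  have hR0 : R 0 = ∫⁻ z : E in {z : E | 0 ≤ u z}, φ z ∂ν := by simp [hR]
  rw [← hS0] at hSt ⊢
  rw [← hR0]
  -- interior
  have hK : Convex ℝ {x | f x ≠ 0} := by
    have := hgc.convex_lt hγ 0
    convert this using 2 with x
    ext x
    simp only [hφ, ENNReal.ofReal_pos]
    exact ⟨fun h => lt_of_le_of_ne (hf x) h.symm, fun h => h.ne'⟩
  obtain ⟨h0, hae⟩ := centroid_interior μ hf hK hi hp hci hc
  set O := interior {x | f x ≠ 0} with hO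
  have hOo : IsOpen O := isOpen_interior
  have hOc : Convex ℝ O := hK.interior
  have hφm : AEMeasurable φ μ := hgc.aemeasurable μ hγ
  have hφE : ∀ x, AEMeasurable (fun z : E => φ (x + z)) ν := by
    intro x
    exact (hgc.comp E.subtype x).aemeasurable ν hγ
  have hRne : ∀ x ∈ O, R x ≠ 0 := by
    intro x hx hRx
    have h1 := (lintegral_eq_zero_iff' (hφE x).restrict).1 hRx
    have h2 := (ae_restrict_iff' hus).1 h1
    set U : Set E := {z | x + (z : V) ∈ O ∧ 0 < u z}
    have hU : IsOpen U := by
      refine IsOpen.inter (hOo.preimage (by fun_prop)) (isOpen_lt continuous_const u.continuous)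
    have hUne : U.Nonempty := by
      have ht : Filter.Tendsto (fun t : ℝ => x + t • θ) (nhdsWithin 0 (Ioi 0)) (nhds x) := by
        have : Filter.Tendsto (fun t : ℝ => x + t • θ) (nhds 0) (nhds (x + (0:ℝ) • θ)) :=
          Continuous.tendsto (by fun_prop) 0
        simp only [zero_smul, add_zero] at this
        exact this.mono_left nhdsWithin_le_nhds
      obtain ⟨t, ht1, ht2⟩ := ((ht.eventually_mem (hOo.mem_nhds hx)).and self_mem_nhdsWithin).exists
      refine ⟨t • ⟨θ, hθE⟩, ht1, ?_⟩
      rw [hu']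
      have ht2 : 0 < t := ht2
      have : 0 < ⟪θ, θ⟫ := real_inner_self_pos.2 hθ
      simp only [Submodule.coe_smul, real_inner_smul_left]
      positivity
    have hpos := hU.measure_pos ν hUne
    have : ν U = 0 := by
      refine measure_mono_null ?_ h2
      intro z hz hz2
      have h3 := hz2 hz.2.le
      have h4 : f (x + z) ≠ 0 := interior_subset hz.1
      simp only [hφ, Pi.zero_apply, ENNReal.ofReal_eq_zero] at h3
      exact h4 (le_antisymm h3 (hf _))
    exact hpos.ne' this
  have hSne : ∀ x ∈ O, S x ≠ 0 := fun x hx h => hRne x hx (le_antisymm (h ▸ hRS x) bot_le)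
  have hSneTop : ∀ x ∈ O, S x ≠ ∞ := by
    intro x hx hSx
    have ht : Filter.Tendsto (fun t : ℝ => -(t • x)) (nhdsWithin 0 (Ioi 0)) (nhds 0) := by
      have : Filter.Tendsto (fun t : ℝ => -(t • x)) (nhds 0) (nhds (-((0:ℝ) • x))) :=
        Continuous.tendsto (by fun_prop) 0
      simp only [zero_smul, neg_zero] at this
      exact this.mono_left nhdsWithin_le_nhds
    obtain ⟨t, ht1, ht2⟩ := ((ht.eventually_mem (hOo.mem_nhds h0)).and self_mem_nhdsWithin).exists
    have ht2 : 0 < t := ht2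
    have := hSgc x (-(t • x)) (hSne x hx) (hSne _ ht1) (t / (1 + t)) (1 / (1 + t)) (by positivity)
      (by positivity) (by field_simp; ring)
    have hz : (t / (1 + t)) • x + (1 / (1 + t)) • -(t • x) = 0 := by
      rw [smul_neg, smul_smul, ← sub_eq_add_neg, ← sub_smul]
      have : t / (1 + t) - 1 / (1 + t) * t = 0 := by field_simp; ring
      rw [this, zero_smul]
    rw [hz, hSx, ENNReal.top_rpow_of_pos hq0, ENNReal.mul_top, top_add, top_le_iff] at this
    · exact ENNReal.rpow_ne_top_of_nonneg hq0.le hSt this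
    · rw [Ne, ENNReal.ofReal_eq_zero, not_le]; positivity
  have hJ := jensen μ hf hi hci hc hOo hOc h0 hae hq0 hRgc hRne
    (fun x hx => ne_top_of_le_ne_top (hSneTop x hx) (hRS x))
  -- fibre decomposition
  let ω : Measure (Eᗮ : Submodule ℝ V) := Measure.addHaar
  obtain ⟨c, hc0, hct, hfib⟩ := fibre μ E ν ω
  have hf1 := hfib φ hφm
  have hf2 := hfib (fun x => R x ^ q * φ x) (((hRgc.aemeasurable μ hq0).pow_const q).mul hφm)
  have hSW : GC q (fun w : (Eᗮ : Submodule ℝ V) => S w) := by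
    have := hSgc.comp (Eᗮ : Submodule ℝ V).subtype 0
    simpa using this
  have hsc := scaling ω hd hq0 hSW (by simpa using hSne 0 h0) (by simpa using hSt)
  simp only [ZeroMemClass.coe_zero] at hsc
  have hΦt : ∫⁻ x, φ x ∂μ ≠ ∞ := by
    rw [hφ, ← ofReal_integral_eq_lintegral_ofReal hi (Filter.Eventually.of_forall hf)]; simp
  have hΦ0 : ∫⁻ x, φ x ∂μ ≠ 0 := by
    rw [hφ, ← ofReal_integral_eq_lintegral_ofReal hi (Filter.Eventually.of_forall hf)]
    simpa using hp
  have hSfin : ∀ᵐ w : (Eᗮ : Submodule ℝ V) ∂ω, S w < ∞ := by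
    refine ae_lt_top' (hSW.aemeasurable ω hq0) ?_
    change ∫⁻ w : (Eᗮ : Submodule ℝ V), ∫⁻ z : E, φ ((w : V) + z) ∂ν ∂ω ≠ ∞
    rw [hf1]
    exact ENNReal.mul_ne_top hct hΦt
  have htail : ∫⁻ w : (Eᗮ : Submodule ℝ V), S w ^ (1 + q) ∂ω ≤
      ENNReal.ofReal (1 + q) * (c * (R 0 ^ q * ∫⁻ x, φ x ∂μ)) := by
    calc _ ≤ ∫⁻ w : (Eᗮ : Submodule ℝ V), ENNReal.ofReal (1 + q) *
            ∫⁻ z : E, R (w + z) ^ q * φ (w + z) ∂ν ∂ω := by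
          refine lintegral_mono_ae ?_
          filter_upwards [hSfin] with w hw
          have := tail_fibre ν (hφE w) u hw.ne hq0
          refine this.trans (le_of_eq ?_)
          congr 1
          refine lintegral_congr fun z => ?_
          simp only [hR, Submodule.coe_add, add_assoc]
      _ = ENNReal.ofReal (1 + q) * (c * ∫⁻ x, R x ^ q * φ x ∂μ) := by
          rw [lintegral_const_mul' _ _ (by simp), hf2]
      _ ≤ _ := by gcongr
  have hfinal := hsc.trans (mul_le_mul_right htail _)
  change _ * (∫⁻ w : (Eᗮ : Submodule ℝ V), ∫⁻ z : E, φ ((w : V) + z) ∂ν ∂ω) ≤ _ at hfinal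
  rw [hf1] at hfinal
  have hcΦ0 : c * ∫⁻ x, φ x ∂μ ≠ 0 := mul_ne_zero hc0 hΦ0
  have hcΦt : c * ∫⁻ x, φ x ∂μ ≠ ∞ := ENNReal.mul_ne_top hct hΦt
  refine (ENNReal.mul_le_mul_iff_left hcΦ0 hcΦt).1 ?_
  refine hfinal.trans (le_of_eq ?_)
  ring

theorem final_arith {n k : ℕ} (hkn : k ≤ n) {γ q s r : ℝ} (hγ : 0 < γ) (hq : q = γ / (1 + k * γ))
    (hs : 0 ≤ s) (hr : 0 ≤ r)
    (h : (1 / q + 1) * s ^ q ≤ (((n - k : ℕ) : ℝ) + 1 / q + 1) * ((1 + q) * r ^ q)) :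
    ((k * γ + 1) / ((n + 1) * γ + 1)) ^ ((k * γ + 1) / γ) * s ≤ r := by
  have hq0 : 0 < q := by rw [hq]; positivity
  have hP : (k * γ + 1) / γ = 1 / q := by rw [hq]; field_simp; ring
  rw [Nat.cast_sub hkn] at h
  have hd : (0:ℝ) ≤ n - k := by
    have : (k:ℝ) ≤ n := by exact_mod_cast hkn
    linarith
  have hc : (k * γ + 1) / ((n + 1) * γ + 1) = (1 / q) / (n - k + 1 / q + 1) := by
    rw [hq]; 
    have : (0:ℝ) < (n - k) + 1 / (γ / (1 + k * γ)) + 1 := by positivity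
    rw [div_eq_div_iff (by positivity) this.ne']
    field_simp
    ring
  rw [hP, hc]
  set c := (1 / q) / (n - k + 1 / q + 1) with hcdef
  have hD : (0:ℝ) < n - k + 1 / q + 1 := by positivity
  have hc0 : 0 ≤ c := by positivity
  have h1 : c * s ^ q ≤ r ^ q := by
    have e : (1 / q + 1) = (1 + q) * (1 / q) := by field_simp
    rw [e] at h
    have h2 : (1 + q) * (1 / q * s ^ q) ≤ (1 + q) * ((n - k + 1 / q + 1) * r ^ q) := by
      linarith
    have h3 := le_of_mul_le_mul_left h2 (by positivity)
    rw [hcdef, div_mul_eq_mul_div, div_le_iff₀ hD]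
    linarith
  have h2 := Real.rpow_le_rpow (by positivity) h1 (z := 1 / q) (by positivity)
  rw [Real.mul_rpow hc0 (by positivity), ← Real.rpow_mul hs, ← Real.rpow_mul hr,
    mul_one_div_cancel hq0.ne', Real.rpow_one, Real.rpow_one] at h2
  exact h2

theorem grunbaum_k_dim_sections
    (n k : ℕ) (hk : 1 ≤ k) (hkn : k ≤ n)
    (E : Submodule ℝ (EuclideanSpace ℝ (Fin n))) (hE : Module.finrank ℝ E = k)
    (θ : EuclideanSpace ℝ (Fin n)) (hθE : θ ∈ E) (hθ : ‖θ‖ = 1)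
    (γ : ℝ) (hγ : 0 < γ)
    (f : EuclideanSpace ℝ (Fin n) → ℝ)
    (hf_nonneg : ∀ x, 0 ≤ f x)
    (hf_concave : ∀ x y : EuclideanSpace ℝ (Fin n), f x ≠ 0 → f y ≠ 0 →
      ∀ l : ℝ, 0 ≤ l → l ≤ 1 →
        (l * f x ^ γ + (1 - l) * f y ^ γ) ^ (1 / γ) ≤ f (l • x + (1 - l) • y))
    (hf_int : Integrable f)
    (hf_pos : 0 < ∫ x, f x)
    (hf_cent_int : Integrable (fun x => f x • x))
    (hf_cent : (∫ x, f x • x) = (0 : EuclideanSpace ℝ (Fin n))) :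
    ((k * γ + 1) / ((n + 1) * γ + 1)) ^ ((k * γ + 1) / γ) *
        ∫ x in (E : Set (EuclideanSpace ℝ (Fin n))), f x ∂μH[(k : ℝ)] ≤
      ∫ x in (E : Set (EuclideanSpace ℝ (Fin n))) ∩ {x | 0 ≤ ⟪x, θ⟫}, f x ∂μH[(k : ℝ)] := by
  by_cases hint : IntegrableOn f (E : Set (EuclideanSpace ℝ (Fin n))) μH[(k : ℝ)]
  swap
  · rw [integral_undef hint, mul_zero]
    exact integral_nonneg hf_nonneg
  have hgc : GC γ (fun x => ENNReal.ofReal (f x)) := by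
    intro x y hx hy a b ha hb hab
    have hx' : f x ≠ 0 := fun h => hx (by simp [h])
    have hy' : f y ≠ 0 := fun h => hy (by simp [h])
    obtain rfl : b = 1 - a := by linarith
    have h := hf_concave x y hx' hy' a ha.le (by linarith)
    have hx0 := Real.rpow_nonneg (hf_nonneg x) γ
    have hy0 := Real.rpow_nonneg (hf_nonneg y) γ
    have h2 := Real.rpow_le_rpow (by positivity) h hγ.le
    rw [← Real.rpow_mul (by positivity), one_div_mul_cancel hγ.ne', Real.rpow_one] at h2
    rw [ENNReal.ofReal_rpow_of_nonneg (hf_nonneg _) hγ.le,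
      ENNReal.ofReal_rpow_of_nonneg (hf_nonneg _) hγ.le,
      ENNReal.ofReal_rpow_of_nonneg (hf_nonneg _) hγ.le, ← ENNReal.ofReal_mul ha.le,
      ← ENNReal.ofReal_mul hb.le, ← ENNReal.ofReal_add (by positivity) (by positivity)]
    exact ENNReal.ofReal_le_ofReal h2
  have hHaar : (μH[(k : ℝ)] : Measure E).IsAddHaarMeasure := by
    rw [← hE]; infer_instance
  have hd : Module.finrank ℝ (Eᗮ : Submodule ℝ (EuclideanSpace ℝ (Fin n))) = n - k := by
    have := Submodule.finrank_add_finrank_orthogonal E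
    rw [hE, finrank_euclideanSpace_fin] at this
    omega
  have hmap : Measure.map (Subtype.val : E → EuclideanSpace ℝ (Fin n)) μH[(k : ℝ)] =
      μH[(k : ℝ)].restrict (E : Set (EuclideanSpace ℝ (Fin n))) := by
    have := (isometry_subtype_coe (s := (E : Set (EuclideanSpace ℝ (Fin n))))).map_hausdorffMeasure
      (d := (k : ℝ)) (Or.inl (by positivity))
    rw [Subtype.range_coe] at this
    exact this
  have hemb : MeasurableEmbedding (Subtype.val : E → EuclideanSpace ℝ (Fin n)) :=
    MeasurableEmbedding.subtype_coe (Submodule.closed_of_finiteDimensional E).measurableSet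
  have hH : MeasurableSet {x : EuclideanSpace ℝ (Fin n) | 0 ≤ ⟪x, θ⟫} :=
    measurableSet_le measurable_const (by fun_prop)
  have hmapH : μH[(k : ℝ)].restrict ((E : Set (EuclideanSpace ℝ (Fin n))) ∩ {x | 0 ≤ ⟪x, θ⟫}) =
      Measure.map (Subtype.val : E → EuclideanSpace ℝ (Fin n))
        ((μH[(k : ℝ)] : Measure E).restrict {z : E | 0 ≤ ⟪(z : EuclideanSpace ℝ (Fin n)), θ⟫}) := by
    rw [inter_comm, ← Measure.restrict_restrict hH, ← hmap, hemb.restrict_map]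
    rfl
  have hintH : IntegrableOn f ((E : Set (EuclideanSpace ℝ (Fin n))) ∩ {x | 0 ≤ ⟪x, θ⟫})
      μH[(k : ℝ)] := hint.mono_set inter_subset_left
  have hSt : ∫⁻ z : E, ENNReal.ofReal (f z) ∂μH[(k : ℝ)] ≠ ∞ := by
    rw [← hemb.lintegral_map (fun x => ENNReal.ofReal (f x)), hmap]
    exact (hasFiniteIntegral_iff_ofReal (Filter.Eventually.of_forall hf_nonneg)).1 hint.2 |>.ne
  have hRt : ∫⁻ z : E in {z : E | 0 ≤ ⟪(z : EuclideanSpace ℝ (Fin n)), θ⟫},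
      ENNReal.ofReal (f z) ∂μH[(k : ℝ)] ≠ ∞ :=
    ne_top_of_le_ne_top hSt (setLIntegral_le_lintegral _ _)
  have hq0 : 0 < γ / (1 + k * γ) := by positivity
  have key := core volume E (μH[(k : ℝ)] : Measure E) hE hd hθE
    (by rintro rfl; simp at hθ) hγ hf_nonneg hgc hf_int hf_pos hf_cent_int hf_cent rfl hSt
  rw [integral_eq_lintegral_of_nonneg_ae (Filter.Eventually.of_forall hf_nonneg) hint.1,
    integral_eq_lintegral_of_nonneg_ae (Filter.Eventually.of_forall hf_nonneg) hintH.1,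
    hmapH, ← hmap, hemb.lintegral_map, hemb.lintegral_map]
  refine final_arith hkn hγ rfl ENNReal.toReal_nonneg ENNReal.toReal_nonneg ?_
  have key2 := ENNReal.toReal_mono (ENNReal.mul_ne_top (by simp) (ENNReal.mul_ne_top (by simp)
    (ENNReal.rpow_ne_top_of_nonneg hq0.le hRt))) key
  rw [ENNReal.toReal_mul, ENNReal.toReal_mul, ENNReal.toReal_mul, ENNReal.toReal_ofReal (by positivity),
    ENNReal.toReal_ofReal (by positivity), ENNReal.toReal_ofReal (by positivity),
    ← ENNReal.toReal_rpow, ← ENNReal.toReal_rpow] at key2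
  exact key2
end

section
/- Fix a k-dimensional subspace E of ℝ^n (1 ≤ k ≤ n) and θ ∈ E ∩ S^{n-1}. Let K be a convex body in ℝ^n whose centroid g(K) lies in E ∩ θ^⊥ (in particular this holds when g(K) is at the origin). Then vol_k(K ∩ E ∩ θ^+) ≥ (k/(n+1))^k · vol_k(K ∩ E). -/
open MeasureTheory Set
open scoped RealInnerProductSpace

set_option linter.unusedSectionVars false

namespace GrunbaumAux
open scoped ENNReal Pointwise

lemma bm_one_compact {A B C : Set ℝ} (hA : IsCompact A) (hB : IsCompact B)
    (hAn : A.Nonempty) (hBn : B.Nonempty) {a b : ℝ} (ha : 0 < a) (hb : 0 < b)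
    (hC : ∀ x ∈ A, ∀ y ∈ B, a * x + b * y ∈ C) :
    ENNReal.ofReal a * volume A + ENNReal.ofReal b * volume B ≤ volume C := by
  set x1 := sSup A
  set y0 := sInf B
  have hx1 : x1 ∈ A := hA.sSup_mem hAn
  have hy0 : y0 ∈ B := hB.sInf_mem hBn
  set p := a * x1 + b * y0 with hp
  have e1 : volume ((fun x => x + b * y0) '' (a • A)) = ENNReal.ofReal a * volume A := by
    rw [image_add_right, measure_preimage_add_right, Measure.addHaar_smul]
    simp [abs_of_pos ha]
  have e2 : volume ((fun x => x + a * x1) '' (b • B)) = ENNReal.ofReal b * volume B := by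
    rw [image_add_right, measure_preimage_add_right, Measure.addHaar_smul]
    simp [abs_of_pos hb]
  have s1 : (fun x => x + b * y0) '' (a • A) ⊆ C ∩ Iic p := by
    rintro _ ⟨_, ⟨x, hx, rfl⟩, rfl⟩
    refine ⟨hC x hx y0 hy0, ?_⟩
    have : x ≤ x1 := le_csSup hA.bddAbove hx
    simp only [smul_eq_mul, mem_Iic, hp]
    have := mul_le_mul_of_nonneg_left this ha.le
    linarith
  have s2 : (fun x => x + a * x1) '' (b • B) ⊆ (C \ Iic p) ∪ {p} := by
    rintro _ ⟨_, ⟨y, hy, rfl⟩, rfl⟩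
    have h1 : y0 ≤ y := csInf_le hB.bddBelow hy
    have := mul_le_mul_of_nonneg_left h1 hb.le
    have h2 := hC x1 hx1 y hy
    simp only [smul_eq_mul, mem_union, mem_sdiff, mem_Iic, mem_singleton_iff, hp]
    by_cases h : b * y = b * y0
    · right; rw [h]; ring
    · left
      refine ⟨by rwa [add_comm], ?_⟩
      have : b * y0 < b * y := lt_of_le_of_ne this (Ne.symm h)
      linarith
  rw [← e1, ← e2, ← measure_inter_add_sdiff C (measurableSet_Iic (a := p))]
  refine add_le_add (measure_mono s1) ((measure_mono s2).trans ?_)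
  refine (measure_union_le _ _).trans ?_
  simp

lemma bm_one {A B C : Set ℝ} (hA : MeasurableSet A) (hB : MeasurableSet B)
    (hAn : A.Nonempty) (hBn : B.Nonempty) {a b : ℝ} (ha : 0 < a) (hb : 0 < b)
    (hC : ∀ x ∈ A, ∀ y ∈ B, a * x + b * y ∈ C) :
    ENNReal.ofReal a * volume A + ENNReal.ofReal b * volume B ≤ volume C := by
  obtain ⟨x0, hx0⟩ := hAn
  obtain ⟨y0, hy0⟩ := hBn
  have hreg : ∀ S : Set ℝ, MeasurableSet S →
      volume S = ⨆ K : {K : Set ℝ // K ⊆ S ∧ IsCompact K}, volume K.1 := by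
    intro S hS
    rw [hS.measure_eq_iSup_isCompact, iSup_subtype]
    simp only [iSup_and]
  have hne : ∀ S : Set ℝ, Nonempty {K : Set ℝ // K ⊆ S ∧ IsCompact K} :=
    fun S => ⟨⟨∅, empty_subset _, isCompact_empty⟩⟩
  have := hne A
  have := hne B
  rw [hreg A hA, hreg B hB]
  simp only [ENNReal.mul_iSup]
  refine ENNReal.iSup_add_iSup_le fun ⟨K, hK, hKc⟩ ⟨L, hL, hLc⟩ => ?_
  refine le_trans ?_ (bm_one_compact (C := C) (hKc.union (isCompact_singleton (x := x0)))
    (hLc.union (isCompact_singleton (x := y0))) ⟨x0, by simp⟩ ⟨y0, by simp⟩ ha hb ?_)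
  · gcongr <;> simp
  · intro x hx y hy
    refine hC x ?_ y ?_
    · rcases hx with hx | rfl
      exacts [hK hx, hx0]
    · rcases hy with hx | rfl
      exacts [hL hx, hy0]

lemma layer {f : ℝ → ℝ≥0∞} (hf : Measurable f) (h1 : ∀ x, f x ≤ 1) :
    ∫⁻ x, f x = ∫⁻ t in Ioo (0:ℝ) 1, volume {x | ENNReal.ofReal t < f x} := by
  have h2 : ∀ x, f x ≠ ∞ := fun x => ((h1 x).trans_lt ENNReal.one_lt_top).ne
  have : ∫⁻ x, f x = ∫⁻ x, ENNReal.ofReal ((f x).toReal) := by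
    simp [ENNReal.ofReal_toReal (h2 _)]
  rw [this, lintegral_eq_lintegral_meas_lt _ (by filter_upwards with x using by simp)
    hf.ennreal_toReal.aemeasurable]
  have hU : Ioi (0:ℝ) = Ioo 0 1 ∪ Ici 1 := by
    rw [Ioo_union_Ici_eq_Ioi]; norm_num
  rw [hU, lintegral_union measurableSet_Ici]
  · have : ∫⁻ t in Ici (1:ℝ), volume {x | t < (f x).toReal} = 0 := by
      rw [setLIntegral_congr_fun (g := fun _ => 0) measurableSet_Ici]
      · simp
      · intro t ht
        have : {x | t < (f x).toReal} = ∅ := by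
          ext x
          simp only [mem_ofPred_eq, mem_empty_iff_false, iff_false, not_lt]
          refine le_trans ?_ ht
          have := ENNReal.toReal_mono ENNReal.one_ne_top (h1 x)
          simpa using this
        simp only [this, measure_empty]
    rw [this, add_zero]
    refine setLIntegral_congr_fun measurableSet_Ioo ?_
    intro t ht
    simp only
    congr 1
    ext x
    simp only [mem_ofPred_eq]
    rw [ENNReal.ofReal_lt_iff_lt_toReal ht.1.le (h2 x)]
  · rw [Set.disjoint_left]
    intro x hx hx'
    exact absurd hx.2 (not_lt.2 hx')

lemma pl_one_norm {f g h : ℝ → ℝ≥0∞} (hf : Measurable f) (hg : Measurable g) (hh : Measurable h)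
    {a b : ℝ} (ha : 0 < a) (hb : 0 < b) (hab : a + b = 1)
    (H : ∀ x y, f x ^ a * g y ^ b ≤ h (a * x + b * y))
    (f1 : ∀ x, f x ≤ 1) (g1 : ∀ x, g x ≤ 1)
    (f2 : ∀ t < 1, ∃ x, t < f x) (g2 : ∀ t < 1, ∃ x, t < g x) :
    ENNReal.ofReal a * (∫⁻ x, f x) + ENNReal.ofReal b * (∫⁻ x, g x) ≤ ∫⁻ x, h x := by
  have hle : ∫⁻ x, min (h x) 1 ≤ ∫⁻ x, h x := lintegral_mono fun x => min_le_left _ _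
  refine le_trans ?_ hle
  have hhm : Measurable fun x => min (h x) 1 := hh.min measurable_const
  rw [layer hf f1, layer hg g1, layer hhm (fun x => min_le_right _ _)]
  have m1 : ∀ u : ℝ → ℝ≥0∞, Measurable fun t : ℝ => volume {x | ENNReal.ofReal t < u x} := by
    intro u
    refine Antitone.measurable ?_
    intro s t hst
    refine measure_mono fun x hx => ?_
    exact lt_of_le_of_lt (ENNReal.ofReal_le_ofReal hst) hx
  rw [← lintegral_const_mul _ (m1 f), ← lintegral_const_mul _ (m1 g),
    ← lintegral_add_left ((m1 f).const_mul _)]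
  refine setLIntegral_mono (m1 _) ?_
  intro t ht
  have ht1 : ENNReal.ofReal t < 1 := by
    rw [← ENNReal.ofReal_one]; exact (ENNReal.ofReal_lt_ofReal_iff one_pos).2 ht.2
  refine bm_one (measurableSet_lt measurable_const hf) (measurableSet_lt measurable_const hg)
    (f2 _ ht1) (g2 _ ht1) ha hb ?_
  intro x hx y hy
  simp only [mem_ofPred_eq] at hx hy ⊢
  refine lt_min (lt_of_lt_of_le ?_ (H x y)) ht1
  have : ENNReal.ofReal t = ENNReal.ofReal t ^ a * ENNReal.ofReal t ^ b := by
    rw [← ENNReal.rpow_add _ _ (by simpa using ht.1) (by simp), hab, ENNReal.rpow_one]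
  rw [this]
  exact ENNReal.mul_lt_mul (ENNReal.rpow_lt_rpow hx ha) (ENNReal.rpow_lt_rpow hy hb)

lemma ennreal_amgm {a b : ℝ} (ha : 0 < a) (hb : 0 < b) (hab : a + b = 1) (x y : ℝ≥0∞) :
    x ^ a * y ^ b ≤ ENNReal.ofReal a * x + ENNReal.ofReal b * y := by
  by_cases hx : x = ∞
  · simp [hx, ha]
  by_cases hy : y = ∞
  · simp [hy, hb]
  lift x to NNReal using hx
  lift y to NNReal using hy
  have := Real.geom_mean_le_arith_mean2_weighted ha.le hb.le x.coe_nonneg y.coe_nonneg hab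
  have h2 := ENNReal.ofReal_le_ofReal this
  rw [ENNReal.ofReal_add (by positivity) (by positivity), ENNReal.ofReal_mul (by positivity),
    ENNReal.ofReal_mul ha.le, ENNReal.ofReal_mul hb.le,
    ← ENNReal.ofReal_rpow_of_nonneg (by positivity) ha.le,
    ← ENNReal.ofReal_rpow_of_nonneg (by positivity) hb.le] at h2
  simpa using h2

lemma pl_one_bdd {f g h : ℝ → ℝ≥0∞} (hf : Measurable f) (hg : Measurable g) (hh : Measurable h)
    {a b : ℝ} (ha : 0 < a) (hb : 0 < b) (hab : a + b = 1)
    (H : ∀ x y, f x ^ a * g y ^ b ≤ h (a * x + b * y))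
    {N : ℝ≥0∞} (hN : N ≠ ∞) (f1 : ∀ x, f x ≤ N) (g1 : ∀ x, g x ≤ N) :
    (∫⁻ x, f x) ^ a * (∫⁻ x, g x) ^ b ≤ ∫⁻ x, h x := by
  set F := ⨆ x, f x with hF
  set G := ⨆ x, g x with hG
  have hFt : F ≠ ∞ := ((iSup_le f1).trans_lt hN.lt_top).ne
  have hGt : G ≠ ∞ := ((iSup_le g1).trans_lt hN.lt_top).ne
  by_cases hF0 : F = 0
  · have : ∀ x, f x = 0 := by simpa [hF] using hF0
    simp [this, ha]
  by_cases hG0 : G = 0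
  · have : ∀ x, g x = 0 := by simpa [hG] using hG0
    simp [this, hb]
  have key := pl_one_norm (f := fun x => F⁻¹ * f x) (g := fun x => G⁻¹ * g x)
    (h := fun x => (F⁻¹ ^ a * G⁻¹ ^ b) * h x) (hf.const_mul _) (hg.const_mul _) (hh.const_mul _)
    ha hb hab ?_ ?_ ?_ ?_ ?_
  · rw [lintegral_const_mul _ hf, lintegral_const_mul _ hg, lintegral_const_mul _ hh] at key
    have k2 := (ennreal_amgm ha hb hab _ _).trans key
    rw [ENNReal.mul_rpow_of_nonneg _ _ ha.le, ENNReal.mul_rpow_of_nonneg _ _ hb.le,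
      mul_mul_mul_comm] at k2
    refine (ENNReal.mul_le_mul_iff_right ?_ ?_).1 k2
    · simp [ha.le, hb.le, hFt, hGt, ENNReal.rpow_eq_zero_iff]
    · refine ENNReal.mul_ne_top ?_ ?_ <;>
        refine ENNReal.rpow_ne_top_of_nonneg (by positivity) (by simpa)
  · intro x y
    rw [ENNReal.mul_rpow_of_nonneg _ _ ha.le, ENNReal.mul_rpow_of_nonneg _ _ hb.le,
      mul_mul_mul_comm]
    exact mul_le_mul_right (H x y) _
  · intro x
    rw [← ENNReal.inv_mul_cancel hF0 hFt]
    exact mul_le_mul_right (le_iSup f x) _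
  · intro x
    rw [← ENNReal.inv_mul_cancel hG0 hGt]
    exact mul_le_mul_right (le_iSup g x) _
  · intro t ht
    have : F * t < F := by
      conv_rhs => rw [← mul_one F]
      exact (ENNReal.mul_lt_mul_iff_right hF0 hFt).2 ht
    obtain ⟨x, hx⟩ := lt_iSup_iff.1 this
    refine ⟨x, ?_⟩
    rw [← ENNReal.mul_lt_mul_iff_right hF0 hFt, ← mul_assoc, ENNReal.mul_inv_cancel hF0 hFt, one_mul]
    exact hx
  · intro t ht
    have : G * t < G := by
      conv_rhs => rw [← mul_one G]
      exact (ENNReal.mul_lt_mul_iff_right hG0 hGt).2 ht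
    obtain ⟨x, hx⟩ := lt_iSup_iff.1 this
    refine ⟨x, ?_⟩
    rw [← ENNReal.mul_lt_mul_iff_right hG0 hGt, ← mul_assoc, ENNReal.mul_inv_cancel hG0 hGt, one_mul]
    exact hx

lemma lintegral_trunc {f : ℝ → ℝ≥0∞} (hf : Measurable f) :
    Filter.Tendsto (fun N : ℕ => ∫⁻ x, min (f x) N) Filter.atTop (nhds (∫⁻ x, f x)) := by
  refine lintegral_tendsto_of_tendsto_of_monotone (fun n => (hf.min measurable_const).aemeasurable)
    ?_ ?_
  · filter_upwards with x
    intro m n hmn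
    exact min_le_min le_rfl (by exact_mod_cast hmn)
  · filter_upwards with x
    have := (tendsto_const_nhds (x := f x)).min ENNReal.tendsto_nat_nhds_top
    simpa using this

lemma pl_one {f g h : ℝ → ℝ≥0∞} (hf : Measurable f) (hg : Measurable g) (hh : Measurable h)
    {a b : ℝ} (ha : 0 < a) (hb : 0 < b) (hab : a + b = 1)
    (H : ∀ x y, f x ^ a * g y ^ b ≤ h (a * x + b * y)) :
    (∫⁻ x, f x) ^ a * (∫⁻ x, g x) ^ b ≤ ∫⁻ x, h x := by
  by_cases hf0 : ∫⁻ x, f x = 0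
  · simp [hf0, ha]
  by_cases hg0 : ∫⁻ x, g x = 0
  · simp [hg0, hb]
  have t1 := ((ENNReal.continuous_rpow_const (y := a)).tendsto _).comp (lintegral_trunc hf)
  have t2 := ((ENNReal.continuous_rpow_const (y := b)).tendsto _).comp (lintegral_trunc hg)
  have t3 := ENNReal.Tendsto.mul t1 (Or.inl (by simp [hf0, ha.le, ENNReal.rpow_eq_zero_iff, ha, not_lt.2 ha.le]))
    t2 (Or.inl (by simp [hg0, hb.le, ENNReal.rpow_eq_zero_iff, hb, not_lt.2 hb.le]))
  refine le_of_tendsto' t3 fun N => ?_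
  refine pl_one_bdd (hf.min measurable_const) (hg.min measurable_const) hh ha hb hab ?_
    (N := N) (by simp) (fun x => min_le_right _ _) (fun x => min_le_right _ _)
  intro x y
  refine le_trans ?_ (H x y)
  gcongr <;> exact min_le_left _ _

lemma pl_pi (n : ℕ) {f g h : (Fin n → ℝ) → ℝ≥0∞} (hf : Measurable f) (hg : Measurable g)
    (hh : Measurable h) {a b : ℝ} (ha : 0 < a) (hb : 0 < b) (hab : a + b = 1)
    (H : ∀ x y, f x ^ a * g y ^ b ≤ h (a • x + b • y)) :
    (∫⁻ x, f x) ^ a * (∫⁻ x, g x) ^ b ≤ ∫⁻ x, h x := by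
  induction n with
  | zero =>
    have hv : (volume : Measure (Fin 0 → ℝ)) univ = 1 := by
      rw [← pi_univ univ, volume_pi_pi]; simp
    have hi : ∀ u : (Fin 0 → ℝ) → ℝ≥0∞, ∫⁻ x, u x = u default := by
      intro u
      rw [lintegral_unique, hv, mul_one]
      exact congrArg u (Subsingleton.elim _ _)
    rw [hi, hi, hi]
    have h0 := H default default
    rwa [Subsingleton.elim (a • (default : Fin 0 → ℝ) + b • default) default] at h0
  | succ n ih =>
    set e := MeasurableEquiv.piFinSuccAbove (fun _ : Fin (n+1) => ℝ) 0
    have he := (volume_preserving_piFinSuccAbove (fun _ : Fin (n+1) => ℝ) 0).symm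
    have key : ∀ u : (Fin (n+1) → ℝ) → ℝ≥0∞, Measurable u →
        ∫⁻ x, u x = ∫⁻ s : ℝ, ∫⁻ y : Fin n → ℝ, u (e.symm (s, y)) := by
      intro u hu
      rw [← he.lintegral_comp hu, Measure.volume_eq_prod, lintegral_prod]
      exact (hu.comp e.symm.measurable).aemeasurable
    have hm : ∀ u : (Fin (n+1) → ℝ) → ℝ≥0∞, Measurable u →
        Measurable fun s : ℝ => ∫⁻ y : Fin n → ℝ, u (e.symm (s, y)) := by
      intro u hu
      exact Measurable.lintegral_prod_right' (f := fun p => u (e.symm p)) (hu.comp e.symm.measurable)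
    rw [key f hf, key g hg, key h hh]
    refine pl_one (hm f hf) (hm g hg) (hm h hh) ha hb hab ?_
    intro s t
    refine ih (hf.comp (e.symm.measurable.comp measurable_prodMk_left))
      (hg.comp (e.symm.measurable.comp measurable_prodMk_left))
      (hh.comp (e.symm.measurable.comp measurable_prodMk_left)) ?_
    intro x y
    refine (H _ _).trans (le_of_eq ?_)
    congr 1
    ext i
    refine Fin.cases ?_ (fun j => ?_) i <;> simp [e, MeasurableEquiv.piFinSuccAbove]

end GrunbaumAux

namespace GrunbaumAux
open scoped ENNReal Pointwise

lemma bm_pi (n : ℕ) {A B C : Set (Fin n → ℝ)} (hA : MeasurableSet A) (hB : MeasurableSet B)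
    (hCm : MeasurableSet C) {a b : ℝ} (ha : 0 < a) (hb : 0 < b) (hab : a + b = 1)
    (hC : ∀ x ∈ A, ∀ y ∈ B, a • x + b • y ∈ C) :
    volume A ^ a * volume B ^ b ≤ volume C := by
  have := pl_pi n (f := A.indicator 1) (g := B.indicator 1) (h := C.indicator 1)
    (measurable_one.indicator hA) (measurable_one.indicator hB) (measurable_one.indicator hCm)
    ha hb hab ?_
  · simpa [lintegral_indicator_one, hA, hB, hCm] using this
  · intro x y
    by_cases hx : x ∈ A
    · by_cases hy : y ∈ B
      · simp [hx, hy, hC x hx y hy]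
      · simp [hy, hb]
    · simp [hx, ha]

section
variable {E : Type*} [NormedAddCommGroup E] [NormedSpace ℝ E] [FiniteDimensional ℝ E]
  [MeasurableSpace E] [BorelSpace E] (μ : Measure E) [μ.IsAddHaarMeasure]

lemma bm_mul {A B C : Set E} (hA : MeasurableSet A) (hB : MeasurableSet B)
    (hCm : MeasurableSet C) {a b : ℝ} (ha : 0 < a) (hb : 0 < b) (hab : a + b = 1)
    (hC : ∀ x ∈ A, ∀ y ∈ B, a • x + b • y ∈ C) :
    μ A ^ a * μ B ^ b ≤ μ C := by
  let e : (Fin (Module.finrank ℝ E) → ℝ) ≃L[ℝ] E :=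
    ContinuousLinearEquiv.ofFinrankEq (by simp)
  have hm : Measurable e := e.continuous.measurable
  have : (Measure.map e volume).IsAddHaarMeasure := e.isAddHaarMeasure_map volume
  have hμ := Measure.isAddLeftInvariant_eq_smul μ (Measure.map e volume)
  set c := μ.addHaarScalarFactor (Measure.map e volume)
  have key : ∀ S : Set E, MeasurableSet S → μ S = c * volume (e ⁻¹' S) := by
    intro S hS
    rw [hμ, Measure.smul_apply, Measure.map_apply hm hS]; rfl
  rw [key A hA, key B hB, key C hCm, ENNReal.mul_rpow_of_nonneg _ _ ha.le,
    ENNReal.mul_rpow_of_nonneg _ _ hb.le, mul_mul_mul_comm, ← ENNReal.rpow_add_of_nonneg _ _ ha.le hb.le,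
    hab, ENNReal.rpow_one]
  refine mul_le_mul_right ?_ _
  refine bm_pi _ (hm hA) (hm hB) (hm hCm) ha hb hab ?_
  intro x hx y hy
  have := hC _ hx _ hy
  simpa using this

lemma bm_half {A C : Set E} {a b p : ℝ} (ha : 0 < a) (y : E)
    (hC : ∀ x ∈ A, a • x + b • y ∈ C)
    (hp : ENNReal.ofReal (p ^ Module.finrank ℝ E) ≤ μ A) :
    ENNReal.ofReal ((a * p) ^ Module.finrank ℝ E) ≤ μ C := by
  have : (fun x => x + b • y) '' (a • A) ⊆ C := by
    rintro _ ⟨_, ⟨x, hx, rfl⟩, rfl⟩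
    exact hC x hx
  refine le_trans ?_ (measure_mono this)
  rw [image_add_right, measure_preimage_add_right, Measure.addHaar_smul, mul_pow,
    ENNReal.ofReal_mul (by positivity), abs_of_nonneg (by positivity)]
  exact mul_le_mul_right hp _

lemma bm_add {A B C : Set E} (hA : MeasurableSet A) (hB : MeasurableSet B)
    (hCm : MeasurableSet C) (hAn : A.Nonempty) (hBn : B.Nonempty)
    {a b : ℝ} (ha : 0 < a) (hb : 0 < b)
    (hC : ∀ x ∈ A, ∀ y ∈ B, a • x + b • y ∈ C) {p q : ℝ} (hp : 0 ≤ p) (hq : 0 ≤ q)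
    (hpA : ENNReal.ofReal (p ^ Module.finrank ℝ E) ≤ μ A)
    (hqB : ENNReal.ofReal (q ^ Module.finrank ℝ E) ≤ μ B) :
    ENNReal.ofReal ((a * p + b * q) ^ Module.finrank ℝ E) ≤ μ C := by
  obtain ⟨x0, hx0⟩ := hAn
  obtain ⟨y0, hy0⟩ := hBn
  rcases hp.eq_or_lt with rfl | hp
  · have := bm_half μ (a := b) (b := a) hb x0 (fun y hy => by
      rw [add_comm]; exact hC x0 hx0 y hy) hqB
    simpa using this
  rcases hq.eq_or_lt with rfl | hq
  · have := bm_half μ (a := a) (b := b) ha y0 (fun y hy => hC y hy y0 hy0) hpA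
    simpa using this
  set k := Module.finrank ℝ E
  set s := a * p + b * q with hs
  have hs0 : 0 < s := by positivity
  have sm : ∀ (r : ℝ) (S : Set E), 0 < r → ENNReal.ofReal (r ^ k) ≤ μ S → 1 ≤ μ (r⁻¹ • S) := by
    intro r S hr h
    rw [Measure.addHaar_smul, abs_of_nonneg (by positivity)]
    refine le_trans ?_ (mul_le_mul_right h _)
    rw [← ENNReal.ofReal_mul (by positivity), ← mul_pow, inv_mul_cancel₀ hr.ne']
    simp
  have := bm_mul μ (A := p⁻¹ • A) (B := q⁻¹ • B) (C := s⁻¹ • C) (hA.const_smul₀ _)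
    (hB.const_smul₀ _) (hCm.const_smul₀ _) (a := a * p / s) (b := b * q / s) (by positivity)
    (by positivity) (by rw [← add_div, ← hs, div_self hs0.ne']) ?_
  · have h1 : 1 ≤ μ (s⁻¹ • C) := by
      refine le_trans ?_ this
      rw [← one_mul (1 : ℝ≥0∞)]
      exact mul_le_mul' (ENNReal.one_le_rpow (sm p A hp hpA) (by positivity))
        (ENNReal.one_le_rpow (sm q B hq hqB) (by positivity))
    rw [Measure.addHaar_smul, abs_of_nonneg (by positivity)] at h1
    calc ENNReal.ofReal (s ^ k) = ENNReal.ofReal (s ^ k) * 1 := by simp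
      _ ≤ ENNReal.ofReal (s ^ k) * (ENNReal.ofReal (s⁻¹ ^ k) * μ C) := mul_le_mul_right h1 _
      _ = μ C := by
        rw [← mul_assoc, ← ENNReal.ofReal_mul (by positivity), ← mul_pow, mul_inv_cancel₀ hs0.ne']
        simp
  · rintro _ ⟨x, hx, rfl⟩ _ ⟨y, hy, rfl⟩
    refine ⟨_, hC x hx y hy, ?_⟩
    simp only [smul_smul, smul_add]
    congr 2 <;> field_simp

/-- Supergradient of a concave function. -/
lemma exists_supergradient {D : Set E} {φ : E → ℝ} (hφ : ConcaveOn ℝ D φ) (h0 : (0 : E) ∈ interior D) :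
    ∃ A : E →L[ℝ] ℝ, ∀ z ∈ D, φ z ≤ φ 0 + A z := by
  have hc := hφ.continuousOn_interior
  have hφi : ConcaveOn ℝ (interior D) φ := hφ.subset interior_subset hφ.1.interior
  have hconv := hφi.convex_strict_hypograph
  have hopen : IsOpen {p : E × ℝ | p.1 ∈ interior D ∧ p.2 < φ p.1} := by
    have hcont : ContinuousOn (fun p : E × ℝ => φ p.1 - p.2) (Prod.fst ⁻¹' interior D) :=
      (hc.comp continuous_fst.continuousOn (fun p hp => hp)).sub continuous_snd.continuousOn
    have := hcont.isOpen_inter_preimage (isOpen_interior.preimage continuous_fst) (isOpen_Ioi (a := 0))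
    convert this using 1
    ext p
    simp
  obtain ⟨f, hf⟩ := geometric_hahn_banach_open_point (x := ((0 : E), φ 0)) hconv hopen (by simp)
  set c := f (0, 1) with hcdef
  set A0 : E →L[ℝ] ℝ := f.comp (ContinuousLinearMap.inl ℝ E ℝ) with hA0
  have hfe : ∀ z r, f (z, r) = A0 z + r * c := by
    intro z r
    have : ((z, r) : E × ℝ) = (z, 0) + r • (0, 1) := by simp
    rw [this, map_add, map_smul]
    simp [hA0, hcdef]
  have hcpos : 0 < c := by
    have := hf (0, φ 0 - 1) ⟨h0, by simp⟩
    rw [hfe, hfe] at this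
    linarith
  have hint : ∀ z ∈ interior D, φ z ≤ φ 0 + (-(c⁻¹) • A0) z := by
    intro z hz
    refine le_of_forall_lt fun r hr => ?_
    have := hf (z, r) ⟨hz, hr⟩
    rw [hfe, hfe] at this
    simp only [map_zero, zero_add] at this
    have h2 : r < φ 0 - c⁻¹ * A0 z := by
      have h3 : r * c < (φ 0 - c⁻¹ * A0 z) * c := by
        rw [sub_mul, mul_right_comm, inv_mul_cancel₀ hcpos.ne']; linarith
      exact lt_of_mul_lt_mul_right h3 hcpos.le
    simpa [sub_eq_add_neg] using h2
  refine ⟨-(c⁻¹) • A0, fun z hz => ?_⟩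
  have hz2 : (1/2 : ℝ) • z + (1/2 : ℝ) • (0 : E) ∈ interior D := by
    rw [add_comm]
    exact hφ.1.combo_interior_self_mem_interior h0 hz (by norm_num) (by norm_num) (by norm_num)
  have h1 := hint _ hz2
  have h2 := hφ.2 hz (interior_subset h0) (show (0:ℝ) ≤ 1/2 by norm_num)
    (show (0:ℝ) ≤ 1/2 by norm_num) (by norm_num)
  rw [smul_zero, add_zero] at h1 h2
  rw [map_smul] at h1
  simp only [smul_eq_mul] at h1 h2
  linarith

end
end GrunbaumAux

namespace GrunbaumAux
open scoped ENNReal Pointwise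

lemma add_pow_succ_ge {x y : ℝ} (hx : 0 ≤ x) (hy : 0 ≤ y) (k : ℕ) :
    x ^ (k+1) + (k+1) * (x ^ k * y) ≤ (x + y) ^ (k+1) := by
  induction k with
  | zero => simp
  | succ k ih =>
    have h1 := mul_le_mul_of_nonneg_left ih (add_nonneg hx hy)
    have h2 : 0 ≤ (k + 1) * (x ^ k * y ^ 2) := by positivity
    calc _ ≤ (x + y) * (x ^ (k+1) + (k+1) * (x ^ k * y)) := by
          push_cast
          have : (x + y) * (x ^ (k+1) + (k+1) * (x ^ k * y)) =
            x ^ (k+1+1) + (k+1+1) * (x ^ (k+1) * y) + (k + 1) * (x ^ k * y ^ 2) := by ring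
          linarith
      _ ≤ _ := by rw [pow_succ (x+y) (k+1), mul_comm ((x+y)^(k+1))]; exact h1

section
variable {E : Type*} [NormedAddCommGroup E] [NormedSpace ℝ E] [FiniteDimensional ℝ E]
  [MeasurableSpace E] [BorelSpace E] (μ : Measure E) [μ.IsAddHaarMeasure]

/-- `k`-th root of the volume -/
noncomputable def rt (S : Set E) : ℝ := (μ S).toReal ^ ((Module.finrank ℝ E : ℝ)⁻¹)

lemma rt_nonneg (S : Set E) : 0 ≤ rt μ S := by unfold rt; positivity

lemma rt_pow (hk : Module.finrank ℝ E ≠ 0) (S : Set E) :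
    rt μ S ^ Module.finrank ℝ E = (μ S).toReal := by
  unfold rt
  exact Real.rpow_inv_natCast_pow ENNReal.toReal_nonneg hk

lemma ofReal_rt_pow (hk : Module.finrank ℝ E ≠ 0) {S : Set E} (hS : IsCompact S) :
    ENNReal.ofReal (rt μ S ^ Module.finrank ℝ E) = μ S := by
  rw [rt_pow μ hk, ENNReal.ofReal_toReal hS.measure_lt_top.ne]

lemma le_rt (hk : Module.finrank ℝ E ≠ 0) {S : Set E} (hS : IsCompact S) {p : ℝ}
    (h : ENNReal.ofReal (p ^ Module.finrank ℝ E) ≤ μ S) : p ≤ rt μ S := by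
  rw [← ofReal_rt_pow μ hk hS, ENNReal.ofReal_le_ofReal_iff (pow_nonneg (rt_nonneg _ _) _)] at h
  exact le_of_pow_le_pow_left₀ hk (rt_nonneg _ _) h

lemma rt_mono {S T : Set E} (hT : IsCompact T) (h : S ⊆ T) : rt μ S ≤ rt μ T := by
  unfold rt
  have := ENNReal.toReal_mono hT.measure_lt_top.ne (measure_mono (μ := μ) h)
  gcongr

lemma concave_rt {G : Type*} [AddCommGroup G] [Module ℝ G] (hk : Module.finrank ℝ E ≠ 0)
    (S : G → Set E) (hcomp : ∀ z, IsCompact (S z))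
    (hconv : ∀ z w (a b : ℝ), 0 < a → 0 < b → a + b = 1 → ∀ x ∈ S z, ∀ y ∈ S w,
      a • x + b • y ∈ S (a • z + b • w)) :
    ConcaveOn ℝ {z | (S z).Nonempty} (fun z => rt μ (S z)) := by
  rw [concaveOn_iff_forall_pos]
  constructor
  · rw [convex_iff_forall_pos]
    rintro z ⟨x, hx⟩ w ⟨y, hy⟩ a b ha hb hab
    exact ⟨_, hconv z w a b ha hb hab x hx y hy⟩
  · intro z hz w hw a b ha hb hab
    refine le_rt μ hk (hcomp _) ?_
    exact bm_add μ (hcomp z).measurableSet (hcomp w).measurableSet (hcomp _).measurableSet hz hw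
      ha hb (hconv z w a b ha hb hab) (rt_nonneg _ _) (rt_nonneg _ _) (ofReal_rt_pow μ hk (hcomp _)).le
      (ofReal_rt_pow μ hk (hcomp _)).le

lemma fiber_bound (hk : Module.finrank ℝ E ≠ 0) {S : Set E} (hS : IsCompact S) {r : E → ℝ}
    (hr : Continuous r) (hr0 : ∀ x ∈ S, 0 ≤ r x)
    (H : ∀ ρ : ℝ, 0 ≤ ρ → μ (S ∩ {x | r x ≤ ρ}) ≤ ENNReal.ofReal (ρ ^ Module.finrank ℝ E)) :
    (Module.finrank ℝ E : ℝ) / (Module.finrank ℝ E + 1) * rt μ S ^ (Module.finrank ℝ E + 1)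
      ≤ ∫ x in S, r x ∂μ := by
  set k := Module.finrank ℝ E
  set u := rt μ S with hu
  have hu0 : 0 ≤ u := rt_nonneg _ _
  have hae : ∀ᵐ x ∂(μ.restrict S), 0 ≤ r x := by
    filter_upwards [ae_restrict_mem hS.measurableSet] with x hx using hr0 x hx
  have hint : IntegrableOn r S μ := hr.continuousOn.integrableOn_compact hS
  rw [← ENNReal.ofReal_le_ofReal_iff (integral_nonneg_of_ae hae),
    ofReal_integral_eq_lintegral_ofReal hint hae,
    lintegral_eq_lintegral_meas_lt _ hae hr.measurable.aemeasurable]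
  have hI : (k : ℝ) / (k + 1) * u ^ (k + 1) = ∫ t in Ioc 0 u, (u ^ k - t ^ k) := by
    rw [← intervalIntegral.integral_of_le hu0, intervalIntegral.integral_sub (by simp)
      ((continuous_pow k).intervalIntegrable _ _), integral_pow]
    simp
    field_simp
    ring
  rw [hI, ofReal_integral_eq_lintegral_ofReal]
  · refine le_trans ?_ (lintegral_mono_set (s := Ioc 0 u) (fun t ht => ht.1))
    refine setLIntegral_mono_ae' measurableSet_Ioc ?_
    filter_upwards with t ht
    rw [ENNReal.ofReal_sub _ (pow_nonneg ht.1.le _), tsub_le_iff_right, ofReal_rt_pow μ hk hS,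
      Measure.restrict_apply (measurableSet_lt measurable_const hr.measurable)]
    refine le_trans ?_ (add_le_add le_rfl (H t ht.1.le))
    refine le_trans (measure_mono ?_) (measure_union_le _ _)
    intro x hx
    rcases lt_or_ge t (r x) with h | h
    · left; exact ⟨h, hx⟩
    · right; exact ⟨hx, h⟩
  · refine Continuous.integrableOn_Ioc (by fun_prop)
  · filter_upwards [ae_restrict_mem measurableSet_Ioc] with t ht
    have := pow_le_pow_left₀ ht.1.le ht.2 k
    simpa using this

lemma scaling (k : ℕ) (hk : k ≠ 0) {u : E → ℝ} {u0 : ℝ} (hu : ∀ y, 0 ≤ u y) (hu0 : 0 ≤ u0)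
    (i1 : Integrable (fun y => u y ^ k) μ) (i2 : Integrable (fun y => u y ^ (k+1)) μ)
    (H : ∀ l : ℝ, 0 < l → l < 1 → ∀ y, 0 < u y → l * u y + (1 - l) * u0 ≤ u (l • y)) :
    (k + 1) * u0 * ∫ y, u y ^ k ∂μ ≤ (Module.finrank ℝ E + k + 1) * ∫ y, u y ^ (k+1) ∂μ := by
  set m := Module.finrank ℝ E
  set P := ∫ y, u y ^ k ∂μ
  set Q := ∫ y, u y ^ (k+1) ∂μ
  have hQ : 0 ≤ Q := integral_nonneg fun y => pow_nonneg (hu y) _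
  have step : ∀ l : ℝ, 0 < l → l < 1 → (k + 1) * u0 * P * l ^ (m + k) ≤ (m + k + 1) * Q := by
    intro l hl hl1
    have hpt : ∀ y, l ^ (k+1) * u y ^ (k+1) + ((k+1) * l ^ k * (1 - l) * u0) * u y ^ k
        ≤ u (l • y) ^ (k+1) := by
      intro y
      rcases (hu y).eq_or_lt with h | h
      · rw [← h]; simp [hk, hu]
      · have h1 := add_pow_succ_ge (mul_nonneg hl.le (hu y)) (mul_nonneg (sub_nonneg.2 hl1.le) hu0) k
        have h2 := pow_le_pow_left₀ (by have := mul_nonneg (sub_nonneg.2 hl1.le) hu0; positivity)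
          (H l hl hl1 y h) (k+1)
        refine le_trans (le_of_eq ?_) (h1.trans h2)
        rw [mul_pow, mul_pow]; ring
    have hs : Integrable (fun y => u (l • y) ^ (k+1)) μ :=
      (integrable_comp_smul_iff μ (fun y => u y ^ (k+1)) hl.ne').2 i2
    have h3 := integral_mono ((i2.const_mul (l ^ (k+1))).add (i1.const_mul _)) hs hpt
    rw [Measure.integral_comp_smul μ (fun y => u y ^ (k+1))] at h3
    simp only [Pi.add_apply] at h3
    rw [integral_add (i2.const_mul _) (i1.const_mul _), integral_const_mul,
      integral_const_mul, abs_of_nonneg (by positivity), smul_eq_mul] at h3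
    have h4 := mul_le_mul_of_nonneg_left h3 (show 0 ≤ l ^ m by positivity)
    rw [← mul_assoc (l ^ m) (l ^ m)⁻¹, mul_inv_cancel₀ (by positivity), one_mul] at h4
    change l ^ m * (l ^ (k+1) * Q + ((k+1) * l ^ k * (1 - l) * u0) * P) ≤ Q at h4
    have h5 := geom_sum_mul_neg l (m + k + 1)
    have h6 : ∑ i ∈ Finset.range (m + k + 1), l ^ i ≤ m + k + 1 := by
      refine (Finset.sum_le_card_nsmul _ _ 1 fun i _ => pow_le_one₀ hl.le hl1.le).trans ?_
      simp
    have h7 : (k + 1) * u0 * P * l ^ (m + k) * (1 - l) ≤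
        Q * (∑ i ∈ Finset.range (m + k + 1), l ^ i) * (1 - l) := by
      rw [mul_assoc Q, h5]
      have e1 : l ^ m * (l ^ (k+1) * Q + ((k+1) * l ^ k * (1 - l) * u0) * P) =
        l ^ (m + k + 1) * Q + (k + 1) * u0 * P * l ^ (m + k) * (1 - l) := by ring
      rw [e1] at h4
      linarith
    have h8 := le_of_mul_le_mul_right h7 (sub_pos.2 hl1)
    refine h8.trans ?_
    rw [mul_comm]
    exact mul_le_mul_of_nonneg_right h6 hQ
  have hlim : Filter.Tendsto (fun l : ℝ => (k + 1) * u0 * P * l ^ (m + k)) (nhdsWithin 1 (Iio 1))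
      (nhds ((k + 1) * u0 * P * 1 ^ (m + k))) := by
    refine Filter.Tendsto.mono_left (Continuous.tendsto ?_ 1) nhdsWithin_le_nhds
    fun_prop
  rw [one_pow, mul_one] at hlim
  refine le_of_tendsto hlim ?_
  filter_upwards [Ioo_mem_nhdsLT (show (0:ℝ) < 1 by norm_num)] with l hl using step l hl.1 hl.2

end
end GrunbaumAux

namespace GrunbaumAux
open scoped ENNReal Pointwise

section
variable {F E : Type*} [NormedAddCommGroup E] [NormedSpace ℝ E] [FiniteDimensional ℝ E]
  [MeasurableSpace E] [BorelSpace E] (μ : Measure E) [μ.IsAddHaarMeasure]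
  [NormedAddCommGroup F] [NormedSpace ℝ F] [FiniteDimensional ℝ F]
  [MeasurableSpace F] [BorelSpace F] (ν : Measure F) [ν.IsAddHaarMeasure]

lemma fubini {K : Set (F × E)} (hK : IsCompact K) {r : F × E → ℝ} (hr : Continuous r) :
    Integrable (fun y => ∫ x in Prod.mk y ⁻¹' K, r (y, x) ∂μ) ν ∧
    ∫ p in K, r p ∂(ν.prod μ) = ∫ y, ∫ x in Prod.mk y ⁻¹' K, r (y, x) ∂μ ∂ν := by
  have hi : Integrable (K.indicator r) (ν.prod μ) :=
    (integrable_indicator_iff hK.measurableSet).2 (hr.continuousOn.integrableOn_compact hK)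
  have he : ∀ y, ∫ x in Prod.mk y ⁻¹' K, r (y, x) ∂μ = ∫ x, K.indicator r (y, x) ∂μ := by
    intro y
    rw [← integral_indicator (measurable_prodMk_left hK.measurableSet)]
    rfl
  simp only [he]
  refine ⟨hi.integral_prod_left, ?_⟩
  rw [← integral_indicator hK.measurableSet, integral_prod _ hi]

lemma centroid_mem_interior {G : Type*} [NormedAddCommGroup G] [NormedSpace ℝ G]
    [FiniteDimensional ℝ G] [MeasurableSpace G] [BorelSpace G] (μ : Measure G)
    [μ.IsAddHaarMeasure] {K : Set G} (hc : Convex ℝ K) (hK : IsCompact K)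
    (hi : (interior K).Nonempty) : (⨍ x in K, x ∂μ) ∈ interior K := by
  have hint : IntegrableOn (fun x : G => x) K μ := continuous_id.continuousOn.integrableOn_compact hK
  have : IsFiniteMeasure (μ.restrict K) := ⟨by simpa using hK.measure_lt_top⟩
  obtain ⟨x, hx⟩ := hi
  obtain ⟨ε, hε, hball⟩ := Metric.nhds_basis_closedBall.mem_iff.1 (isOpen_interior.mem_nhds hx)
  have hsub : Metric.closedBall x ε ⊆ K := hball.trans interior_subset
  have hr : (μ.restrict K).restrict (Metric.closedBall x ε) = μ.restrict (Metric.closedBall x ε) :=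
    Measure.restrict_restrict_of_subset hsub
  have hpos : μ (Metric.closedBall x ε) ≠ 0 := (Metric.measure_closedBall_pos μ x hε).ne'
  refine Convex.average_mem_interior_of_set (t := Metric.closedBall x ε) hc ?_ ?_ hint ?_
  · rw [Measure.restrict_apply measurableSet_closedBall, inter_eq_left.2 hsub]
    exact hpos
  · exact ae_restrict_mem hK.measurableSet
  · rw [hr]
    refine hball ?_
    refine (convex_closedBall x ε).set_average_mem Metric.isClosed_closedBall hpos
      measure_closedBall_lt_top.ne (ae_restrict_mem measurableSet_closedBall) (hint.mono_set hsub)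

theorem main_abs (hk : Module.finrank ℝ E ≠ 0) {K : Set (F × E)} (hc : Convex ℝ K)
    (hK : IsCompact K) (hi : (interior K).Nonempty) (ℓ : E →L[ℝ] ℝ) {θ : E} (hθ : ℓ θ = 1)
    (h1 : ∫ p in K, p.1 ∂(ν.prod μ) = 0) (h2 : ∫ p in K, ℓ p.2 ∂(ν.prod μ) = 0) :
    (Module.finrank ℝ E : ℝ) / (Module.finrank ℝ F + Module.finrank ℝ E + 1) *
      rt μ (Prod.mk (0 : F) ⁻¹' K) ≤ rt μ (Prod.mk (0 : F) ⁻¹' K ∩ {x | 0 ≤ ℓ x}) := by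
  set k := Module.finrank ℝ E with hkdef
  set m := Module.finrank ℝ F with hmdef
  -- integrability
  have hcont : ∀ (f : F × E → ℝ), Continuous f → IntegrableOn f K (ν.prod μ) := fun f hf =>
    hf.continuousOn.integrableOn_compact hK
  have hcid : IntegrableOn (fun x : F × E => x) K (ν.prod μ) :=
    continuous_id.continuousOn.integrableOn_compact hK
  have hcf : IntegrableOn (fun x : F × E => x.1) K (ν.prod μ) :=
    continuous_fst.continuousOn.integrableOn_compact hK
  have hpos : 0 < (ν.prod μ).real K := by
    refine ENNReal.toReal_pos ?_ hK.measure_lt_top.ne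
    exact (Measure.measure_pos_of_nonempty_interior _ hi).ne'
  obtain ⟨g, hg0, hgl, hgK⟩ : ∃ g : F × E, g.1 = 0 ∧ ℓ g.2 = 0 ∧ g ∈ interior K := by
    refine ⟨⨍ x in K, x ∂(ν.prod μ), ?_, ?_, centroid_mem_interior _ hc hK hi⟩
    · rw [setAverage_eq, Prod.smul_fst]
      have := (ContinuousLinearMap.fst ℝ F E).integral_comp_comm
        hcid
      simp only [ContinuousLinearMap.coe_fst'] at this
      rw [← this, h1, smul_zero]
    · rw [setAverage_eq, Prod.smul_snd, map_smul]
      have := (ℓ.comp (ContinuousLinearMap.snd ℝ F E)).integral_comp_comm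
        hcid
      simp only [ContinuousLinearMap.comp_apply, ContinuousLinearMap.coe_snd'] at this
      rw [← this, h2, smul_zero]
  -- sections
  have hsec : ∀ y : F, IsCompact (Prod.mk y ⁻¹' K) := by
    intro y
    have : Prod.mk y ⁻¹' K = Prod.snd '' (K ∩ {p | p.1 = y}) := by
      ext x
      constructor
      · intro hx; exact ⟨(y, x), ⟨hx, rfl⟩, rfl⟩
      · rintro ⟨⟨y', x'⟩, ⟨hx, rfl⟩, rfl⟩; exact hx
    rw [this]
    exact (hK.inter_right (isClosed_eq continuous_fst continuous_const)).image continuous_snd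
  set S : ℝ × F → Set E := fun z => Prod.mk z.2 ⁻¹' K ∩ {x | z.1 ≤ ℓ x} with hS
  have hScomp : ∀ z, IsCompact (S z) := fun z =>
    (hsec z.2).inter_right (isClosed_le continuous_const ℓ.continuous)
  have hconc := concave_rt μ hk S hScomp (by
    rintro ⟨s, y⟩ ⟨t, z⟩ a b ha hb hab x ⟨hx, hx'⟩ x' ⟨hy, hy'⟩
    refine ⟨?_, ?_⟩
    · have := hc hx hy ha.le hb.le hab
      simpa using this
    · simp only [mem_ofPred_eq] at hx' hy' ⊢
      simp only [Prod.fst_add, Prod.smul_fst, smul_eq_mul, map_add, map_smul]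
      exact add_le_add (mul_le_mul_of_nonneg_left hx' ha.le) (mul_le_mul_of_nonneg_left hy' hb.le))
  have h0D : (0 : ℝ × F) ∈ interior {z | (S z).Nonempty} := by
    have hcm : Continuous fun z : ℝ × F => (z.2, g.2 + z.1 • θ) := by fun_prop
    refine mem_interior.2 ⟨_, ?_, isOpen_interior.preimage hcm (t := interior K), ?_⟩
    · intro z hz
      refine ⟨g.2 + z.1 • θ, interior_subset (s := K) hz, ?_⟩
      simp [hgl, hθ]
    · simp only [mem_preimage, Prod.snd_zero, Prod.fst_zero, zero_smul, add_zero]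
      rw [← hg0]; exact hgK
  obtain ⟨A, hA⟩ := exists_supergradient hconc h0D
  set w := rt μ (S 0) with hw
  set α := A (1, 0) with hα
  set β : F →L[ℝ] ℝ := A.comp (ContinuousLinearMap.inr ℝ ℝ F) with hβ
  have hAe : ∀ s y, A (s, y) = α * s + β y := by
    intro s y
    have : ((s, y) : ℝ × F) = s • (1, 0) + (0, y) := by simp
    rw [this, map_add, map_smul, smul_eq_mul, mul_comm]
    rfl
  have hgK0 : g.2 ∈ Prod.mk (0:F) ⁻¹' K := by
    simp only [mem_preimage]
    rw [← hg0]; exact interior_subset hgK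
  set u : F → ℝ := fun y => rt μ (Prod.mk y ⁻¹' K) with hu
  have hu0 : ∀ y, 0 ≤ u y := fun y => rt_nonneg _ _
  have hw0 : 0 ≤ w := rt_nonneg _ _
  suffices (k : ℝ) / (m + k + 1) * u 0 ≤ w by exact this
  have hα0 : α ≤ 0 := by
    have ha := hA (-1, 0) ⟨g.2, hgK0, by simp [hgl]⟩
    rw [hAe] at ha
    have hb : w ≤ rt μ (S (-1, 0)) := by
      refine rt_mono μ (hScomp _) ?_
      rintro x ⟨hx, hx'⟩
      refine ⟨hx, ?_⟩
      simp only [mem_ofPred_eq, Prod.fst_zero] at hx' ⊢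
      linarith
    simp only [map_zero] at ha
    linarith
  rcases hα0.eq_or_lt with hα0 | hα0
  ·
    obtain ⟨x0, hx0, hmin⟩ := (hsec 0).exists_isMinOn ⟨_, hgK0⟩ ℓ.continuous.continuousOn
    have ha := hA (ℓ x0, 0) ⟨x0, hx0, by simp⟩
    rw [hAe, hα0] at ha
    simp only [map_zero, zero_mul, add_zero] at ha
    have : S (ℓ x0, 0) = Prod.mk (0:F) ⁻¹' K := by
      refine inter_eq_left.2 fun x hx => hmin hx
    rw [this] at ha
    refine le_trans ?_ ha
    refine mul_le_of_le_one_left (hu0 0) ?_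
    rw [div_le_one (by positivity)]
    have : (0:ℝ) ≤ m := by positivity
    linarith
  -- main case
  set r : F × E → ℝ := fun p => w + α * ℓ p.2 + β p.1 with hr
  have hrc : Continuous r := by
    have := ℓ.continuous
    have := β.continuous
    fun_prop
  have hr0 : ∀ y x, (y, x) ∈ K → 0 ≤ r (y, x) := by
    intro y x hx
    have := hA (ℓ x, y) ⟨x, hx, by simp⟩
    rw [hAe] at this
    have h3 := rt_nonneg μ (S (ℓ x, y))
    simp only [hr]
    linarith
  have hfib : ∀ y, (k : ℝ) / (k + 1) * u y ^ (k + 1) ≤ ∫ x in Prod.mk y ⁻¹' K, r (y, x) ∂μ := by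
    intro y
    refine fiber_bound μ hk (hsec y) (r := fun x => r (y, x)) (by fun_prop) (fun x hx => hr0 y x hx) ?_
    intro ρ hρ
    set s := (ρ - w - β y) / α with hs
    have hαs : α * s = ρ - w - β y := mul_div_cancel₀ _ hα0.ne
    have hset : Prod.mk y ⁻¹' K ∩ {x | r (y, x) ≤ ρ} = S (s, y) := by
      ext x
      simp only [hS, mem_inter_iff, mem_ofPred_eq, and_congr_right_iff]
      intro _
      rw [← mul_le_mul_left_of_neg (b := s) (a := ℓ x) hα0, hαs]
      simp only [hr]
      constructor <;> intro h <;> linarith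
    rw [hset]
    rcases (S (s, y)).eq_empty_or_nonempty with he | he
    · rw [he]; simp
    · rw [← ofReal_rt_pow μ hk (hScomp (s, y))]
      refine ENNReal.ofReal_le_ofReal (pow_le_pow_left₀ (rt_nonneg _ _) ?_ _)
      have := hA (s, y) he
      rw [hAe, hαs] at this
      linarith
  -- integrability of powers of `u`
  have hum : Measurable u := by
    simp only [hu, rt]
    exact ((measurable_measure_prodMk_left hK.measurableSet).ennreal_toReal).pow_const _
  have hsupp : ∀ y, y ∉ Prod.fst '' K → u y = 0 := by
    intro y hy
    have : Prod.mk y ⁻¹' K = ∅ := by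
      ext x
      simp only [mem_preimage, mem_empty_iff_false, iff_false]
      intro hx; exact hy ⟨_, hx, rfl⟩
    have h3 := rt_pow μ hk (Prod.mk y ⁻¹' K)
    rw [this] at h3
    simp only [hu, this]
    exact (pow_eq_zero_iff hk).1 (by simpa using h3)
  have hbd : ∀ y, u y ≤ rt μ (Prod.snd '' K) := by
    intro y
    refine rt_mono μ (hK.image continuous_snd) ?_
    intro x hx
    exact ⟨_, hx, rfl⟩
  have hui : ∀ j : ℕ, j ≠ 0 → Integrable (fun y => u y ^ j) ν := by
    intro j hj
    have hcK : IsCompact (Prod.fst '' K) := hK.image continuous_fst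
    rw [← integrableOn_iff_integrable_of_support_subset (s := Prod.fst '' K)]
    · refine Measure.integrableOn_of_bounded (M := rt μ (Prod.snd '' K) ^ j) hcK.measure_lt_top.ne
        (hum.pow_const j).aestronglyMeasurable ?_
      filter_upwards with y
      rw [Real.norm_of_nonneg (pow_nonneg (hu0 y) _)]
      exact pow_le_pow_left₀ (hu0 y) (hbd y) _
    · intro y hy
      by_contra h
      exact hy (by simp [hsupp y h, hj])
  have hscale := scaling ν k hk hu0 (hu0 0) (hui k hk) (hui (k+1) (by simp)) (by
    intro l hl hl1 y hy
    have hcc := concave_rt μ hk (fun y : F => Prod.mk y ⁻¹' K) hsec (by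
      intro y z a b ha hb hab x hx x' hx'
      have := hc hx hx' ha.le hb.le hab
      simpa using this)
    have hyn : (Prod.mk y ⁻¹' K).Nonempty := by
      by_contra h
      rw [not_nonempty_iff_eq_empty] at h
      refine hy.ne' (hsupp y ?_)
      rintro ⟨⟨y', x⟩, hx, rfl⟩
      have : x ∈ Prod.mk y' ⁻¹' K := hx
      simp only at h
      rw [h] at this
      exact this
    have := hcc.2 hyn (show (Prod.mk (0:F) ⁻¹' K).Nonempty from ⟨_, hgK0⟩) hl.le
      (sub_nonneg.2 hl1.le) (by ring)
    simpa using this)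
  -- integrate the fibre bound
  have hP : ∫ y, u y ^ k ∂ν = (ν.prod μ).real K := by
    have h3 := (fubini μ ν hK (r := fun _ => (1:ℝ)) continuous_const).2
    simp only [setIntegral_const, smul_eq_mul, mul_one] at h3
    rw [h3]
    refine integral_congr_ae ?_
    filter_upwards with y
    exact rt_pow μ hk _
  obtain ⟨hf1, hf2⟩ := fubini μ ν hK hrc
  have hint : ∫ p in K, r p ∂(ν.prod μ) = w * (ν.prod μ).real K := by
    simp only [hr]
    rw [integral_add, integral_add, integral_const_mul, h2, setIntegral_const]
    · have := β.integral_comp_comm hcf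
      rw [this, h1]
      simp [mul_comm]
    · exact hcont _ continuous_const
    · exact hcont (fun p : F × E => α * ℓ p.2) (by fun_prop)
    · exact hcont (fun p : F × E => w + α * ℓ p.2) (by fun_prop)
    · exact hcont (fun p : F × E => β p.1) (by fun_prop)
  have hQ := integral_mono ((hui (k+1) (by simp)).const_mul ((k : ℝ) / (k + 1))) hf1 hfib
  rw [integral_const_mul, ← hf2, hint] at hQ
  rw [hP] at hscale
  set P := (ν.prod μ).real K
  set Q := ∫ y, u y ^ (k+1) ∂ν
  have hk1 : (0:ℝ) < k + 1 := by positivity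
  have hN : (0:ℝ) < m + k + 1 := by positivity
  have e1 : k * Q ≤ (k + 1) * (w * P) := by
    have := mul_le_mul_of_nonneg_left hQ hk1.le
    rwa [← mul_assoc, mul_div_cancel₀ _ hk1.ne'] at this
  have e2 : k * ((k+1) * u 0 * P) ≤ k * ((m + k + 1) * Q) :=
    mul_le_mul_of_nonneg_left hscale (by positivity)
  have e3 : (m + k + 1) * (k * Q) ≤ (m + k + 1) * ((k + 1) * (w * P)) :=
    mul_le_mul_of_nonneg_left e1 hN.le
  have e4 : (k * u 0) * ((k+1) * P) ≤ ((m + k + 1) * w) * ((k + 1) * P) := by linarith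
  have e5 := le_of_mul_le_mul_right e4 (by positivity)
  rw [div_mul_eq_mul_div, div_le_iff₀ hN]
  linarith

end
end GrunbaumAux


/-- **Grünbaum's inequality for sections.** If `K ⊆ ℝⁿ` is a convex body whose
centroid lies in `E ∩ θ^⊥` (e.g. at the origin), where `E` is a `k`-dimensional
subspace and `θ ∈ E` is a unit vector, then
`vol_k(K ∩ E ∩ θ⁺) ≥ (k/(n+1))^k vol_k(K ∩ E)`. -/
theorem grunbaum_sections
    (n k : ℕ) (hk : 1 ≤ k) (hkn : k ≤ n)
    (E : Submodule ℝ (EuclideanSpace ℝ (Fin n))) (hE : Module.finrank ℝ E = k)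
    (θ : EuclideanSpace ℝ (Fin n)) (hθE : θ ∈ E) (hθ : ‖θ‖ = 1)
    (K : Set (EuclideanSpace ℝ (Fin n)))
    (hK_conv : Convex ℝ K) (hK_comp : IsCompact K) (hK_int : (interior K).Nonempty)
    -- the centroid of `K` lies in `E ∩ θ^⊥`
    (hK_cent_mem : (volume K).toReal⁻¹ • (∫ x in K, x) ∈ E)
    (hK_cent_perp : ⟪(volume K).toReal⁻¹ • (∫ x in K, x), θ⟫ = 0) :
    ENNReal.ofReal (((k : ℝ) / (n + 1)) ^ k) *
        μH[(k : ℝ)] (K ∩ (E : Set (EuclideanSpace ℝ (Fin n)))) ≤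
      μH[(k : ℝ)] (K ∩ (E : Set (EuclideanSpace ℝ (Fin n))) ∩ {x | 0 ≤ ⟪x, θ⟫}) := by
  have hmn : Module.finrank ℝ Eᗮ + k = n := by
    have := E.finrank_add_finrank_orthogonal
    rw [finrank_euclideanSpace_fin] at this
    omega
  subst hE
  have hk0 : Module.finrank ℝ E ≠ 0 := by omega
  set μ : Measure E := μH[(Module.finrank ℝ E : ℝ)] with hμ
  have : μ.IsAddHaarMeasure := isAddHaarMeasure_hausdorffMeasure
  set ν : Measure Eᗮ := volume
  let T : (Eᗮ × E) ≃L[ℝ] EuclideanSpace ℝ (Fin n) :=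
    (Submodule.prodEquivOfIsCompl Eᗮ E
      (Submodule.isCompl_orthogonal (K := E)).symm).toContinuousLinearEquiv
  have hT : ∀ y x, T (y, x) = (y : EuclideanSpace ℝ (Fin n)) + x := fun y x => rfl
  have hvol : (volume K).toReal ≠ 0 :=
    (ENNReal.toReal_pos (Measure.measure_pos_of_nonempty_interior _ hK_int).ne'
      hK_comp.measure_lt_top.ne).ne'
  set J := ∫ x in K, x with hJ
  have hJE : J ∈ E := (E.smul_mem_iff (inv_ne_zero hvol)).1 hK_cent_mem
  have hJθ : ⟪J, θ⟫ = 0 := by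
    rw [real_inner_smul_left] at hK_cent_perp
    exact (mul_eq_zero.1 hK_cent_perp).resolve_left (inv_ne_zero hvol)
  -- the transported body
  set K' : Set (Eᗮ × E) := T ⁻¹' K with hK'
  have hc' : Convex ℝ K' := hK_conv.linear_preimage T.toLinearMap
  have hcomp' : IsCompact K' := T.toHomeomorph.isCompact_preimage.2 hK_comp
  have hint' : (interior K').Nonempty := by
    have : interior K' = T ⁻¹' interior K := (T.toHomeomorph.preimage_interior K).symm
    rw [this]
    exact hK_int.preimage T.surjective
  let ℓ : E →L[ℝ] ℝ := innerSL ℝ (⟨θ, hθE⟩ : E)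
  have hℓ : ∀ x : E, ℓ x = ⟪(x : EuclideanSpace ℝ (Fin n)), θ⟫ := by
    intro x
    rw [real_inner_comm]; rfl
  have hθ1 : ℓ ⟨θ, hθE⟩ = 1 := by
    rw [hℓ, real_inner_self_eq_norm_sq, hθ]; norm_num
  -- the centroid
  have : (Measure.map T (ν.prod μ)).IsAddHaarMeasure := T.isAddHaarMeasure_map _
  have hmap := Measure.isAddLeftInvariant_eq_smul (Measure.map T (ν.prod μ)) volume
  set c := (Measure.map T (ν.prod μ)).addHaarScalarFactor volume
  have hIT : ∫ p in K', T p ∂(ν.prod μ) = c • J := by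
    have h := T.toHomeomorph.measurableEmbedding.setIntegral_map (μ := ν.prod μ)
      (fun x : EuclideanSpace ℝ (Fin n) => x) K
    have h' : ∫ y in K, y ∂(Measure.map T (ν.prod μ)) = ∫ p in K', T p ∂(ν.prod μ) := h
    rw [← h', hmap, Measure.restrict_smul, integral_smul_nnreal_measure]
  have hcid : IntegrableOn (fun x : Eᗮ × E => x) K' (ν.prod μ) :=
    continuous_id.continuousOn.integrableOn_compact hcomp'
  have hI : ∫ p in K', p ∂(ν.prod μ) = (0, c • ⟨J, hJE⟩) := by
    apply T.injective
    have h := (T : (Eᗮ × E) →L[ℝ] EuclideanSpace ℝ (Fin n)).integral_comp_comm hcid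
    have h' : ∫ p in K', T p ∂(ν.prod μ) = T (∫ p in K', p ∂(ν.prod μ)) := h
    rw [← h', hIT, hT]
    simp only [ZeroMemClass.coe_zero, zero_add]
    rfl
  have h1 : ∫ p in K', p.1 ∂(ν.prod μ) = 0 := by
    have h := (ContinuousLinearMap.fst ℝ Eᗮ E).integral_comp_comm hcid
    rw [hI] at h
    exact h
  have h2 : ∫ p in K', ℓ p.2 ∂(ν.prod μ) = 0 := by
    have h := (ℓ.comp (ContinuousLinearMap.snd ℝ Eᗮ E)).integral_comp_comm hcid
    rw [hI] at h
    have h' : ∫ p in K', ℓ p.2 ∂(ν.prod μ) = ℓ (c • ⟨J, hJE⟩) := h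
    rw [h', hℓ]
    change ⟪(c : ℝ) • J, θ⟫ = 0
    rw [real_inner_smul_left, hJθ, mul_zero]
  have main := GrunbaumAux.main_abs μ ν hk0 hc' hcomp' hint' ℓ hθ1 h1 h2
  -- translate back
  set S : Set E := Prod.mk (0 : Eᗮ) ⁻¹' K' with hS
  have hmem : ∀ x : E, x ∈ S ↔ (x : EuclideanSpace ℝ (Fin n)) ∈ K := by
    intro x
    simp only [hS, hK', mem_preimage, hT, ZeroMemClass.coe_zero, zero_add]
  have hSc : IsCompact S := by
    have : S = (Subtype.val : E → EuclideanSpace ℝ (Fin n)) ⁻¹' K := by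
      ext x; exact hmem x
    rw [this]
    exact (E.closed_of_finiteDimensional.isClosedEmbedding_subtypeVal).isCompact_preimage hK_comp
  have hiso : Isometry (Subtype.val : E → EuclideanSpace ℝ (Fin n)) := isometry_subtype_coe
  have e1 : K ∩ (E : Set (EuclideanSpace ℝ (Fin n))) = Subtype.val '' S := by
    ext x
    constructor
    · rintro ⟨hx, hxE⟩
      exact ⟨⟨x, hxE⟩, (hmem _).2 hx, rfl⟩
    · rintro ⟨x, hx, rfl⟩
      exact ⟨(hmem _).1 hx, x.2⟩
  have e2 : K ∩ (E : Set (EuclideanSpace ℝ (Fin n))) ∩ {x | 0 ≤ ⟪x, θ⟫}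
      = Subtype.val '' (S ∩ {x | 0 ≤ ℓ x}) := by
    rw [e1]
    ext x
    constructor
    · rintro ⟨⟨x, hx, rfl⟩, hx'⟩
      exact ⟨x, ⟨hx, by simpa only [mem_ofPred_eq, hℓ] using hx'⟩, rfl⟩
    · rintro ⟨x, ⟨hx, hx'⟩, rfl⟩
      exact ⟨⟨x, hx, rfl⟩, by simpa only [mem_ofPred_eq, hℓ] using hx'⟩
  have hSc2 : IsCompact (S ∩ {x | 0 ≤ ℓ x}) :=
    hSc.inter_right (isClosed_le continuous_const ℓ.continuous)
  rw [e2, e1, hiso.hausdorffMeasure_image (Or.inl (by positivity)),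
    hiso.hausdorffMeasure_image (Or.inl (by positivity)), ← hμ,
    ← GrunbaumAux.ofReal_rt_pow μ hk0 hSc, ← GrunbaumAux.ofReal_rt_pow μ hk0 hSc2,
    ← ENNReal.ofReal_mul (by positivity), ← mul_pow]
  refine ENNReal.ofReal_le_ofReal (pow_le_pow_left₀ ?_ ?_ _)
  · exact mul_nonneg (by positivity) (GrunbaumAux.rt_nonneg _ _)
  · have hn : (n : ℝ) = Module.finrank ℝ Eᗮ + Module.finrank ℝ E := by exact_mod_cast hmn.symm
    rw [hn]
    exact main
end

section
/- (Grünbaum's inequality.) Let K be a convex body in ℝ^n whose centroid is at the origin, and let θ ∈ S^{n-1}. Then vol_n(K ∩ θ^+) ≥ (n/(n+1))^n · vol_n(K). -/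
open MeasureTheory Set
open scoped RealInnerProductSpace
open scoped ENNReal Pointwise

lemma bm1_compact {l : ℝ} (hl : 0 < l) (hl1 : l < 1) {A B C : Set ℝ} (hA : IsCompact A)
    (hB : IsCompact B) (hAn : A.Nonempty) (hBn : B.Nonempty)
    (h : ∀ a ∈ A, ∀ b ∈ B, (1 - l) * a + l * b ∈ C) :
    ENNReal.ofReal (1 - l) * volume A + ENNReal.ofReal l * volume B ≤ volume C := by
  obtain ⟨a, ha, hamax⟩ := hA.exists_isGreatest hAn
  obtain ⟨b, hb, hbmin⟩ := hB.exists_isLeast hBn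
  have h1 : volume (AffineMap.homothety b (1 - l) '' A) = ENNReal.ofReal (1 - l) * volume A := by
    rw [Measure.addHaar_image_homothety]
    simp [abs_of_pos (sub_pos.2 hl1)]
  have h2 : volume (AffineMap.homothety a l '' B) = ENNReal.ofReal l * volume B := by
    rw [Measure.addHaar_image_homothety]
    simp [abs_of_pos hl]
  rw [← h1, ← h2, ← measure_union₀]
  · apply measure_mono
    rintro _ (⟨x, hx, rfl⟩ | ⟨x, hx, rfl⟩)
    · convert h x hx b hb using 1
      simp [AffineMap.homothety_apply]; ring
    · convert h a ha x hx using 1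
      simp [AffineMap.homothety_apply]; ring
  · apply MeasurableSet.nullMeasurableSet
    apply IsCompact.measurableSet
    exact hB.image (AffineMap.homothety a l).continuous_of_finiteDimensional
  · refine measure_mono_null (t := {(1 - l) * a + l * b}) ?_ (by simp)
    rintro _ ⟨⟨x, hx, rfl⟩, ⟨y, hy, hxy⟩⟩
    simp only [AffineMap.homothety_apply, vsub_eq_sub, smul_eq_mul, vadd_eq_add,
      mem_singleton_iff] at hxy ⊢
    have := hamax hx
    have := hbmin hy
    nlinarith

lemma vol_eq_iSup {A : Set ℝ} (hA : MeasurableSet A) :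
    volume A = ⨆ K : {K : Set ℝ // K ⊆ A ∧ IsCompact K ∧ K.Nonempty}, volume K.1 := by
  apply le_antisymm
  · rw [hA.measure_eq_iSup_isCompact]
    refine iSup_le fun K => iSup_le fun h1 => iSup_le fun h2 => ?_
    rcases K.eq_empty_or_nonempty with rfl | h3
    · simp
    · exact le_iSup (fun K : {K : Set ℝ // K ⊆ A ∧ IsCompact K ∧ K.Nonempty} => volume K.1)
        ⟨K, h1, h2, h3⟩
  · exact iSup_le fun K => measure_mono K.2.1

lemma bm1 {l : ℝ} (hl : 0 < l) (hl1 : l < 1) {A B C : Set ℝ} (hA : MeasurableSet A)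
    (hB : MeasurableSet B) (hAn : A.Nonempty) (hBn : B.Nonempty)
    (h : ∀ a ∈ A, ∀ b ∈ B, (1 - l) * a + l * b ∈ C) :
    ENNReal.ofReal (1 - l) * volume A + ENNReal.ofReal l * volume B ≤ volume C := by
  rw [vol_eq_iSup hA, vol_eq_iSup hB, ENNReal.mul_iSup, ENNReal.mul_iSup]
  have key : ∀ {S : Set ℝ}, S.Nonempty → Nonempty {K : Set ℝ // K ⊆ S ∧ IsCompact K ∧ K.Nonempty} := by
    rintro S ⟨x, hx⟩
    exact ⟨{x}, by simpa using hx, isCompact_singleton, by simp⟩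
  have := key hAn
  have := key hBn
  refine ENNReal.iSup_add_iSup_le fun K L => ?_
  exact bm1_compact hl hl1 K.2.2.1 L.2.2.1 K.2.2.2 L.2.2.2
    fun a ha b hb => h a (K.2.1 ha) b (L.2.1 hb)

lemma amgm {l : ℝ} (hl : 0 < l) (hl1 : l < 1) (x y : ℝ≥0∞) :
    x ^ (1 - l) * y ^ l ≤ ENNReal.ofReal (1 - l) * x + ENNReal.ofReal l * y := by
  have h1 : 0 < 1 - l := sub_pos.2 hl1
  have hpq : (1 - l)⁻¹.HolderConjugate l⁻¹ := by
    rw [Real.holderConjugate_iff]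
    refine ⟨(one_lt_inv₀ h1).2 (by linarith), by simp⟩
  have := ENNReal.young_inequality (x ^ (1 - l)) (y ^ l) hpq
  rw [← ENNReal.rpow_mul, ← ENNReal.rpow_mul, mul_inv_cancel₀ h1.ne', mul_inv_cancel₀ hl.ne',
    ENNReal.rpow_one, ENNReal.rpow_one, ENNReal.ofReal_inv_of_pos h1, ENNReal.ofReal_inv_of_pos hl,
    div_eq_mul_inv, div_eq_mul_inv, inv_inv, inv_inv] at this
  rwa [mul_comm _ x, mul_comm _ y]

lemma layer_s6 {f : ℝ → ℝ≥0∞} (hf : Measurable f) (h1 : ∀ x, f x ≤ 1) :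
    ∫⁻ x, f x = ∫⁻ t in Ioi (0:ℝ), volume {x | ENNReal.ofReal t < f x} := by
  have hne : ∀ x, f x ≠ ∞ := fun x => ne_top_of_le_ne_top (by simp) (h1 x)
  have := lintegral_eq_lintegral_meas_lt (volume : Measure ℝ) (f := fun x => (f x).toReal)
    (Filter.Eventually.of_forall fun x => ENNReal.toReal_nonneg) hf.ennreal_toReal.aemeasurable
  simp only [ENNReal.ofReal_toReal (hne _)] at this
  rw [this]
  refine setLIntegral_congr_fun measurableSet_Ioi fun t ht => ?_
  simp only [ENNReal.ofReal_lt_iff_lt_toReal (le_of_lt ht) (hne _)]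

lemma pl1_norm {l : ℝ} (hl : 0 < l) (hl1 : l < 1) {f g h : ℝ → ℝ≥0∞} (hf : Measurable f)
    (hg : Measurable g) (hh : Measurable h) (hf1 : ⨆ x, f x = 1) (hg1 : ⨆ x, g x = 1)
    (H : ∀ x y, f x ^ (1 - l) * g y ^ l ≤ h ((1 - l) * x + l * y)) :
    (∫⁻ x, f x) ^ (1 - l) * (∫⁻ x, g x) ^ l ≤ ∫⁻ x, h x := by
  have h1 : 0 < 1 - l := sub_pos.2 hl1
  have hfle : ∀ x, f x ≤ 1 := fun x => hf1 ▸ le_iSup f x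
  have hgle : ∀ x, g x ≤ 1 := fun x => hg1 ▸ le_iSup g x
  refine (amgm hl hl1 _ _).trans ?_
  have : ∫⁻ x, min (h x) 1 ≤ ∫⁻ x, h x := lintegral_mono fun x => min_le_left _ _
  refine le_trans ?_ this
  rw [layer_s6 hf hfle, layer_s6 hg hgle, layer_s6 (f := fun x => min (h x) 1) (hh.min measurable_const)
    (fun x => min_le_right _ _)]
  rw [← lintegral_const_mul' _ _ ENNReal.ofReal_ne_top,
    ← lintegral_const_mul' _ _ ENNReal.ofReal_ne_top]
  refine (le_lintegral_add _ _).trans ?_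
  refine setLIntegral_mono' measurableSet_Ioi fun t ht => ?_
  rcases lt_or_ge t 1 with ht1 | ht1
  · have ht1' : ENNReal.ofReal t < 1 := by
      simpa using ht1
    apply bm1 hl hl1 (measurableSet_lt measurable_const hf) (measurableSet_lt measurable_const hg)
    · rw [← hf1] at ht1'
      exact lt_iSup_iff.1 ht1'
    · rw [← hg1] at ht1'
      exact lt_iSup_iff.1 ht1'
    · intro a ha b hb
      refine lt_min ?_ ht1'
      refine lt_of_lt_of_le ?_ (H a b)
      have e : ENNReal.ofReal t = ENNReal.ofReal t ^ (1 - l) * ENNReal.ofReal t ^ l := by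
        rw [← ENNReal.rpow_add _ _ (by simpa using ht) (by simp)]
        simp
      rw [e]
      exact ENNReal.mul_lt_mul (ENNReal.rpow_lt_rpow ha h1) (ENNReal.rpow_lt_rpow hb hl)
  · have : ∀ k : ℝ → ℝ≥0∞, (∀ x, k x ≤ 1) → {x | ENNReal.ofReal t < k x} = ∅ := by
      intro k hk
      ext x
      simp only [mem_ofPred_eq, mem_empty_iff_false, iff_false, not_lt]
      exact (hk x).trans (by simpa using ht1)
    rw [this f hfle, this g hgle]
    simp

lemma pl1_bdd {l : ℝ} (hl : 0 < l) (hl1 : l < 1) {f g h : ℝ → ℝ≥0∞} (hf : Measurable f)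
    (hg : Measurable g) (hh : Measurable h) (hf1 : ⨆ x, f x ≠ ∞) (hg1 : ⨆ x, g x ≠ ∞)
    (H : ∀ x y, f x ^ (1 - l) * g y ^ l ≤ h ((1 - l) * x + l * y)) :
    (∫⁻ x, f x) ^ (1 - l) * (∫⁻ x, g x) ^ l ≤ ∫⁻ x, h x := by
  have h1 : 0 < 1 - l := sub_pos.2 hl1
  set M := ⨆ x, f x with hM
  set N := ⨆ x, g x with hN
  rcases eq_or_ne M 0 with hM0 | hM0
  · have : ∀ x, f x = 0 := by simpa using hM.symm.trans hM0
    simp [this, h1]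
  rcases eq_or_ne N 0 with hN0 | hN0
  · have : ∀ x, g x = 0 := by simpa using hN.symm.trans hN0
    simp [this, hl]
  have key := pl1_norm hl hl1 (f := fun x => M⁻¹ * f x) (g := fun x => N⁻¹ * g x)
    (h := fun x => (M⁻¹ ^ (1 - l) * N⁻¹ ^ l) * h x) (hf.const_mul _) (hg.const_mul _)
    (hh.const_mul _) (by rw [← ENNReal.mul_iSup]; exact ENNReal.inv_mul_cancel hM0 hf1)
    (by rw [← ENNReal.mul_iSup]; exact ENNReal.inv_mul_cancel hN0 hg1) (by
      intro x y
      rw [ENNReal.mul_rpow_of_nonneg _ _ h1.le, ENNReal.mul_rpow_of_nonneg _ _ hl.le,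
        mul_mul_mul_comm]
      gcongr
      exact H x y)
  rw [lintegral_const_mul _ hf, lintegral_const_mul _ hg, lintegral_const_mul _ hh,
    ENNReal.mul_rpow_of_nonneg _ _ h1.le, ENNReal.mul_rpow_of_nonneg _ _ hl.le,
        mul_mul_mul_comm] at key
  refine (ENNReal.mul_le_mul_iff_right ?_ ?_).1 key
  · simp [ENNReal.rpow_eq_zero_iff, hf1, hg1, h1.not_gt, hl.not_gt, hM0, hN0]
  · apply ENNReal.mul_ne_top <;> apply ENNReal.rpow_ne_top_of_nonneg (by linarith) <;> simpa

lemma pl1 {l : ℝ} (hl : 0 < l) (hl1 : l < 1) {f g h : ℝ → ℝ≥0∞} (hf : Measurable f)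
    (hg : Measurable g) (hh : Measurable h)
    (H : ∀ x y, f x ^ (1 - l) * g y ^ l ≤ h ((1 - l) * x + l * y)) :
    (∫⁻ x, f x) ^ (1 - l) * (∫⁻ x, g x) ^ l ≤ ∫⁻ x, h x := by
  have h1 : 0 < 1 - l := sub_pos.2 hl1
  have conv : ∀ {f : ℝ → ℝ≥0∞}, Measurable f →
      Filter.Tendsto (fun k : ℕ => ∫⁻ x, min (f x) k) Filter.atTop (nhds (∫⁻ x, f x)) := by
    intro f hf
    apply lintegral_tendsto_of_tendsto_of_monotone
    · intro k; exact (hf.min measurable_const).aemeasurable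
    · refine Filter.Eventually.of_forall fun x i j hij => ?_
      dsimp only
      gcongr
    · refine Filter.Eventually.of_forall fun x => ?_
      have := (tendsto_const_nhds (x := f x)).min ENNReal.tendsto_nat_nhds_top
      simpa using this
  have bnd : ∀ (f : ℝ → ℝ≥0∞) (k : ℕ), ⨆ x, min (f x) k ≠ ∞ := fun f k =>
    ne_top_of_le_ne_top (ENNReal.natCast_ne_top k) (iSup_le fun x => min_le_right _ _)
  have step : ∀ i j : ℕ, (∫⁻ x, min (f x) i) ^ (1 - l) * (∫⁻ x, min (g x) j) ^ l ≤ ∫⁻ x, h x := by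
    intro i j
    refine pl1_bdd hl hl1 (hf.min measurable_const) (hg.min measurable_const) hh (bnd f i) (bnd g j)
      fun x y => le_trans ?_ (H x y)
    gcongr <;> exact min_le_left _ _
  have e : ∀ {f : ℝ → ℝ≥0∞}, Measurable f → ∀ {a : ℝ}, 0 < a → (∫⁻ x, f x) ^ a = ⨆ k : ℕ, (∫⁻ x, min (f x) k) ^ a := by
    intro f hf a ha
    refine tendsto_nhds_unique ((conv hf).ennrpow_const a) (tendsto_atTop_iSup fun i j hij => ?_)
    gcongr
  rw [e hf h1, e hg hl, ENNReal.iSup_mul]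
  simp_rw [ENNReal.mul_iSup]
  exact iSup_le fun i => iSup_le fun j => step i j

lemma pl {l : ℝ} (hl : 0 < l) (hl1 : l < 1) (n : ℕ) : ∀ {f g h : (Fin n → ℝ) → ℝ≥0∞}, Measurable f →
    Measurable g → Measurable h →
    (∀ x y, f x ^ (1 - l) * g y ^ l ≤ h ((1 - l) • x + l • y)) →
    (∫⁻ x, f x) ^ (1 - l) * (∫⁻ x, g x) ^ l ≤ ∫⁻ x, h x := by
  induction n with
  | zero =>
    intro f g h hf hg hh H
    have : ∀ f : (Fin 0 → ℝ) → ℝ≥0∞, ∫⁻ x, f x = f default := by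
      intro f
      rw [lintegral_unique, volume_pi, Measure.pi_of_empty (x := default)]
      simp only [measure_univ, mul_one]
      exact congrArg f (Subsingleton.elim _ _)
    rw [this, this, this]
    convert H default default
  | succ n ih =>
    intro f g h hf hg hh H
    let e := MeasurableEquiv.piFinSuccAbove (fun _ : Fin (n+1) => ℝ) 0
    have he : MeasurePreserving e.symm :=
      (volume_preserving_piFinSuccAbove (fun _ : Fin (n+1) => ℝ) 0).symm
    have fub : ∀ {f : (Fin (n+1) → ℝ) → ℝ≥0∞}, Measurable f →
        ∫⁻ x, f x = ∫⁻ t, ∫⁻ y, f (e.symm (t, y)) := by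
      intro f hf
      rw [← he.lintegral_comp hf, Measure.volume_eq_prod, lintegral_prod]
      exact (hf.comp e.symm.measurable).aemeasurable
    have ms : ∀ {f : (Fin (n+1) → ℝ) → ℝ≥0∞}, Measurable f →
        Measurable fun t => ∫⁻ y, f (e.symm (t, y)) := fun hf =>
      (hf.comp e.symm.measurable).lintegral_prod_right'
    have ms2 : ∀ {f : (Fin (n+1) → ℝ) → ℝ≥0∞}, Measurable f → ∀ t,
        Measurable fun y => f (e.symm (t, y)) := fun hf t =>
      hf.comp (e.symm.measurable.comp measurable_prodMk_left)
    rw [fub hf, fub hg, fub hh]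
    refine pl1 hl hl1 (ms hf) (ms hg) (ms hh) fun s t => ?_
    refine ih (ms2 hf s) (ms2 hg t) (ms2 hh _) fun x y => ?_
    refine (H _ _).trans (le_of_eq ?_)
    congr 1
    ext i
    refine Fin.cases ?_ (fun j => ?_) i <;>
      simp [e, MeasurableEquiv.piFinSuccAbove, Fin.insertNthEquiv]

lemma bmE {l : ℝ} (hl : 0 < l) (hl1 : l < 1) {n : ℕ} {A B C : Set (EuclideanSpace ℝ (Fin n))}
    (hA : MeasurableSet A) (hB : MeasurableSet B) (hC : MeasurableSet C)
    (H : ∀ a ∈ A, ∀ b ∈ B, (1 - l) • a + l • b ∈ C) :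
    volume A ^ (1 - l) * volume B ^ l ≤ volume C := by
  have mp := PiLp.volume_preserving_toLp (Fin n)
  rw [← mp.measure_preimage hA.nullMeasurableSet, ← mp.measure_preimage hB.nullMeasurableSet,
    ← mp.measure_preimage hC.nullMeasurableSet]
  have mA := mp.measurable hA
  have mB := mp.measurable hB
  have mC := mp.measurable hC
  rw [← lintegral_indicator_one mA, ← lintegral_indicator_one mB, ← lintegral_indicator_one mC]
  refine pl hl hl1 n (measurable_one.indicator mA) (measurable_one.indicator mB)
    (measurable_one.indicator mC) fun x y => ?_
  by_cases hx : x ∈ WithLp.toLp 2 ⁻¹' A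
  · by_cases hy : y ∈ WithLp.toLp 2 ⁻¹' B
    · have : (1 - l) • x + l • y ∈ WithLp.toLp 2 ⁻¹' C := H _ hx _ hy
      rw [indicator_of_mem hx, indicator_of_mem hy, indicator_of_mem this]
      simp
    · rw [indicator_of_notMem hy]
      simp [hl]
  · rw [indicator_of_notMem hx]
    simp [hl1]

lemma bm_deg {s t : ℝ} (hs : 0 ≤ s) (hst : s + t = 1) {n : ℕ}
    {A C : Set (EuclideanSpace ℝ (Fin n))} {p : ℝ}
    (hA : volume A = ENNReal.ofReal (p ^ n)) (b : EuclideanSpace ℝ (Fin n))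
    (H : ∀ a ∈ A, s • a + t • b ∈ C) :
    ENNReal.ofReal ((s * p) ^ n) ≤ volume C := by
  have : volume (AffineMap.homothety b s '' A) = ENNReal.ofReal ((s * p) ^ n) := by
    rw [Measure.addHaar_image_homothety, hA, finrank_euclideanSpace_fin,
      abs_of_nonneg (pow_nonneg hs n), ← ENNReal.ofReal_mul (pow_nonneg hs n), mul_pow]
  rw [← this]
  apply measure_mono
  rintro _ ⟨x, hx, rfl⟩
  convert H x hx using 1
  rw [AffineMap.homothety_apply, show t = 1 - s by linarith]
  simp only [vsub_eq_sub, vadd_eq_add]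
  module

lemma bm_hom {s t : ℝ} (hs : 0 < s) (ht : 0 < t) (hst : s + t = 1) {n : ℕ}
    {A B C : Set (EuclideanSpace ℝ (Fin n))}
    (mA : MeasurableSet A) (mB : MeasurableSet B) (mC : MeasurableSet C)
    {p q : ℝ} (hp : 0 ≤ p) (hq : 0 ≤ q)
    (hA : volume A = ENNReal.ofReal (p ^ n)) (hB : volume B = ENNReal.ofReal (q ^ n))
    (nA : A.Nonempty) (nB : B.Nonempty)
    (H : ∀ a ∈ A, ∀ b ∈ B, s • a + t • b ∈ C) :
    ENNReal.ofReal ((s * p + t * q) ^ n) ≤ volume C := by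
  rcases hp.eq_or_lt with rfl | hp
  · obtain ⟨a, ha⟩ := nA
    have := bm_deg (C := C) ht.le (add_comm s t ▸ hst) hB a
      (fun b hb => add_comm (s • a) (t • b) ▸ H a ha b hb)
    simpa using this
  rcases hq.eq_or_lt with rfl | hq
  · obtain ⟨b, hb⟩ := nB
    have := bm_deg (C := C) hs.le hst hA b (fun a ha => H a ha b hb)
    simpa using this
  set r := s * p + t * q with hr
  have hr0 : 0 < r := by positivity
  have vol : ∀ (S : Set (EuclideanSpace ℝ (Fin n))) {c : ℝ}, 0 < c →
      volume (c⁻¹ • S) = ENNReal.ofReal ((c ^ n)⁻¹) * volume S := by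
    intro S c hc
    rw [Measure.addHaar_smul, finrank_euclideanSpace_fin, abs_of_nonneg (by positivity), inv_pow]
  have hl1 : 1 - t * q / r = s * p / r := by field_simp; rw [hr]; ring
  have key := bmE (l := t * q / r) (A := p⁻¹ • A) (B := q⁻¹ • B) (C := r⁻¹ • C) (by positivity)
    (by have : 0 < s * p / r := by positivity
        linarith)
    (mA.const_smul₀ _) (mB.const_smul₀ _) (mC.const_smul₀ _) (by
      rintro _ ⟨a, ha, rfl⟩ _ ⟨b, hb, rfl⟩
      refine ⟨_, H a ha b hb, ?_⟩
      simp only [hl1, smul_add, smul_smul]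
      congr 2 <;> field_simp)
  rw [vol _ hp, vol _ hq, vol _ hr0, hA, hB, ← ENNReal.ofReal_mul (by positivity),
    ← ENNReal.ofReal_mul (by positivity), inv_mul_cancel₀ (by positivity),
    inv_mul_cancel₀ (by positivity)] at key
  simp only [ENNReal.ofReal_one, ENNReal.one_rpow, mul_one] at key
  have e : ENNReal.ofReal (r ^ n) * (ENNReal.ofReal ((r ^ n)⁻¹) * volume C) = volume C := by
    rw [← mul_assoc, ← ENNReal.ofReal_mul (by positivity), mul_inv_cancel₀ (by positivity)]
    simp
  calc ENNReal.ofReal (r ^ n) = ENNReal.ofReal (r ^ n) * 1 := by simp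
    _ ≤ _ := by gcongr
    _ = _ := e

section G
variable {n : ℕ} (K : Set (EuclideanSpace ℝ (Fin n))) (θ : EuclideanSpace ℝ (Fin n))

/-- The part of `K` above level `t`. -/
def capSet (t : ℝ) : Set (EuclideanSpace ℝ (Fin n)) := K ∩ {y | t ≤ ⟪y, θ⟫}

/-- `n`-th root of the volume of the cap. -/
noncomputable def capRad (t : ℝ) : ℝ := (volume (capSet K θ t)).toReal ^ ((n : ℝ)⁻¹)

variable {K θ}

lemma capSet_meas (hK : IsCompact K) (t : ℝ) : MeasurableSet (capSet K θ t) := by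
  refine hK.measurableSet.inter (IsClosed.measurableSet ?_)
  exact isClosed_le continuous_const (by fun_prop)

lemma capSet_ne_top (hK : IsCompact K) (t : ℝ) : volume (capSet K θ t) ≠ ∞ :=
  ne_top_of_le_ne_top hK.measure_lt_top.ne (measure_mono inter_subset_left)

lemma capRad_nonneg (t : ℝ) : 0 ≤ capRad K θ t := by unfold capRad; positivity

lemma capRad_pow (hn : 1 ≤ n) (t : ℝ) : capRad K θ t ^ n = (volume (capSet K θ t)).toReal := by
  unfold capRad
  exact Real.rpow_inv_natCast_pow ENNReal.toReal_nonneg (by omega)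

lemma vol_cap (hn : 1 ≤ n) (hK : IsCompact K) (t : ℝ) :
    volume (capSet K θ t) = ENNReal.ofReal (capRad K θ t ^ n) := by
  rw [capRad_pow hn, ENNReal.ofReal_toReal (capSet_ne_top hK t)]

lemma capRad_concave (hn : 1 ≤ n) (hK : IsCompact K) (hc : Convex ℝ K) :
    ConcaveOn ℝ K (fun x => capRad K θ ⟪x, θ⟫) := by
  rw [concaveOn_iff_forall_pos]
  refine ⟨hc, fun x hx y hy s t hs ht hst => ?_⟩
  have := bm_hom (C := capSet K θ ⟪s • x + t • y, θ⟫) hs ht hst (capSet_meas hK ⟪x, θ⟫) (capSet_meas hK ⟪y, θ⟫)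
    (capSet_meas hK _) (capRad_nonneg _) (capRad_nonneg _) (vol_cap hn hK _)
    (vol_cap hn hK _) ⟨x, hx, le_refl ⟪x, θ⟫⟩ ⟨y, hy, le_refl ⟪y, θ⟫⟩ (by
      rintro a ⟨ha, ha'⟩ b ⟨hb, hb'⟩
      refine ⟨hc ha hb hs.le ht.le hst, ?_⟩
      simp only [mem_ofPred_eq, inner_add_left, real_inner_smul_left] at *
      gcongr)
  rw [vol_cap hn hK, ENNReal.ofReal_le_ofReal_iff (pow_nonneg (capRad_nonneg _) n)] at this
  exact le_of_pow_le_pow_left₀ (by omega) (capRad_nonneg _) this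

lemma level_null (hθ : ‖θ‖ = 1) (t : ℝ) : volume {y : EuclideanSpace ℝ (Fin n) | ⟪y, θ⟫ = t} = 0 := by
  let S : AffineSubspace ℝ (EuclideanSpace ℝ (Fin n)) :=
    (AffineSubspace.mk' (t • θ) (LinearMap.ker (innerₗ _ θ)))
  have hS : (S : Set _) = {y : EuclideanSpace ℝ (Fin n) | ⟪y, θ⟫ = t} := by
    ext y
    simp [S, AffineSubspace.mem_mk', inner_sub_right, real_inner_smul_right, hθ, sub_eq_zero,
      real_inner_comm]
  rw [← hS]
  apply Measure.addHaar_affineSubspace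
  intro h
  have : (t + 1) • θ ∈ (S : Set _) := by rw [h]; simp
  rw [hS] at this
  simp [real_inner_smul_left, hθ] at this

lemma capVol_cont (hK : IsCompact K) (hθ : ‖θ‖ = 1) :
    Continuous fun t => (volume (capSet K θ t)).toReal := by
  have e : ∀ t, (volume (capSet K θ t)).toReal =
      ∫ y in K, ({y | t ≤ ⟪y, θ⟫} : Set (EuclideanSpace ℝ (Fin n))).indicator (fun _ => (1:ℝ)) y := by
    intro t
    have m : MeasurableSet {y : EuclideanSpace ℝ (Fin n) | t ≤ ⟪y, θ⟫} :=
      (isClosed_le continuous_const (by fun_prop)).measurableSet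
    rw [integral_indicator m, setIntegral_const, measureReal_def, Measure.restrict_apply m, inter_comm]
    simp [capSet]
  simp_rw [e]
  rw [continuous_iff_continuousAt]
  intro t
  refine tendsto_integral_filter_of_dominated_convergence (fun _ => (1:ℝ)) ?_ ?_ ?_ ?_
  · refine Filter.Eventually.of_forall fun t => ?_
    have m : MeasurableSet {y : EuclideanSpace ℝ (Fin n) | t ≤ ⟪y, θ⟫} :=
      (isClosed_le continuous_const (by fun_prop)).measurableSet
    exact (measurable_const.indicator m).aestronglyMeasurable
  · refine Filter.Eventually.of_forall fun t => Filter.Eventually.of_forall fun y => ?_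
    rw [indicator_apply]
    split_ifs <;> simp
  · exact integrableOn_const hK.measure_lt_top.ne
  · apply ae_restrict_of_ae
    have : ∀ᵐ y : EuclideanSpace ℝ (Fin n), ⟪y, θ⟫ ≠ t := by
      rw [ae_iff]; simpa using level_null hθ t
    filter_upwards [this] with y hy
    apply tendsto_const_nhds.congr'
    rcases lt_or_gt_of_ne hy with h | h
    · filter_upwards [lt_mem_nhds h] with u hu
      simp [h.not_ge, not_le.2 hu]
    · filter_upwards [gt_mem_nhds h] with u hu
      simp [h.le, le_of_lt hu]

lemma capRad_cont (hK : IsCompact K) (hθ : ‖θ‖ = 1) : Continuous (capRad K θ) :=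
  (capVol_cont hK hθ).rpow_const fun _ => Or.inr (by positivity)

lemma low_meas (hn : 1 ≤ n) (hK : IsCompact K) (hθ : ‖θ‖ = 1) (u : ℝ) :
    volume (K ∩ {x | capRad K θ ⟪x, θ⟫ < u}) ≤ ENNReal.ofReal (u ^ n) := by
  have m : MeasurableSet (K ∩ {x | capRad K θ ⟪x, θ⟫ < u}) :=
    hK.measurableSet.inter (measurableSet_lt
      ((capRad_cont hK hθ).comp (by fun_prop)).measurable measurable_const)
  rw [m.measure_eq_iSup_isCompact]
  refine iSup_le fun C => iSup_le fun h1 => iSup_le fun h2 => ?_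
  rcases C.eq_empty_or_nonempty with rfl | h3
  · simp
  obtain ⟨x, hx, hmin⟩ := h2.exists_isMinOn h3 (f := fun x => ⟪x, θ⟫) (by fun_prop)
  have : C ⊆ capSet K θ ⟪x, θ⟫ := fun y hy => ⟨(h1 hy).1, hmin hy⟩
  refine (measure_mono this).trans ?_
  rw [vol_cap hn hK]
  apply ENNReal.ofReal_le_ofReal
  exact pow_le_pow_left₀ (capRad_nonneg _) (h1 hx).2.le n

lemma int_lower (hn : 1 ≤ n) (hK : IsCompact K) (hθ : ‖θ‖ = 1) {R : ℝ} (hR : 0 ≤ R)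
    (hRK : volume K = ENNReal.ofReal (R ^ n)) :
    (n / (n + 1) : ℝ) * R ^ (n + 1) ≤ ∫ x in K, capRad K θ ⟪x, θ⟫ := by
  have hcont : Continuous fun x : EuclideanSpace ℝ (Fin n) => capRad K θ ⟪x, θ⟫ :=
    (capRad_cont hK hθ).comp (by fun_prop)
  rw [integral_eq_lintegral_of_nonneg_ae (Filter.Eventually.of_forall fun x => capRad_nonneg _)
    hcont.aestronglyMeasurable, lintegral_eq_lintegral_meas_le _
    (Filter.Eventually.of_forall fun x => capRad_nonneg _) hcont.aemeasurable]
  rw [← ENNReal.ofReal_le_iff_le_toReal]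
  · have hI : ∫ u in (0:ℝ)..R, (R ^ n - u ^ n) = (n / (n + 1) : ℝ) * R ^ (n + 1) := by
      rw [intervalIntegral.integral_sub (by simp) (by apply Continuous.intervalIntegrable; fun_prop)]
      simp
      field_simp
      ring
    rw [← hI, intervalIntegral.integral_of_le hR, ofReal_integral_eq_lintegral_ofReal]
    · refine (setLIntegral_mono' measurableSet_Ioc fun u hu => ?_).trans
        (lintegral_mono_set Ioc_subset_Ioi_self)
      rw [Measure.restrict_apply (measurableSet_le measurable_const hcont.measurable),
        ENNReal.ofReal_sub _ (pow_nonneg hu.1.le n), ← hRK]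
      rw [tsub_le_iff_right]
      have h1 := low_meas hn hK hθ u
      refine le_trans ?_ (add_le_add_right h1 _)
      refine le_trans (measure_mono ?_) (measure_union_le _ _)
      intro x hx
      rcases lt_or_ge (capRad K θ ⟪x, θ⟫) u with h | h
      · exact Or.inr ⟨hx, h⟩
      · exact Or.inl ⟨h, hx⟩
    · exact (Continuous.integrableOn_Ioc (by fun_prop))
    · filter_upwards [ae_restrict_mem measurableSet_Ioc] with u hu
      simpa using pow_le_pow_left₀ hu.1.le hu.2 n
  · rw [← lintegral_eq_lintegral_meas_le _
      (Filter.Eventually.of_forall fun x => capRad_nonneg _) hcont.aemeasurable]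
    exact (hcont.continuousOn.integrableOn_compact hK).lintegral_lt_top.ne
  

end G

/-- **Grünbaum's inequality.** If `K ⊆ ℝⁿ` is a convex body with centroid at the
origin and `θ` is a unit vector, then `vol_n(K ∩ θ⁺) ≥ (n/(n+1))^n vol_n(K)`. -/
theorem grunbaum
    (n : ℕ) (hn : 1 ≤ n)
    (K : Set (EuclideanSpace ℝ (Fin n)))
    (hK_conv : Convex ℝ K) (hK_comp : IsCompact K) (hK_int : (interior K).Nonempty)
    (hK_cent : (volume K).toReal⁻¹ • (∫ x in K, x) = (0 : EuclideanSpace ℝ (Fin n)))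
    (θ : EuclideanSpace ℝ (Fin n)) (hθ : ‖θ‖ = 1) :
    ENNReal.ofReal (((n : ℝ) / (n + 1)) ^ n) * volume K ≤
      volume (K ∩ {x | 0 ≤ ⟪x, θ⟫}) := by
  have hpos : 0 < volume K := Measure.measure_pos_of_nonempty_interior _ hK_int
  have hfin : volume K ≠ ∞ := hK_comp.measure_lt_top.ne
  have hcont : Continuous fun x : EuclideanSpace ℝ (Fin n) => capRad K θ ⟪x, θ⟫ :=
    (capRad_cont hK_comp hθ).comp (by fun_prop)
  have hV : 0 < (volume K).toReal := ENNReal.toReal_pos hpos.ne' hfin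
  set R : ℝ := (volume K).toReal ^ ((n : ℝ)⁻¹) with hRdef
  have hR : 0 < R := Real.rpow_pos_of_pos hV _
  have hRn : R ^ n = (volume K).toReal := Real.rpow_inv_natCast_pow hV.le (by omega)
  have hRK : volume K = ENNReal.ofReal (R ^ n) := by rw [hRn, ENNReal.ofReal_toReal hfin]
  have jen := (capRad_concave (θ := θ) hn hK_comp hK_conv).le_map_set_average (μ := volume) (t := K)
    (f := fun x => x) hcont.continuousOn hK_comp.isClosed hpos.ne' hfin
    (ae_restrict_mem hK_comp.measurableSet) (continuous_id.continuousOn.integrableOn_compact hK_comp)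
    (hcont.continuousOn.integrableOn_compact hK_comp)
  rw [setAverage_eq, setAverage_eq, measureReal_def, hK_cent, inner_zero_left, ← hRn,
    smul_eq_mul] at jen
  have low := int_lower hn hK_comp hθ hR.le hRK
  have h1 : (n / (n + 1) : ℝ) * R ≤ capRad K θ 0 := by
    refine le_trans ?_ jen
    rw [inv_mul_eq_div, le_div_iff₀ (by positivity)]
    calc _ = (n / (n + 1) : ℝ) * R ^ (n + 1) := by ring
      _ ≤ _ := low
  change _ ≤ volume (capSet K θ 0)
  rw [vol_cap hn hK_comp, hRK, ← ENNReal.ofReal_mul (by positivity), ← mul_pow]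
  exact ENNReal.ofReal_le_ofReal (pow_le_pow_left₀ (by positivity) h1 n)
end

section
/- Fix θ ∈ S^{n-1} and γ > 0. Let f : ℝ^n → [0,∞) be a γ-concave function, continuous on its support K_f, with 0 < ∫_{ℝ^n} f(x) dx < ∞ and centroid at the origin (so in particular f(0) > 0 and ∫_0^∞ f(sθ) ds > 0). Set β := γ f(0)^{γ+1} / ( (γ+1) ∫_0^∞ f(sθ) ds ), let f_o(s) := f(sθ), and define H̃(o) := max over a ∈ supp(f_o) of ( [ (β(γ+1)/γ) ∫_a^∞ f_o(s) ds ]^{γ/(γ+1)} + β a ). Then H̃(o) = f(0)^γ. -/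
open MeasureTheory Set
open scoped RealInnerProductSpace

lemma oneD (γ : ℝ) (hγ : 0 < γ) (h : ℝ → ℝ) (hnn : ∀ s, 0 ≤ h s) (h0 : 0 < h 0)
    (hc : ∀ x y z : ℝ, x < y → y < z → h x ≠ 0 → h z ≠ 0 →
      h y ≠ 0 ∧ (z - y) * h x ^ γ + (y - x) * h z ^ γ ≤ (z - x) * h y ^ γ)
    (hint : ∀ a, IntegrableOn h (Ioi a)) (hI : 0 < ∫ s in Ioi (0:ℝ), h s)
    (β : ℝ) (hβ : β = γ * h 0 ^ (γ + 1) / ((γ + 1) * ∫ s in Ioi (0 : ℝ), h s))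
    (a : ℝ) (ha : h a ≠ 0) :
    ((β * (γ + 1) / γ) * ∫ s in Ioi a, h s) ^ (γ / (γ + 1)) + β * a ≤ h 0 ^ γ := by
  set I := ∫ s in Ioi (0:ℝ), h s with hIdef
  set m := h 0 ^ γ with hm
  have hm0 : 0 < m := Real.rpow_pos_of_pos h0 _
  have hp0 : 0 < h 0 ^ (γ + 1) := Real.rpow_pos_of_pos h0 _
  have hβ0 : 0 < β := by rw [hβ]; positivity
  set q := 1 / γ + 1 with hq
  have hq0 : 0 < q := by positivity
  have hmq : m ^ q = h 0 ^ (γ + 1) := by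
    rw [hm, ← Real.rpow_mul h0.le]; congr 1; rw [hq]; field_simp; ring
  have hKI : I = β⁻¹ * (m ^ q / q) := by
    rw [hmq, hβ, hq]; field_simp; ring
  set c := m / β with hcdef
  have hc0 : 0 < c := by positivity
  have hcL : m - β * c = 0 := by rw [hcdef]; field_simp; ring
  have hii : ∀ u v, IntervalIntegrable h volume u v := fun u v =>
    (intervalIntegrable_iff.2 ((hint (min u v)).mono_set (by
      rw [uIoc]; exact Ioc_subset_Ioi_self)))
  have hLi : ∀ u v, IntervalIntegrable (fun s => (m - β * s) ^ (1 / γ)) volume u v := fun u v => by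
    apply Continuous.intervalIntegrable
    exact (by fun_prop : Continuous fun s : ℝ => m - β * s).rpow_const
      (fun _ => Or.inr (by positivity))
  have hLint : ∀ u v, ∫ s in u..v, (m - β * s) ^ (1 / γ)
      = β⁻¹ * (((m - β * u) ^ q - (m - β * v) ^ q) / q) := fun u v => by
    rw [intervalIntegral.integral_comp_sub_mul (fun x => x ^ (1 / γ)) hβ0.ne',
      integral_rpow (Or.inl (by have : 0 < 1 / γ := by positivity
                                linarith)), smul_eq_mul]
  have hFsplit : ∀ u v, u ≤ v → ∫ s in Ioi u, h s = (∫ s in u..v, h s) + ∫ s in Ioi v, h s :=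
    fun u v huv => by
      rw [intervalIntegral.integral_of_le huv, ← setIntegral_union _ measurableSet_Ioi
        ((hint u).mono_set Ioc_subset_Ioi_self) (hint v), Ioc_union_Ioi_eq_Ioi huv]
      exact Set.disjoint_left.2 fun x hx hx' => not_lt.2 hx.2 hx'
  have hgL : ∀ s, h s = (h s ^ γ) ^ (1 / γ) := fun s => by
    rw [← Real.rpow_mul (hnn s), mul_one_div_cancel hγ.ne', Real.rpow_one]
  have hpos : ∀ s, h s ≠ 0 → 0 < h s ^ γ := fun s hs =>
    Real.rpow_pos_of_pos (lt_of_le_of_ne (hnn s) (Ne.symm hs)) _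
  have hLpos : ∀ s, s < c → 0 < m - β * s := fun s hs => by
    have := mul_lt_mul_of_pos_left hs hβ0; linarith
  have hγ' : 0 < 1 / γ := by positivity
  have hLc : ∫ s in (0:ℝ)..c, (m - β * s) ^ (1 / γ) = I := by
    rw [hLint, hcL, Real.zero_rpow hq0.ne', hKI]; simp
  have hi : ∀ s, h s ≠ 0 → s < c := by
    intro s hs
    by_contra hcs
    push Not at hcs
    have hs0 : 0 < s := hc0.trans_le hcs
    have key : ∀ t ∈ Ioo (0:ℝ) c, 0 < h t - (m - β * t) ^ (1 / γ) := by
      intro t ht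
      have h1 := (hc 0 t s ht.1 (ht.2.trans_le hcs) h0.ne' hs).2
      have h2 := mul_pos ht.1 (hpos s hs)
      have h3 : (m - β * t) < h t ^ γ := by
        by_contra hcon
        push Not at hcon
        have h4 := mul_le_mul_of_nonneg_left hcon hs0.le
        have h5 : 0 ≤ (s - c) * β * t := mul_nonneg (mul_nonneg (by linarith) hβ0.le) ht.1.le
        have h6 : c * β * t = m * t := by rw [hcdef]; field_simp
        rw [← hm] at h1
        nlinarith
      rw [hgL t]
      have := Real.rpow_lt_rpow (hLpos t ht.2).le h3 hγ'
      linarith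
    have h1 := intervalIntegral.intervalIntegral_pos_of_pos_on ((hii 0 c).sub (hLi 0 c)) key hc0
    rw [intervalIntegral.integral_sub (hii _ _) (hLi _ _), hLc] at h1
    have h2 := hFsplit 0 c hc0.le
    have h3 : 0 ≤ ∫ s in Ioi c, h s := integral_nonneg hnn
    linarith
  have hFc : ∫ s in Ioi c, h s = 0 := by
    apply setIntegral_eq_zero_of_forall_eq_zero
    intro x hx
    by_contra hne
    exact lt_asymm (hi x hne) hx
  have hmain : ∫ s in Ioi a, h s ≤ β⁻¹ * ((m - β * a) ^ q / q) := by
    have hac := hi a ha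
    rcases lt_or_ge a 0 with ha0 | ha0
    · have claim : ∀ s ∈ Icc a 0, h s ≤ (m - β * s) ^ (1 / γ) := by
        intro s hs
        rw [hgL s]
        apply Real.rpow_le_rpow (Real.rpow_nonneg (hnn s) _) _ hγ'.le
        by_contra hcon
        push Not at hcon
        have hs0 : s < 0 := by
          rcases hs.2.lt_or_eq with h | h
          · exact h
          · subst h; simp [hm] at hcon
        have hsT : h s ≠ 0 := by
          intro h'
          rw [h', Real.zero_rpow hγ.ne'] at hcon
          have := hLpos s (by linarith)
          linarith
        have key : ∀ t ∈ Ioo (0:ℝ) c, 0 < (m - β * t) ^ (1 / γ) - h t := by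
          intro t ht
          rw [sub_pos]
          by_cases htT : h t = 0
          · rw [htT]; exact Real.rpow_pos_of_pos (hLpos t ht.2) _
          · rw [hgL t]
            apply Real.rpow_lt_rpow (hpos t htT).le _ hγ'
            by_contra hcon2
            push Not at hcon2
            have h1 := (hc s 0 t hs0 ht.1 hsT htT).2
            rw [← hm] at h1
            have h2 := mul_lt_mul_of_pos_left hcon ht.1
            have h3 := mul_le_mul_of_nonneg_left hcon2 (by linarith : 0 ≤ -s)
            nlinarith
        have h1 := intervalIntegral.intervalIntegral_pos_of_pos_on ((hLi 0 c).sub (hii 0 c)) key hc0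
        rw [intervalIntegral.integral_sub (hLi _ _) (hii _ _), hLc] at h1
        have h2 := hFsplit 0 c hc0.le
        linarith
      have h1 := intervalIntegral.integral_mono_on ha0.le (hii a 0) (hLi a 0) claim
      rw [hLint] at h1
      rw [hFsplit a 0 ha0.le, ← hIdef, hKI]
      simp only [mul_zero, sub_zero] at h1
      rw [sub_div, mul_sub] at h1
      linarith
    · rcases le_or_gt (m - β * a) (h a ^ γ) with hga | hga
      · have claim : ∀ s ∈ Icc 0 a, (m - β * s) ^ (1 / γ) ≤ h s := by
          intro s hs
          rw [hgL s]
          apply Real.rpow_le_rpow (hLpos s (by linarith [hs.2])).le _ hγ'.le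
          rcases hs.1.eq_or_lt with h | hs1
          · subst h; simp [hm]
          rcases hs.2.eq_or_lt with h | hs2
          · subst h; exact hga
          have h1 := (hc 0 s a hs1 hs2 h0.ne' ha).2
          rw [← hm] at h1
          by_contra hcon
          push Not at hcon
          have h2 := mul_lt_mul_of_pos_left hcon (hs1.trans hs2)
          have h3 := mul_le_mul_of_nonneg_left hga hs1.le
          nlinarith
        have h1 := intervalIntegral.integral_mono_on ha0 (hLi 0 a) (hii 0 a) claim
        rw [hLint] at h1
        have h2 := hFsplit 0 a ha0
        rw [← hIdef, hKI] at h2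
        simp only [mul_zero, sub_zero] at h1
        rw [sub_div, mul_sub] at h1
        linarith
      · have ha1 : 0 < a := by
          rcases ha0.eq_or_lt with h | h
          · subst h; simp [hm] at hga
          · exact h
        have claim : ∀ s ∈ Icc a c, h s ≤ (m - β * s) ^ (1 / γ) := by
          intro s hs
          by_cases hsT : h s = 0
          · rw [hsT]
            apply Real.rpow_nonneg
            have := mul_le_mul_of_nonneg_left hs.2 hβ0.le
            linarith
          rw [hgL s]
          apply Real.rpow_le_rpow (hpos s hsT).le _ hγ'.le
          rcases hs.1.eq_or_lt with h | hs1
          · subst h; exact hga.le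
          by_contra hcon
          push Not at hcon
          have h1 := (hc 0 a s ha1 hs1 h0.ne' hsT).2
          rw [← hm] at h1
          have h2 := mul_lt_mul_of_pos_left hga (ha1.trans hs1)
          have h3 := mul_lt_mul_of_pos_left hcon ha1
          nlinarith
        have h1 := intervalIntegral.integral_mono_on hac.le (hii a c) (hLi a c) claim
        rw [hLint, hcL, Real.zero_rpow hq0.ne', sub_zero] at h1
        rw [hFsplit a c hac.le, hFc]
        linarith
  have hLa := hLpos a (hi a ha)
  have hC : β * (γ + 1) / γ = β * q := by rw [hq]; field_simp; ring
  have hle : (β * (γ + 1) / γ) * ∫ s in Ioi a, h s ≤ (m - β * a) ^ q := by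
    rw [hC]
    refine (mul_le_mul_of_nonneg_left hmain (by positivity)).trans (le_of_eq ?_)
    field_simp
  have h1 := Real.rpow_le_rpow (mul_nonneg (by positivity) (integral_nonneg hnn)) hle
    (by positivity : 0 ≤ γ / (γ + 1))
  rw [← Real.rpow_mul hLa.le, (by rw [hq]; field_simp; ring : q * (γ / (γ + 1)) = 1),
    Real.rpow_one] at h1
  linarith

theorem Htilde_at_origin
    (n : ℕ) (hn : 1 ≤ n)
    (θ : EuclideanSpace ℝ (Fin n)) (hθ : ‖θ‖ = 1)
    (γ : ℝ) (hγ : 0 < γ)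
    (f : EuclideanSpace ℝ (Fin n) → ℝ)
    (hf_nonneg : ∀ x, 0 ≤ f x)
    (hf_concave : ∀ x y : EuclideanSpace ℝ (Fin n), f x ≠ 0 → f y ≠ 0 →
      ∀ l : ℝ, 0 ≤ l → l ≤ 1 →
        (l * f x ^ γ + (1 - l) * f y ^ γ) ^ (1 / γ) ≤ f (l • x + (1 - l) • y))
    (hf_cont : ContinuousOn f (tsupport f))
    (hf_int : Integrable f)
    (hf_pos : 0 < ∫ x, f x)
    (hf_cent_int : Integrable (fun x => f x • x))
    (hf_cent : (∫ x, f x • x) = (0 : EuclideanSpace ℝ (Fin n)))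
    (β : ℝ)
    (hβ : β = γ * f 0 ^ (γ + 1) / ((γ + 1) * ∫ s in Ioi (0 : ℝ), f (s • θ)))
    (Ha : ℝ → ℝ)
    (hHa : ∀ a, Ha a =
      ((β * (γ + 1) / γ) * ∫ s in Ioi a, f (s • θ)) ^ (γ / (γ + 1)) + β * a) :
    -- in particular `f(0) > 0` and `∫_0^∞ f(sθ) ds > 0`,
    0 < f 0 ∧ 0 < (∫ s in Ioi (0 : ℝ), f (s • θ)) ∧
    -- and `H̃(o) = f(0)^γ`.
    sSup (Ha '' tsupport fun s : ℝ => f (s • θ)) = f 0 ^ γ := by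
  have hfp : ∀ x, f x ≠ 0 → 0 < f x := fun x hx => lt_of_le_of_ne (hf_nonneg x) (Ne.symm hx)
  have hA : ∀ x y : EuclideanSpace ℝ (Fin n), f x ≠ 0 → f y ≠ 0 → ∀ l : ℝ, 0 ≤ l → l ≤ 1 →
      f (l • x + (1 - l) • y) ≠ 0 ∧
      l * f x ^ γ + (1 - l) * f y ^ γ ≤ f (l • x + (1 - l) • y) ^ γ := by
    intro x y hx hy l hl hl1
    have h1 := hf_concave x y hx hy l hl hl1
    have hx' := Real.rpow_pos_of_pos (hfp x hx) γ
    have hy' := Real.rpow_pos_of_pos (hfp y hy) γ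
    have hp : 0 < l * f x ^ γ + (1 - l) * f y ^ γ := by
      rcases hl.eq_or_lt with h | h
      · subst h; simpa using hy'
      · have h2 := mul_pos h hx'
        have h3 := mul_nonneg (by linarith : 0 ≤ 1 - l) hy'.le
        linarith
    refine ⟨((Real.rpow_pos_of_pos hp _).trans_le h1).ne', ?_⟩
    have h2 := Real.rpow_le_rpow (Real.rpow_nonneg hp.le _) h1 hγ.le
    rwa [← Real.rpow_mul hp.le, one_div_mul_cancel hγ.ne', Real.rpow_one] at h2
  have hK : Convex ℝ (Function.support f) := by
    intro x hx y hy a b ha hb hab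
    have := (hA x y hx hy a ha (by linarith)).1
    rwa [← eq_sub_of_add_eq' hab] at this
  have hKpos : volume (Function.support f) ≠ 0 := by
    have := (integral_pos_iff_support_of_nonneg hf_nonneg hf_int).1 hf_pos
    exact this.ne'
  have hKint : (interior (Function.support f)).Nonempty := by
    rw [hK.interior_nonempty_iff_affineSpan_eq_top]
    by_contra hne
    exact hKpos (measure_mono_null (subset_affineSpan ℝ _) (Measure.addHaar_affineSubspace _ _ hne))
  have h0int : (0 : EuclideanSpace ℝ (Fin n)) ∈ interior (Function.support f) := by
    by_contra hn0
    obtain ⟨φ, hφ⟩ := geometric_hahn_banach_open_point hK.interior isOpen_interior hn0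
    simp only [map_zero] at hφ
    have hφK : ∀ x ∈ Function.support f, φ x ≤ 0 := by
      intro x hx
      have hx' : x ∈ closure (interior (Function.support f)) := by
        rw [hK.closure_interior_eq_closure_of_nonempty_interior hKint]
        exact subset_closure hx
      exact closure_minimal (fun y hy => (hφ y hy).le)
        (isClosed_le φ.continuous continuous_const) hx'
    have hi0 : ∫ x, -φ (f x • x) = 0 := by
      rw [integral_neg, φ.integral_comp_comm hf_cent_int, hf_cent]; simp
    have hi1 : 0 < ∫ x, -φ (f x • x) := by
      have hin : Integrable (fun x => -φ (f x • x)) := (φ.integrable_comp hf_cent_int).neg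
      rw [integral_pos_iff_support_of_nonneg _ hin]
      · refine (isOpen_interior.measure_pos volume hKint).trans_le (measure_mono ?_)
        intro x hx
        have h1 := hφ x hx
        have h2 : f x ≠ 0 := interior_subset hx
        simp [h2, h1.ne]
      · intro x
        by_cases hx : f x = 0
        · simp [hx]
        · have h1 := hφK x hx
          have h2 := mul_nonpos_of_nonneg_of_nonpos (hf_nonneg x) h1
          simpa using h2
    linarith
  have hf0 : 0 < f 0 := hfp 0 (interior_subset h0int)
  have hcont0 : ContinuousAt f 0 := hf_cont.continuousAt
    (Filter.mem_of_superset (mem_interior_iff_mem_nhds.1 h0int) (subset_tsupport f))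
  obtain ⟨ε, hε, hball⟩ : ∃ ε > 0, ∀ x ∈ Metric.ball (0 : EuclideanSpace ℝ (Fin n)) ε,
      f 0 / 2 < f x := by
    have := hcont0.eventually (lt_mem_nhds (half_lt_self hf0))
    exact Metric.eventually_nhds_iff_ball.1 this
  set h : ℝ → ℝ := fun s => f (s • θ) with hh
  have hh0 : h 0 = f 0 := by simp [hh]
  have hc : ∀ x y z : ℝ, x < y → y < z → h x ≠ 0 → h z ≠ 0 →
      h y ≠ 0 ∧ (z - y) * h x ^ γ + (y - x) * h z ^ γ ≤ (z - x) * h y ^ γ := by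
    intro x y z hxy hyz hx hz
    have hzx : 0 < z - x := by linarith
    obtain ⟨h1, h2⟩ := hA (x • θ) (z • θ) hx hz ((z - y) / (z - x))
      (div_nonneg (by linarith) hzx.le) ((div_le_one hzx).2 (by linarith))
    have he : ((z - y) / (z - x)) • x • θ + (1 - (z - y) / (z - x)) • z • θ = y • θ := by
      rw [smul_smul, smul_smul, ← add_smul]
      congr 1
      field_simp
      ring
    rw [he] at h1 h2
    refine ⟨h1, ?_⟩
    have h3 := mul_le_mul_of_nonneg_left h2 hzx.le
    refine le_trans (le_of_eq ?_) h3
    simp only [hh]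
    field_simp
    ring
  have hbdd : ∃ b, ∀ s, h s ≠ 0 → s ≤ b := by
    by_contra hcon
    push Not at hcon
    set m := f 0 ^ γ with hm
    have hm0 : 0 < m := Real.rpow_pos_of_pos hf0 _
    have hray : ∀ s, 0 ≤ s → h s ≠ 0 ∧ m / 2 ≤ h s ^ γ := by
      intro s hs
      rcases hs.eq_or_lt with h' | hs
      · subst h'; rw [hh0]; exact ⟨hf0.ne', by linarith⟩
      obtain ⟨z, hz, hsz⟩ := hcon (2 * s)
      obtain ⟨h1, h2⟩ := hc 0 s z hs (by linarith) (by rw [hh0]; exact hf0.ne') hz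
      refine ⟨h1, ?_⟩
      rw [hh0, ← hm] at h2
      have h3 : 0 ≤ (s - 0) * h z ^ γ :=
        mul_nonneg (by linarith) (Real.rpow_nonneg (hf_nonneg _) _)
      have hzp : 0 < z := by linarith
      have h4 : z * (m / 2) ≤ z * h s ^ γ := by nlinarith
      exact le_of_mul_le_mul_left h4 hzp
    set c := min ((f 0 / 2) ^ γ) (m / 2) with hcd
    have hc0 : 0 < c := lt_min (Real.rpow_pos_of_pos (by linarith) _) (by linarith)
    have hsub : ∀ r : ℝ, 0 ≤ r → Metric.ball (r • θ) (ε / 2) ⊆ {x | c ^ (1 / γ) ≤ f x} := by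
      intro r hr y hy
      have hx : (2 : ℝ) • (y - r • θ) ∈ Metric.ball (0 : EuclideanSpace ℝ (Fin n)) ε := by
        rw [mem_ball_zero_iff, norm_smul, ← dist_eq_norm]
        have := Metric.mem_ball.1 hy
        norm_num
        linarith
      have h1 := hball _ hx
      obtain ⟨h2, h3⟩ := hray (2 * r) (by linarith)
      obtain ⟨h4, h5⟩ := hA _ _ (show f ((2 : ℝ) • (y - r • θ)) ≠ 0 by
        intro h'; rw [h'] at h1; linarith) h2 (1 / 2) (by norm_num) (by norm_num)
      have he : (1 / 2 : ℝ) • (2 : ℝ) • (y - r • θ) + (1 - 1 / 2 : ℝ) • (2 * r) • θ = y := by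
        module
      rw [he] at h5
      have h6 : (f 0 / 2) ^ γ ≤ f ((2 : ℝ) • (y - r • θ)) ^ γ :=
        Real.rpow_le_rpow (by linarith) h1.le hγ.le
      have h7 : c ≤ f y ^ γ := by
        have h8 : c ≤ (f 0 / 2) ^ γ := min_le_left _ _
        have h9 : c ≤ m / 2 := min_le_right _ _
        simp only [hh] at h3
        linarith
      have h10 := Real.rpow_le_rpow hc0.le h7 (by positivity : 0 ≤ 1 / γ)
      rwa [← Real.rpow_mul (hf_nonneg y), mul_one_div_cancel hγ.ne', Real.rpow_one] at h10
    have hfin : volume {x | c ^ (1 / γ) ≤ f x} < ⊤ :=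
      hf_int.measure_ge_lt_top (Real.rpow_pos_of_pos hc0 _)
    have hU : volume (⋃ k : ℕ, Metric.ball (((k : ℝ) * ε) • θ) (ε / 2)) = ⊤ := by
      rw [measure_iUnion _ (fun _ => measurableSet_ball)]
      · simp_rw [Measure.addHaar_ball_center]
        exact ENNReal.tsum_const_eq_top_of_ne_zero
          (Metric.measure_ball_pos volume _ (by linarith)).ne'
      · intro i j hij
        apply Metric.ball_disjoint_ball
        rw [dist_eq_norm, ← sub_smul, norm_smul, hθ, mul_one, ← sub_mul, norm_mul,
          Real.norm_of_nonneg hε.le]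
        have : (1 : ℝ) ≤ ‖(i : ℝ) - j‖ := by
          have h1 : (1 : ℤ) ≤ |(i : ℤ) - j| := Int.one_le_abs (by omega)
          rw [Real.norm_eq_abs]
          exact_mod_cast h1
        nlinarith
    have := measure_mono (μ := volume) (iUnion_subset fun k : ℕ =>
      hsub ((k : ℝ) * ε) (by positivity))
    rw [hU] at this
    exact absurd hfin (not_lt.2 this)
  obtain ⟨b, hb⟩ := hbdd
  have hint : ∀ a, IntegrableOn h (Ioi a) := by
    intro a
    have hS : IsClosed ((fun s : ℝ => s • θ) ⁻¹' tsupport f) :=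
      (isClosed_tsupport f).preimage (by fun_prop)
    have hcS : ContinuousOn h ((fun s : ℝ => s • θ) ⁻¹' tsupport f) :=
      hf_cont.comp (by fun_prop : Continuous fun s : ℝ => s • θ).continuousOn (fun _ hx => hx)
    have h1 : IntegrableOn h (Icc a b ∩ ((fun s : ℝ => s • θ) ⁻¹' tsupport f)) :=
      (hcS.mono inter_subset_right).integrableOn_compact (isCompact_Icc.inter_right hS)
    refine IntegrableOn.of_forall_sdiff_eq_zero h1 measurableSet_Ioi ?_
    intro x hx
    by_contra hne
    exact hx.2 ⟨⟨le_of_lt hx.1, hb x hne⟩, subset_tsupport f hne⟩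
  have hI : 0 < ∫ s in Ioi (0:ℝ), h s := by
    rw [setIntegral_pos_iff_support_of_nonneg_ae (Filter.Eventually.of_forall fun s => hf_nonneg _)
      (hint 0)]
    refine lt_of_lt_of_le ?_ (measure_mono (show Ioo 0 ε ⊆ _ from ?_))
    · simp [hε]
    · intro s hs
      refine ⟨?_, hs.1⟩
      have := hball (s • θ) (by
        rw [mem_ball_zero_iff, norm_smul, hθ, mul_one, Real.norm_of_nonneg hs.1.le]; exact hs.2)
      exact (lt_trans (by linarith) this).ne'
  refine ⟨hf0, hI, ?_⟩
  have hmain : ∀ a, h a ≠ 0 → Ha a ≤ f 0 ^ γ := by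
    intro a ha
    rw [hHa, ← hh0]
    exact oneD γ hγ h (fun _ => hf_nonneg _) (by rw [hh0]; exact hf0) hc hint hI β
      (by rw [hh0]; exact hβ) a ha
  have hii : ∀ u v, IntervalIntegrable h volume u v := fun u v =>
    (intervalIntegrable_iff.2 ((hint (min u v)).mono_set (by
      rw [uIoc]; exact Ioc_subset_Ioi_self)))
  have hHc : Continuous Ha := by
    have hF : (fun a => ∫ s in Ioi a, h s) =
        fun a => (∫ s in Ioi (0:ℝ), h s) - ∫ s in (0:ℝ)..a, h s := by
      funext a
      rw [← intervalIntegral.integral_Ioi_sub_Ioi' (hint 0) (hint a)]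
      ring
    have hFc : Continuous fun a => ∫ s in Ioi a, h s := by
      rw [hF]
      exact continuous_const.sub (intervalIntegral.continuous_primitive hii 0)
    rw [funext hHa]
    exact ((continuous_const.mul hFc).rpow_const
      (fun _ => Or.inr (by positivity))).add (by fun_prop)
  have hH0 : Ha 0 = f 0 ^ γ := by
    rw [hHa, hβ]
    have : γ * f 0 ^ (γ + 1) / ((γ + 1) * ∫ s in Ioi (0:ℝ), h s) * (γ + 1) / γ *
        ∫ s in Ioi (0:ℝ), h s = f 0 ^ (γ + 1) := by
      field_simp
    rw [this, ← Real.rpow_mul hf0.le, mul_zero, add_zero]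
    congr 1
    field_simp
  apply IsGreatest.csSup_eq
  refine ⟨⟨0, subset_tsupport _ (by rw [Function.mem_support, hh0]; exact hf0.ne'), hH0⟩, ?_⟩
  rintro _ ⟨a, ha, rfl⟩
  exact closure_minimal (s := Function.support h) (fun y hy => hmain y hy)
    (isClosed_le hHc continuous_const) ha
end

section
/- Fix γ > 0, unit vectors θ, ξ ∈ S^{n-1} with ⟨θ,ξ⟩ > 0, real numbers r_0 < r_1, a constant m > 0, and an (n−1)-dimensional convex body D ⊂ ξ^⊥ whose centroid (taken within ξ^⊥) is at the origin. Let K_T = conv( r_0 θ , r_1 θ + D ) and T(x) = m · 𝟙_{K_T}(x) · ( −⟨x,ξ⟩ + r_1⟨θ,ξ⟩ )^{1/γ}. Then the centroid of T satisfies g(T) = [ ( nγ r_1 + (γ+1) r_0 ) / ( (n+1)γ + 1 ) ] θ. In particular, g(T) is at the origin if and only if r_0 = −( nγ/(γ+1) ) r_1. -/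
open MeasureTheory Set
open scoped RealInnerProductSpace


theorem hull_image {E : Type*} [AddCommGroup E] [Module ℝ E] (p q : E) (D : Set E)
    (hD : Convex ℝ D) (hne : D.Nonempty) :
    convexHull ℝ (insert p ((fun d => q + d) '' D)) =
      (fun z : ℝ × E => p + z.1 • (q - p) + z.1 • z.2) '' (Icc (0:ℝ) 1 ×ˢ D) := by
  have h1 : Convex ℝ ((fun d => q + d) '' D) := hD.translate q
  rw [convexHull_insert (hne.image _), h1.convexHull_eq]
  ext x
  simp only [mem_convexJoin, mem_singleton_iff, exists_eq_left, mem_image, exists_exists_and_eq_and,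
    Prod.exists, mem_prod, mem_Icc, segment_eq_image]
  constructor
  · rintro ⟨d, hd, t, ht, rfl⟩
    exact ⟨t, d, ⟨ht, hd⟩, by module⟩
  · rintro ⟨t, d, ⟨ht, hd⟩, rfl⟩
    exact ⟨d, hd, t, ht, by module⟩

theorem beta_cont (k : ℕ) (a : ℝ) (ha : 0 < a) :
    Continuous (fun t : ℝ => (1 - t) ^ a * t ^ k) :=
  ((continuous_const.sub continuous_id).rpow_const (fun _ => Or.inr ha.le)).mul (continuous_pow k)

theorem beta_ratio (k : ℕ) (a : ℝ) (ha : 0 < a) :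
    ((k:ℝ) + 2 + a) * (∫ t in (0:ℝ)..1, (1 - t) ^ a * t ^ (k+1)) =
      ((k:ℝ) + 1) * ∫ t in (0:ℝ)..1, (1 - t) ^ a * t ^ k := by
  have h : ∫ t in (0:ℝ)..1, (((k:ℝ)+1) * ((1 - t) ^ a * t ^ k) -
      ((k:ℝ)+2+a) * ((1 - t) ^ a * t ^ (k+1))) =
      (1:ℝ) ^ (k+1) * (1 - 1) ^ (a+1) - 0 ^ (k+1) * (1 - 0) ^ (a+1) := by
    refine intervalIntegral.integral_eq_sub_of_hasDerivAt
      (f := fun t : ℝ => t ^ (k+1) * (1 - t) ^ (a+1)) ?_ ?_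
    · intro t ht
      rw [uIcc_of_le zero_le_one] at ht
      have h1 := (hasDerivAt_pow (k+1) t).mul
        (((hasDerivAt_id t).const_sub 1).rpow_const (p := a+1) (Or.inr (by linarith)))
      refine h1.congr_deriv ?_
      have : (1 - t) ^ (a+1) = (1-t)^a * (1-t) := by
        rw [Real.rpow_add_one' (by linarith [ht.2]) (by linarith)]
      simp only [id, Nat.add_sub_cancel, add_sub_cancel_right, this]
      push_cast
      ring
    · exact (((beta_cont k a ha).const_mul _).sub ((beta_cont (k+1) a ha).const_mul _)).intervalIntegrable _ _
  rw [intervalIntegral.integral_sub, intervalIntegral.integral_const_mul,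
    intervalIntegral.integral_const_mul] at h
  · rw [sub_self, Real.zero_rpow (by linarith)] at h
    simp at h
    linarith
  · exact ((beta_cont k a ha).const_mul _).intervalIntegrable _ _
  · exact ((beta_cont (k+1) a ha).const_mul _).intervalIntegrable _ _

theorem beta_pos (k : ℕ) (a : ℝ) (ha : 0 < a) :
    0 < ∫ t in (0:ℝ)..1, (1 - t) ^ a * t ^ k := by
  refine intervalIntegral.intervalIntegral_pos_of_pos_on
    ((beta_cont k a ha).intervalIntegrable _ _) ?_ zero_lt_one
  intro t ht
  have := Real.rpow_pos_of_pos (sub_pos.2 ht.2) a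
  have := pow_pos ht.1 k
  positivity
open scoped Pointwise in
theorem cone_integral {E : Type} [NormedAddCommGroup E] [InnerProductSpace ℝ E]
    [FiniteDimensional ℝ E] [MeasurableSpace E] [BorelSpace E] (μ : Measure E) [μ.IsAddHaarMeasure]
    (H : Submodule ℝ E) (ν : Measure H) [ν.IsAddHaarMeasure] (w p : E) (hw : w ∉ H)
    (hfin : Module.finrank ℝ E = Module.finrank ℝ H + 1)
    (D : Set H) (hD : IsCompact D) :
    ∃ c : ℝ, 0 < c ∧ ∀ (G : Type) [NormedAddCommGroup G] [NormedSpace ℝ G] (f : E → G),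
      Continuous f →
      ∫ x in (fun z : ℝ × E => p + z.1 • w + z.1 • z.2) '' (Icc (0:ℝ) 1 ×ˢ ((↑) '' D)), f x ∂μ
       = c • ∫ t in (0:ℝ)..1, t ^ (Module.finrank ℝ H) • ∫ y in D, f (p + t • w + t • (y:E)) ∂ν := by
  set KT := (fun z : ℝ × E => p + z.1 • w + z.1 • z.2) '' (Icc (0:ℝ) 1 ×ˢ ((↑) '' D)) with hKT
  have hKc : IsCompact KT := by
    refine (isCompact_Icc.prod (hD.image continuous_subtype_val)).image ?_
    fun_prop
  have huniq : ∀ (s t : ℝ) (y z : H), s • w + (y:E) = t • w + z → s = t ∧ y = z := by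
    intro s t y z h
    have h1 : (s - t) • w ∈ H := by
      have : (s - t) • w = ((z - y : H) : E) := by
        rw [sub_smul, Submodule.coe_sub, sub_eq_sub_iff_add_eq_add, h, add_comm]
      rw [this]; exact (z - y).2
    have h2 : s = t := by
      by_contra hne
      exact hw ((H.smul_mem_iff (sub_ne_zero.2 hne)).1 h1)
    subst h2
    exact ⟨rfl, Subtype.ext (add_left_cancel h)⟩
  let L0 : (ℝ × H) →ₗ[ℝ] E := (LinearMap.toSpanSingleton ℝ E w).coprod H.subtype
  have hL0 : ∀ z, L0 z = z.1 • w + (z.2 : E) := fun z => by simp [L0]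
  have hinj : Function.Injective L0 := by
    intro x y h
    rw [hL0, hL0] at h
    exact Prod.ext (huniq _ _ _ _ h).1 (huniq _ _ _ _ h).2
  let L : (ℝ × H) ≃L[ℝ] E := (LinearEquiv.ofInjectiveOfFinrankEq L0 hinj
    (by simp [hfin, add_comm])).toContinuousLinearEquiv
  have hL : ∀ z, L z = z.1 • w + (z.2 : E) := hL0
  let μ' : Measure E := (volume.prod ν).map L
  have : μ'.IsAddHaarMeasure := by
    show ((volume.prod ν).map L).IsAddHaarMeasure
    infer_instance
  obtain ⟨c, hc0, hc⟩ : ∃ c : NNReal, 0 < c ∧ μ = c • μ' :=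
    ⟨_, Measure.addHaarScalarFactor_pos_of_isAddHaarMeasure μ μ',
      Measure.isAddLeftInvariant_eq_smul μ μ'⟩
  refine ⟨c, hc0, fun G _ _ f hf => ?_⟩
  have hme : MeasurableEmbedding L := L.toHomeomorph.measurableEmbedding
  have hint : Integrable (fun x => KT.indicator f (p + x)) μ' := by
    have h1 : Integrable (KT.indicator f) μ' :=
      (hf.continuousOn.integrableOn_compact hKc).integrable_indicator hKc.measurableSet
    exact h1.comp_add_left p
  have hint2 : Integrable (fun z : ℝ × H => KT.indicator f (p + L z)) (volume.prod ν) :=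
    (hme.integrable_map_iff).1 hint
  have hmem : ∀ (t : ℝ) (y : H), p + L (t, y) ∈ KT ↔ t ∈ Icc (0:ℝ) 1 ∧ ∃ d ∈ D, y = t • d := by
    intro t y
    rw [hL, hKT]
    constructor
    · rintro ⟨⟨s, _⟩, ⟨hs, d, hd, rfl⟩, h⟩
      simp only [add_assoc] at h
      have h3 := huniq s t (s • d) y (by simpa using add_left_cancel h)
      obtain ⟨rfl, rfl⟩ := h3
      exact ⟨hs, d, hd, rfl⟩
    · rintro ⟨ht, d, hd, rfl⟩
      exact ⟨(t, d), ⟨ht, d, hd, rfl⟩, by simp [add_assoc]⟩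
  rw [← integral_indicator hKc.measurableSet, ← integral_add_left_eq_self _ p, hc]
  rw [integral_smul_nnreal_measure, hme.integral_map, integral_prod _ hint2, NNReal.smul_def]
  congr 1
  rw [intervalIntegral.integral_of_le zero_le_one, ← integral_indicator measurableSet_Ioc]
  have hae : ∀ᵐ t : ℝ, t ≠ 0 := by simp [ae_iff]
  refine integral_congr_ae ?_
  filter_upwards [hae] with t ht0
  by_cases ht : t ∈ Ioc (0:ℝ) 1
  · rw [indicator_of_mem ht]
    have hsm : (fun y : H => KT.indicator f (p + L (t, y))) =
        (t • D).indicator (fun y => f (p + t • w + y)) := by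
      ext y
      have hiff : p + L (t, y) ∈ KT ↔ y ∈ t • D := by
        rw [hmem, mem_smul_set]
        constructor
        · rintro ⟨_, d, hd, rfl⟩; exact ⟨d, hd, rfl⟩
        · rintro ⟨d, hd, rfl⟩; exact ⟨⟨ht.1.le, ht.2⟩, d, hd, rfl⟩
      by_cases hy : y ∈ t • D
      · rw [indicator_of_mem hy, indicator_of_mem (hiff.2 hy), hL, add_assoc]
      · rw [indicator_of_notMem hy, indicator_of_notMem (fun h => hy (hiff.1 h))]
    rw [hsm, integral_indicator (hD.smul t).measurableSet]
    have := Measure.setIntegral_comp_smul_of_pos ν (fun y : H => f (p + t • w + y)) D ht.1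
    simp only [Submodule.coe_smul] at this
    rw [this, smul_smul, mul_inv_cancel₀ (pow_ne_zero _ ht0), one_smul]
  · rw [indicator_of_notMem ht]
    have : ∀ y : H, KT.indicator f (p + L (t, y)) = 0 := by
      intro y
      refine indicator_of_notMem (fun h => ht ?_) _
      have := ((hmem t y).1 h).1
      exact ⟨lt_of_le_of_ne this.1 (Ne.symm ht0), this.2⟩
    simp [this]

theorem final_alg (I0 I1 a γ r₀ r₁ C : ℝ) (k : ℕ) (hI0 : 0 < I0) (hC : 0 < C) (hγ : 0 < γ)
    (ha : a = 1 / γ) (h : ((k:ℝ) + 2 + a) * I1 = ((k:ℝ) + 1) * I0) :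
    (C * I0)⁻¹ * (C * (r₀ * I0 + (r₁ - r₀) * I1)) =
     (((k:ℝ)+1) * γ * r₁ + (γ + 1) * r₀) / ((((k:ℝ)+1) + 1) * γ + 1) := by
  have h1 : I1 = ((k:ℝ) + 1) * I0 / ((k:ℝ) + 2 + a) := by
    rw [eq_div_iff (by rw [ha]; positivity)]; linarith
  rw [h1, ha]
  field_simp
  ring

/-- **The centroid of the model γ-affine function.** For
`T(x) = m 𝟙_{K_T}(x) (-⟨x,ξ⟩ + r₁⟨θ,ξ⟩)^{1/γ}` with
`K_T = conv( r₀θ , r₁θ + D )`, the centroid of `T` is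
`g(T) = [ (nγr₁ + (γ+1)r₀) / ((n+1)γ+1) ] θ`; in particular `g(T)` is at the
origin iff `r₀ = -(nγ/(γ+1)) r₁`. -/
theorem model_function_centroid
    (n : ℕ) (hn : 1 ≤ n)
    (γ : ℝ) (hγ : 0 < γ)
    (θ ξ : EuclideanSpace ℝ (Fin n)) (hθ : ‖θ‖ = 1) (hξ : ‖ξ‖ = 1)
    (hθξ : 0 < ⟪θ, ξ⟫)
    (r₀ r₁ : ℝ) (hr : r₀ < r₁)
    (m : ℝ) (hm : 0 < m)
    (D : Set (EuclideanSpace ℝ (Fin n)))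
    (hD_conv : Convex ℝ D) (hD_comp : IsCompact D)
    (hD_sub : D ⊆ {x | ⟪x, ξ⟫ = 0})
    (hD_pos : 0 < μH[(n : ℝ) - 1] D)
    (hD_cent : (μH[(n : ℝ) - 1] D).toReal⁻¹ • (∫ x in D, x ∂μH[(n : ℝ) - 1]) =
      (0 : EuclideanSpace ℝ (Fin n)))
    (KT : Set (EuclideanSpace ℝ (Fin n)))
    (hKT : KT = convexHull ℝ (insert (r₀ • θ) ((fun d => r₁ • θ + d) '' D)))
    (T : EuclideanSpace ℝ (Fin n) → ℝ)
    (hT : ∀ x, T x = m * KT.indicator (fun y => (-⟪y, ξ⟫ + r₁ * ⟪θ, ξ⟫) ^ (1 / γ)) x) :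
    (∫ x, T x)⁻¹ • (∫ x, T x • x) =
        ((n * γ * r₁ + (γ + 1) * r₀) / ((n + 1) * γ + 1)) • θ ∧
      ((∫ x, T x)⁻¹ • (∫ x, T x • x) = (0 : EuclideanSpace ℝ (Fin n)) ↔
        r₀ = -(n * γ / (γ + 1)) * r₁) := by
  let H : Submodule ℝ (EuclideanSpace ℝ (Fin n)) := (ℝ ∙ ξ)ᗮ
  have hξ0 : ξ ≠ 0 := by intro h; simp [h] at hξ
  have hHmem : ∀ x : EuclideanSpace ℝ (Fin n), x ∈ H ↔ ⟪x, ξ⟫ = 0 := fun x =>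
    Submodule.mem_orthogonal_singleton_iff_inner_left
  have hfin : Module.finrank ℝ (EuclideanSpace ℝ (Fin n)) = Module.finrank ℝ H + 1 := by
    have h1 := Submodule.finrank_add_finrank_orthogonal (ℝ ∙ ξ)
    rw [finrank_span_singleton hξ0] at h1
    show _ = Module.finrank ℝ (ℝ ∙ ξ)ᗮ + 1
    omega
  set k := Module.finrank ℝ H with hk
  have hnk : n = k + 1 := by rw [← hfin]; simp
  have hnr : (n:ℝ) = (k:ℝ) + 1 := by rw [hnk]; push_cast; rfl
  have hnk1 : (n:ℝ) - 1 = (k:ℝ) := by rw [hnr]; ring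
  rw [hnk1] at hD_pos hD_cent
  let ν : Measure H := μH[(k:ℝ)]
  have hν : ν.IsAddHaarMeasure := isAddHaarMeasure_hausdorffMeasure
  let D' : Set H := (↑) ⁻¹' D
  have hDD : ((↑) : H → EuclideanSpace ℝ (Fin n)) '' D' = D := by
    ext x
    constructor
    · rintro ⟨y, hy, rfl⟩; exact hy
    · intro hx; exact ⟨⟨x, (hHmem x).2 (hD_sub hx)⟩, hx, rfl⟩
  have hHcl : IsClosed (H : Set (EuclideanSpace ℝ (Fin n))) := H.closed_of_finiteDimensional
  have hemb : Topology.IsClosedEmbedding ((↑) : H → EuclideanSpace ℝ (Fin n)) := hHcl.isClosedEmbedding_subtypeVal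
  have hD'c : IsCompact D' := hemb.isCompact_preimage hD_comp
  have hmap : Measure.map ((↑) : H → EuclideanSpace ℝ (Fin n)) ν = μH[(k:ℝ)].restrict (range ((↑) : H → EuclideanSpace ℝ (Fin n))) :=
    Isometry.map_hausdorffMeasure isometry_subtype_coe (Or.inl (Nat.cast_nonneg k))
  have hDr : D ⊆ range ((↑) : H → EuclideanSpace ℝ (Fin n)) := by
    intro x hx; exact ⟨⟨x, (hHmem x).2 (hD_sub hx)⟩, rfl⟩
  have hνD : ν D' = μH[(k:ℝ)] D := by
    rw [← hDD]; exact (isometry_subtype_coe.hausdorffMeasure_image (Or.inl (Nat.cast_nonneg k)) _).symm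
  have hfinD : ν D' < ⊤ := hD'c.measure_lt_top
  set V := ν.real D' with hV
  have hVpos : 0 < V := ENNReal.toReal_pos (by rw [hνD]; exact hD_pos.ne') hfinD.ne
  have hcent : ∫ y in D', (y : EuclideanSpace ℝ (Fin n)) ∂ν = 0 := by
    have h1 : ∫ x in D, x ∂μH[(k:ℝ)] = (0:EuclideanSpace ℝ (Fin n)) := by
      rcases smul_eq_zero.1 hD_cent with h | h
      · rw [← hνD] at h
        exact absurd h (inv_ne_zero hVpos.ne')
      · exact h
    have h2 := hemb.measurableEmbedding.setIntegral_map (μ := ν) (fun x : EuclideanSpace ℝ (Fin n) => x) D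
    rw [hmap, Measure.restrict_restrict hD_comp.measurableSet, inter_eq_left.2 hDr, h1] at h2
    exact h2.symm
  have hDne : D.Nonempty := by
    rw [nonempty_iff_ne_empty]; rintro rfl; simp at hD_pos
  set κ := ⟪θ, ξ⟫ with hκ
  have hw : (r₁ • θ - r₀ • θ : EuclideanSpace ℝ (Fin n)) ∉ H := by
    rw [hHmem, inner_sub_left, inner_smul_left, inner_smul_left]
    have : (r₁ - r₀) * κ ≠ 0 := (mul_pos (sub_pos.2 hr) hθξ).ne'
    intro h
    apply this
    rw [sub_mul]; exact h
  obtain ⟨c, hc, hcone⟩ := cone_integral (volume : Measure (EuclideanSpace ℝ (Fin n))) H ν (r₁ • θ - r₀ • θ) (r₀ • θ) hw hfin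
    D' hD'c
  rw [hDD, ← hull_image _ _ D hD_conv hDne, ← hKT] at hcone
  have hKTm : MeasurableSet KT := by
    rw [hKT, hull_image _ _ D hD_conv hDne]
    refine IsCompact.measurableSet ((isCompact_Icc.prod hD_comp).image ?_)
    fun_prop
  set a := 1 / γ with ha
  have ha0 : 0 < a := by positivity
  let f : EuclideanSpace ℝ (Fin n) → ℝ := fun x => m * (-⟪x, ξ⟫ + r₁ * κ) ^ a
  have hf : Continuous f := by
    have : Continuous fun x : EuclideanSpace ℝ (Fin n) => (-⟪x, ξ⟫ + r₁ * κ) := by fun_prop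
    exact (this.rpow_const (fun _ => Or.inr ha0.le)).const_mul m
  have hTf : ∀ x, T x = KT.indicator f x := by
    intro x; rw [hT]
    by_cases hx : x ∈ KT <;> simp [hx, f]
  have hIT : ∫ x, T x = ∫ x in KT, f x := by
    simp_rw [hTf]; exact integral_indicator hKTm
  have hITx : ∫ x, T x • x = ∫ x in KT, f x • x := by
    rw [← integral_indicator hKTm]
    congr 1; ext1 x
    rw [hTf]
    by_cases hx : x ∈ KT <;> simp [hx]
  set C0 := m * ((r₁ - r₀) * κ) ^ a with hC0
  have hC0pos : 0 < C0 :=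
    mul_pos hm (Real.rpow_pos_of_pos (mul_pos (sub_pos.2 hr) hθξ) a)
  have hval : ∀ t ∈ Icc (0:ℝ) 1, ∀ y : H,
      f (r₀ • θ + t • (r₁ • θ - r₀ • θ) + t • (y:EuclideanSpace ℝ (Fin n))) = C0 * (1 - t) ^ a := by
    intro t ht y
    have hy : ⟪(y:EuclideanSpace ℝ (Fin n)), ξ⟫ = 0 := (hHmem _).1 y.2
    have h1 : -⟪r₀ • θ + t • (r₁ • θ - r₀ • θ) + t • (y:EuclideanSpace ℝ (Fin n)), ξ⟫ + r₁ * κ =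
        ((r₁ - r₀) * κ) * (1 - t) := by
      simp only [inner_add_left, inner_sub_left, real_inner_smul_left, hy, ← hκ]
      ring
    simp only [f]
    rw [h1, Real.mul_rpow (mul_pos (sub_pos.2 hr) hθξ).le (by linarith [ht.2]), hC0, mul_assoc]
  set I0 := ∫ t in (0:ℝ)..1, (1 - t) ^ a * t ^ k with hI0
  set I1 := ∫ t in (0:ℝ)..1, (1 - t) ^ a * t ^ (k+1) with hI1
  have hA : ∫ x, T x = (c * C0 * V) * I0 := by
    rw [hIT, hcone ℝ f hf, smul_eq_mul, mul_assoc c, mul_assoc c, hI0]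
    congr 1
    rw [← intervalIntegral.integral_const_mul]
    refine intervalIntegral.integral_congr fun t ht => ?_
    rw [uIcc_of_le zero_le_one] at ht
    simp only [hval t ht, setIntegral_const, smul_eq_mul]
    rw [← hV]; ring
  have hB : ∫ x, T x • x = ((c * C0 * V) * (r₀ * I0 + (r₁ - r₀) * I1)) • θ := by
    have hI : r₀ * I0 + (r₁ - r₀) * I1 =
        ∫ t in (0:ℝ)..1, (r₀ * ((1 - t) ^ a * t ^ k) + (r₁ - r₀) * ((1 - t) ^ a * t ^ (k+1))) := by
      rw [intervalIntegral.integral_add, intervalIntegral.integral_const_mul,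
        intervalIntegral.integral_const_mul]
      · exact ((beta_cont k a ha0).const_mul _).intervalIntegrable _ _
      · exact ((beta_cont (k+1) a ha0).const_mul _).intervalIntegrable _ _
    rw [hITx, hcone (EuclideanSpace ℝ (Fin n)) (fun x => f x • x) (hf.smul continuous_id), hI, mul_assoc c, mul_assoc c,
      ← intervalIntegral.integral_const_mul, mul_smul, ← intervalIntegral.integral_smul_const]
    congr 1
    refine intervalIntegral.integral_congr fun t ht => ?_
    rw [uIcc_of_le zero_le_one] at ht
    have hin : ∫ y in D', (r₀ • θ + t • (r₁ • θ - r₀ • θ) + t • (y:EuclideanSpace ℝ (Fin n))) ∂ν =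
        V • (r₀ • θ + t • (r₁ • θ - r₀ • θ)) := by
      have hi1 : IntegrableOn (fun _ : H => (r₀ • θ + t • (r₁ • θ - r₀ • θ) : EuclideanSpace ℝ (Fin n))) D' ν :=
        continuous_const.continuousOn.integrableOn_compact hD'c
      have hi2 : IntegrableOn (fun y : H => t • (y:EuclideanSpace ℝ (Fin n))) D' ν := by
        refine ContinuousOn.integrableOn_compact hD'c (Continuous.continuousOn ?_)
        fun_prop
      rw [integral_add hi1 hi2, integral_smul, hcent, setIntegral_const, smul_zero, add_zero]
    simp only [hval t ht]
    rw [integral_smul, hin, ← sub_smul]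
    simp only [smul_smul, ← add_smul]
    congr 1
    ring
  have hmain : (∫ x, T x)⁻¹ • (∫ x, T x • x) =
        ((n * γ * r₁ + (γ + 1) * r₀) / ((n + 1) * γ + 1)) • θ := by
    rw [hA, hB, smul_smul, hnr]
    congr 1
    exact final_alg I0 I1 a γ r₀ r₁ _ k (beta_pos k a ha0) (by positivity) hγ ha
      (beta_ratio k a ha0)
  refine ⟨hmain, ?_⟩
  have hθ0 : θ ≠ 0 := by intro h; simp [h] at hθ
  have hden : ((n:ℝ) + 1) * γ + 1 ≠ 0 := by positivity
  rw [hmain, smul_eq_zero, or_iff_left hθ0, div_eq_zero_iff, or_iff_left hden]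
  have hg : γ + 1 ≠ 0 := by positivity
  constructor
  · intro h; field_simp; linarith
  · intro h; rw [h]; field_simp; ring
end
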